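/- arXiv:1801.01489 — 4 statements merged into one kernel-verified Lean document; each statement's English description precedes it below -/
import Mathlib

section
/- Given ε ≥ 0 and δ ∈ (0,1), let f₊,ε ∈ argmax_{f∈R(ε)} MR(f) and f₋,ε ∈ argmin_{f∈R(ε)} MR(f) be models attaining the highest and lowest model reliance over R(ε). If f₊,ε and f₋,ε satisfy Assumptions 1, 2 and 3, then P( MCR₊(ε) > MCR̂₊(ε₁) + Q₁ ) ≤ δ and P( MCR₋(ε) < MCR̂₋(ε₁) − Q₁ ) ≤ δ, where ε₁ = ε + 2B_ref·√(log(3/δ)/(2n)) and Q₁ = B_switch/b_orig − (B_switch − B_ind·√(log(6/δ)/n)) / (b_orig + B_ind·√(log(6/δ)/(2n))). -/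
open MeasureTheory

lemma aux_perm_const {n : ℕ} (g : Fin n → Fin n → ℝ) {a b a' b' : Fin n} (h : a ≠ b)
    (h' : a' ≠ b') :
    ∑ σ : Equiv.Perm (Fin n), g (σ a) (σ b) = ∑ σ : Equiv.Perm (Fin n), g (σ a') (σ b') := by
  have key : ∃ τ : Equiv.Perm (Fin n), τ a = a' ∧ τ b = b' := by
    have hc : Equiv.swap a a' b ≠ a' := by
      intro hh
      apply h
      apply (Equiv.swap a a').injective
      rw [hh, Equiv.swap_apply_left]
    refine ⟨Equiv.swap (Equiv.swap a a' b) b' * Equiv.swap a a', ?_, ?_⟩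
    · rw [Equiv.Perm.mul_apply, Equiv.swap_apply_left]
      exact Equiv.swap_apply_of_ne_of_ne hc.symm h'
    · rw [Equiv.Perm.mul_apply, Equiv.swap_apply_left]
  obtain ⟨τ, h1, h2⟩ := key
  rw [← Equiv.sum_comp (Equiv.mulRight τ) (fun σ : Equiv.Perm (Fin n) => g (σ a) (σ b))]
  simp [h1, h2]

lemma aux_perm_avg {n : ℕ} (hn : 2 ≤ n) (g : Fin n → Fin n → ℝ) {a b : Fin n} (h : a ≠ b) :
    ((n : ℝ) * ((n : ℝ) - 1)) * ∑ σ : Equiv.Perm (Fin n), g (σ a) (σ b) =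
      (Fintype.card (Equiv.Perm (Fin n)) : ℝ) * ∑ i, ∑ j ∈ Finset.univ.erase i, g i j := by
  have h1 : ∑ i : Fin n, ∑ j ∈ Finset.univ.erase i,
      ∑ σ : Equiv.Perm (Fin n), g (σ i) (σ j) =
      ((n : ℝ) * ((n : ℝ) - 1)) * ∑ σ : Equiv.Perm (Fin n), g (σ a) (σ b) := by
    have : ∀ i : Fin n, ∑ j ∈ Finset.univ.erase i,
      ∑ σ : Equiv.Perm (Fin n), g (σ i) (σ j) =
        ((n : ℝ) - 1) * ∑ σ : Equiv.Perm (Fin n), g (σ a) (σ b) := by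
      intro i
      rw [Finset.sum_congr rfl (fun j hj => aux_perm_const g (Finset.ne_of_mem_erase hj).symm h)]
      rw [Finset.sum_const, Finset.card_erase_of_mem (Finset.mem_univ _), Finset.card_univ,
        Fintype.card_fin, nsmul_eq_mul, Nat.cast_sub (by omega), Nat.cast_one]
    simp only [this]
    rw [Finset.sum_const, Finset.card_univ, Fintype.card_fin, nsmul_eq_mul, mul_assoc]
  have h2 : ∑ i : Fin n, ∑ j ∈ Finset.univ.erase i,
      ∑ σ : Equiv.Perm (Fin n), g (σ i) (σ j) =
      ∑ σ : Equiv.Perm (Fin n), ∑ i : Fin n, ∑ j ∈ Finset.univ.erase i, g (σ i) (σ j) := by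
    symm
    rw [Finset.sum_comm]
    refine Finset.sum_congr rfl fun i _ => ?_
    rw [Finset.sum_comm]
  have h3 : ∀ σ : Equiv.Perm (Fin n), ∑ i : Fin n, ∑ j ∈ Finset.univ.erase i, g (σ i) (σ j) =
      ∑ i, ∑ j ∈ Finset.univ.erase i, g i j := by
    intro σ
    rw [← Equiv.sum_comp σ (fun i => ∑ j ∈ Finset.univ.erase i, g i j)]
    refine Finset.sum_congr rfl fun i _ => ?_
    refine Finset.sum_bij (fun j _ => σ j) ?_ ?_ ?_ ?_
    · intro j hj; simpa using hj
    · intro j _ k _ hh; exact σ.injective hh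
    · intro j hj; exact ⟨σ.symm j, by simpa [Equiv.symm_apply_eq] using hj, by simp⟩
    · intro j _; rfl
  rw [← h1, h2]
  simp only [h3]
  rw [Finset.sum_const, Finset.card_univ, nsmul_eq_mul]

section
open ProbabilityTheory
open scoped NNReal

lemma aux_sub_sum {Ω ι : Type*} [MeasurableSpace Ω] {P : Measure Ω} [IsProbabilityMeasure P]
    (s : Finset ι) (X : ι → Ω → ℝ) (c : ℝ≥0) (h : ∀ i ∈ s, HasSubgaussianMGF (X i) c P) :
    HasSubgaussianMGF (fun ω => ∑ i ∈ s, X i ω) ((s.card : ℝ≥0) ^ 2 * c) P := by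
  classical
  induction s using Finset.induction_on with
  | empty => simp
  | insert i s hi ih =>
    have h1 := (ih fun j hj => h j (Finset.mem_insert_of_mem hj)).add
      (h i (Finset.mem_insert_self _ _))
    have h2 : (NNReal.sqrt ((s.card : ℝ≥0) ^ 2 * c) + NNReal.sqrt c) ^ 2
        = ((insert i s).card : ℝ≥0) ^ 2 * c := by
      rw [NNReal.sqrt_mul, NNReal.sqrt_sq, Finset.card_insert_of_notMem hi]
      push_cast
      calc ((s.card : ℝ≥0) * NNReal.sqrt c + NNReal.sqrt c) ^ 2
          = ((s.card : ℝ≥0) + 1) ^ 2 * (NNReal.sqrt c) ^ 2 := by ring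
        _ = _ := by rw [NNReal.sq_sqrt]
    rw [h2] at h1
    refine h1.congr (ae_of_all _ fun ω => ?_)
    simp only [Finset.sum_insert hi]
    ring

variable {Z : Type*} [MeasurableSpace Z] {n : ℕ}

lemma aux_map_pair (D : Measure Z) [IsProbabilityMeasure D] {i j : Fin n} (h : i ≠ j) :
    MeasurePreserving (fun ω : Fin n → Z => (ω i, ω j)) (Measure.pi fun _ => D) (D.prod D) := by
  refine ⟨by fun_prop, ?_⟩
  have h1 : iIndepFun (fun (i : Fin n) (ω : Fin n → Z) => ω i) (Measure.pi fun _ => D) :=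
    iIndepFun_pi (X := fun _ => id) (fun _ => aemeasurable_id)
  have h2 := (h1.indepFun h).map_prod_eq_prod_map_map
    (measurable_pi_apply i).aemeasurable (measurable_pi_apply j).aemeasurable
  rw [h2]
  have h3 : ∀ i : Fin n, Measure.map (fun ω : Fin n → Z => ω i) (Measure.pi fun _ => D) = D :=
    fun i => (measurePreserving_eval (fun _ : Fin n => D) i).map_eq
  rw [h3, h3]

lemma aux_pairs (D : Measure Z) [IsProbabilityMeasure D] (G : Z × Z → ℝ) (hG : Measurable G)
    {B : ℝ} (hB : ∀ q, G q ∈ Set.Icc 0 B) {ι : Type*} (a b : ι → Fin n)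
    (ha : a.Injective) (hb : b.Injective) (hab : ∀ i j, a i ≠ b j) (s : Finset ι) :
    HasSubgaussianMGF (fun ω : Fin n → Z => ∑ k ∈ s, (G (ω (a k), ω (b k)) - ∫ q, G q ∂(D.prod D)))
      (s.card * (‖B - 0‖₊ / 2) ^ 2) (Measure.pi fun _ => D) := by
  classical
  have hind : iIndepFun (fun (i : Fin n) (ω : Fin n → Z) => ω i) (Measure.pi fun _ => D) :=
    iIndepFun_pi (X := fun _ => id) (fun _ => aemeasurable_id)
  induction s using Finset.induction_on with
  | empty => simp
  | insert i s hi ih =>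
    have hX : HasSubgaussianMGF (fun ω : Fin n → Z => G (ω (a i), ω (b i)) - ∫ q, G q ∂(D.prod D))
        ((‖B - 0‖₊ / 2) ^ 2) (Measure.pi fun _ => D) := by
      have hm := aux_map_pair D (hab i i)
      have := hasSubgaussianMGF_of_mem_Icc (μ := D.prod D) hG.aemeasurable (ae_of_all _ hB)
      rw [← hm.map_eq] at this
      have h2 := this.of_map hm.aemeasurable
      rw [hm.map_eq] at h2
      exact h2
    have hI : IndepFun (fun ω : Fin n → Z => G (ω (a i), ω (b i)) - ∫ q, G q ∂(D.prod D))
        (fun ω : Fin n → Z => ∑ k ∈ s, (G (ω (a k), ω (b k)) - ∫ q, G q ∂(D.prod D)))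
        (Measure.pi fun _ => D) := by
      have hdis : Disjoint ({a i, b i} : Finset (Fin n)) (s.image a ∪ s.image b) := by
        rw [Finset.disjoint_left]
        intro x hx hx'
        simp only [Finset.mem_insert, Finset.mem_singleton] at hx
        simp only [Finset.mem_union, Finset.mem_image] at hx'
        rcases hx with rfl | rfl
        · rcases hx' with ⟨k, hk, hk'⟩ | ⟨k, hk, hk'⟩
          · exact hi (ha hk' ▸ hk)
          · exact hab _ _ hk'.symm
        · rcases hx' with ⟨k, hk, hk'⟩ | ⟨k, hk, hk'⟩
          · exact hab _ _ hk'
          · exact hi (hb hk' ▸ hk)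
      have h0 := hind.indepFun_finset _ _ hdis (fun i => by fun_prop)
      have h1 : Measurable (fun x : ({a i, b i} : Finset (Fin n)) → Z =>
          G (x ⟨a i, by simp⟩, x ⟨b i, by simp⟩) - ∫ q, G q ∂(D.prod D)) := by fun_prop
      have h2 : Measurable (fun x : (s.image a ∪ s.image b : Finset (Fin n)) → Z =>
          ∑ k ∈ s.attach, (G (x ⟨a k, Finset.mem_union_left _ (Finset.mem_image_of_mem _ k.2)⟩,
            x ⟨b k, Finset.mem_union_right _ (Finset.mem_image_of_mem _ k.2)⟩) - ∫ q, G q ∂(D.prod D))) := by fun_prop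
      have h3 := h0.comp h1 h2
      refine h3.congr (ae_of_all _ fun ω => rfl) (ae_of_all _ fun ω => ?_)
      exact (Finset.sum_attach s
        (fun k => (G (ω (a k), ω (b k)) - ∫ q, G q ∂(D.prod D))))
    have := hX.add_of_indepFun ih hI
    simp only [Finset.sum_insert hi]
    convert this using 1
    rw [Finset.card_insert_of_notMem hi]
    push_cast
    ring

lemma aux_ustat (hn : 2 ≤ n) (D : Measure Z) [IsProbabilityMeasure D] (G : Z × Z → ℝ)
    (hG : Measurable G) {B : ℝ} (hB : ∀ q, G q ∈ Set.Icc 0 B) :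
    HasSubgaussianMGF (fun ω : Fin n → Z =>
      (∑ i, ∑ j ∈ Finset.univ.erase i, G (ω i, ω j)) / ((n : ℝ) * ((n : ℝ) - 1))
        - ∫ q, G q ∂(D.prod D))
      ((‖B - 0‖₊ / 2) ^ 2 / ((n / 2 : ℕ) : ℝ≥0)) (Measure.pi fun _ => D) := by
  set m := n / 2 with hm
  have hm1 : 1 ≤ m := by omega
  let a : Fin m → Fin n := fun k => ⟨2 * k, by have := k.2; omega⟩
  let b : Fin m → Fin n := fun k => ⟨2 * k + 1, by have := k.2; omega⟩
  have ha : a.Injective := fun x y h => by simp [a] at h; omega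
  have hb : b.Injective := fun x y h => by simp [b] at h; omega
  have hab : ∀ i j, a i ≠ b j := fun i j h => by simp [a, b] at h; omega
  have h1 := fun σ : Equiv.Perm (Fin n) => aux_pairs D G hG hB (σ ∘ a) (σ ∘ b)
    (σ.injective.comp ha) (σ.injective.comp hb) (fun i j h => hab i j (σ.injective h)) Finset.univ
  have h2 := (aux_sub_sum Finset.univ _ _ (fun σ _ => h1 σ)).const_mul
    (((Fintype.card (Equiv.Perm (Fin n)) : ℝ) * m)⁻¹)
  have hN : (0 : ℝ) < (Fintype.card (Equiv.Perm (Fin n)) : ℝ) := by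
    exact_mod_cast Fintype.card_pos
  have hm0 : (0 : ℝ) < m := by exact_mod_cast hm1
  have hn0 : (2 : ℝ) ≤ n := by exact_mod_cast hn
  convert h2 using 1
  · ext ω
    have h3 : ∀ k, ∑ σ : Equiv.Perm (Fin n), G (ω (σ (a k)), ω (σ (b k))) =
        (Fintype.card (Equiv.Perm (Fin n)) : ℝ) *
        ((∑ i, ∑ j ∈ Finset.univ.erase i, G (ω i, ω j)) / ((n : ℝ) * ((n : ℝ) - 1))) := by
      intro k
      have := aux_perm_avg hn (fun i j => G (ω i, ω j)) (hab k k)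
      rw [← mul_div_assoc, ← this]
      have : (n : ℝ) - 1 ≠ 0 := by linarith
      field_simp
    simp only [Function.comp]
    rw [Finset.sum_comm]
    simp only [Finset.sum_sub_distrib, h3, Finset.sum_const, Finset.card_univ, nsmul_eq_mul,
      Fintype.card_fin]
    rw [← mul_sub, ← mul_sub]
    field_simp
  · ext
    simp only [Finset.card_univ, Fintype.card_fin]
    push_cast
    change _ = (((Fintype.card (Equiv.Perm (Fin n)) : ℝ) * m)⁻¹) ^ 2 *
      (((Fintype.card (Equiv.Perm (Fin n)) : ℝ)) ^ 2 * ((m : ℝ) * (‖B - 0‖ / 2) ^ 2))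
    field_simp

lemma aux_int_switch (hn : 2 ≤ n) (D : Measure Z) [IsProbabilityMeasure D] (G : Z × Z → ℝ)
    (hG : Measurable G) {B : ℝ} (hB : ∀ q, G q ∈ Set.Icc 0 B) :
    ∫ ω : Fin n → Z, (∑ i, ∑ j ∈ Finset.univ.erase i, G (ω i, ω j)) / ((n : ℝ) * ((n : ℝ) - 1))
      ∂(Measure.pi fun _ => D) = ∫ q, G q ∂(D.prod D) := by
  have hi : ∀ i j : Fin n, Integrable (fun ω : Fin n → Z => G (ω i, ω j))
      (Measure.pi fun _ => D) := fun i j =>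
    Integrable.of_mem_Icc 0 B (by fun_prop) (ae_of_all _ fun ω => hB _)
  rw [integral_div, integral_finsetSum _ (fun i _ => integrable_finsetSum _ fun j _ => hi i j)]
  have h1 : ∀ i : Fin n, ∫ ω : Fin n → Z, ∑ j ∈ Finset.univ.erase i, G (ω i, ω j)
      ∂(Measure.pi fun _ => D) = ((n : ℝ) - 1) * ∫ q, G q ∂(D.prod D) := by
    intro i
    rw [integral_finsetSum _ (fun j _ => hi i j)]
    have : ∀ j ∈ Finset.univ.erase i, ∫ ω : Fin n → Z, G (ω i, ω j) ∂(Measure.pi fun _ => D)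
        = ∫ q, G q ∂(D.prod D) := by
      intro j hj
      have hm := aux_map_pair D (Finset.ne_of_mem_erase hj).symm
      rw [← hm.map_eq, integral_map hm.aemeasurable hG.aestronglyMeasurable]
    rw [Finset.sum_congr rfl this, Finset.sum_const, Finset.card_erase_of_mem (Finset.mem_univ _),
      Finset.card_univ,
        Fintype.card_fin, nsmul_eq_mul, Nat.cast_sub (by omega), Nat.cast_one]
  simp only [h1]
  have hn0 : (2 : ℝ) ≤ n := by exact_mod_cast hn
  rw [Finset.sum_const, Finset.card_univ, Fintype.card_fin, nsmul_eq_mul]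
  have : (n : ℝ) - 1 ≠ 0 := by linarith
  field_simp

lemma aux_mean (hn : 2 ≤ n) (D : Measure Z) [IsProbabilityMeasure D] (g : Z → ℝ)
    (hg : Measurable g) {a b : ℝ} (hB : ∀ q, g q ∈ Set.Icc a b) :
    HasSubgaussianMGF (fun ω : Fin n → Z => (∑ i, g (ω i)) / n - ∫ z, g z ∂D)
      ((‖b - a‖₊ / 2) ^ 2 / (n : ℝ≥0)) (Measure.pi fun _ => D) := by
  have hind : iIndepFun (fun (i : Fin n) (ω : Fin n → Z) => g (ω i) - ∫ z, g z ∂D)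
      (Measure.pi fun _ => D) :=
    iIndepFun_pi (X := fun _ z => g z - ∫ z, g z ∂D) (fun _ => by fun_prop)
  have h1 : ∀ i : Fin n, HasSubgaussianMGF (fun (ω : Fin n → Z) => g (ω i) - ∫ z, g z ∂D)
      ((‖b - a‖₊ / 2) ^ 2) (Measure.pi fun _ => D) := by
    intro i
    have hm := measurePreserving_eval (fun _ : Fin n => D) i
    have := hasSubgaussianMGF_of_mem_Icc (μ := D) hg.aemeasurable (ae_of_all _ hB)
    rw [← hm.map_eq] at this
    have h2 := this.of_map hm.aemeasurable
    rw [hm.map_eq] at h2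
    exact h2
  have h2 := (HasSubgaussianMGF.sum_of_iIndepFun hind (s := Finset.univ)
    (fun i _ => h1 i)).const_mul ((n : ℝ)⁻¹)
  have hn0 : (0 : ℝ) < n := by exact_mod_cast (by omega : 0 < n)
  convert h2 using 1
  · ext ω
    simp only [Finset.sum_sub_distrib, Finset.sum_const, Finset.card_univ, Fintype.card_fin,
      nsmul_eq_mul]
    field_simp
  · ext
    simp only [Finset.sum_const, Finset.card_univ, Fintype.card_fin, nsmul_eq_mul]
    push_cast
    change _ = ((n : ℝ)⁻¹) ^ 2 * ((n : ℝ) * (‖b - a‖ / 2) ^ 2)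
    field_simp

lemma aux_int_mean (hn : 2 ≤ n) (D : Measure Z) [IsProbabilityMeasure D] (g : Z → ℝ)
    (hg : Measurable g) {a b : ℝ} (hB : ∀ q, g q ∈ Set.Icc a b) :
    ∫ ω : Fin n → Z, (∑ i, g (ω i)) / n ∂(Measure.pi fun _ => D) = ∫ z, g z ∂D := by
  have hi : ∀ i : Fin n, Integrable (fun ω : Fin n → Z => g (ω i))
      (Measure.pi fun _ => D) := fun i =>
    Integrable.of_mem_Icc a b (hg.comp (measurable_pi_apply i)).aemeasurable (ae_of_all _ fun ω => hB _)
  rw [integral_div, integral_finsetSum _ (fun i _ => hi i)]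
  have : ∀ i : Fin n, ∫ ω : Fin n → Z, g (ω i) ∂(Measure.pi fun _ => D) = ∫ z, g z ∂D := by
    intro i
    have hm := measurePreserving_eval (fun _ : Fin n => D) i
    have h1 := integral_map (f := g) hm.aemeasurable hg.aestronglyMeasurable
    rw [hm.map_eq] at h1
    exact h1.symm
  simp only [this]
  have hn0 : (0 : ℝ) < n := by exact_mod_cast (by omega : 0 < n)
  rw [Finset.sum_const, Finset.card_univ, Fintype.card_fin, nsmul_eq_mul]
  field_simp

/-- Chernoff tail with all constants normalised. -/
lemma aux_tail {Ω : Type*} [MeasurableSpace Ω] {P : Measure Ω} [IsProbabilityMeasure P]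
    {X : Ω → ℝ} {B : ℝ} (hB : 0 ≤ B) {N : ℕ} (hN : 0 < N)
    (h : HasSubgaussianMGF X ((‖B‖₊ / 2) ^ 2 / (N : ℝ≥0)) P) {l K : ℝ} (hl : 0 ≤ l) (hK : 0 < K) :
    P {ω | B * Real.sqrt (l / K) < X ω} ≤ ENNReal.ofReal (Real.exp (-(2 * N * l / K))) := by
  rcases hB.eq_or_lt with rfl | hB
  · simp only [nnnorm_zero, zero_div, ne_eq, OfNat.ofNat_ne_zero, not_false_eq_true, zero_pow] at h
    have h0 := h.ae_eq_zero_of_hasSubgaussianMGF_zero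
    have : P {ω | 0 * Real.sqrt (l / K) < X ω} = 0 := by
      rw [measure_eq_zero_iff_ae_notMem]
      filter_upwards [h0] with ω hω
      simp [hω]
    rw [this]; exact zero_le
  · have h1 := h.measure_ge_le (ε := B * Real.sqrt (l / K)) (by positivity)
    have h2 : P {ω | B * Real.sqrt (l / K) < X ω} ≤ P {ω | B * Real.sqrt (l / K) ≤ X ω} :=
      by
      refine measure_mono fun ω hω => ?_
      simp only [Set.mem_ofPred_eq] at hω ⊢
      exact hω.le
    refine h2.trans ?_
    rw [← ofReal_measureReal]
    refine ENNReal.ofReal_le_ofReal (h1.trans (le_of_eq ?_))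
    congr 1
    push_cast
    rw [Real.norm_of_nonneg hB.le, mul_pow, Real.sq_sqrt (by positivity)]
    have : (0 : ℝ) < N := by exact_mod_cast hN
    field_simp

lemma aux_union {Ω : Type*} [MeasurableSpace Ω] {P : Measure Ω} {δ : ℝ} (hδ : 0 < δ)
    {p q r : Ω → Prop} (hp : P {ω | ¬ p ω} ≤ ENNReal.ofReal (δ / 3))
    (hq : P {ω | ¬ q ω} ≤ ENNReal.ofReal (δ / 6)) (hr : P {ω | ¬ r ω} ≤ ENNReal.ofReal (δ / 2)) :
    P {ω | ¬ (p ω ∧ q ω ∧ r ω)} ≤ ENNReal.ofReal δ := by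
  have h1 : {ω | ¬ (p ω ∧ q ω ∧ r ω)} ⊆ ({ω | ¬ p ω} ∪ {ω | ¬ q ω}) ∪ {ω | ¬ r ω} := by
    intro ω hω
    simp only [Set.mem_union, Set.mem_ofPred_eq] at hω ⊢
    tauto
  calc P {ω | ¬ (p ω ∧ q ω ∧ r ω)} ≤ P (({ω | ¬ p ω} ∪ {ω | ¬ q ω}) ∪ {ω | ¬ r ω}) :=
        measure_mono h1
    _ ≤ P {ω | ¬ p ω} + P {ω | ¬ q ω} + P {ω | ¬ r ω} :=
        (measure_union_le _ _).trans (by gcongr; exact measure_union_le _ _)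
    _ ≤ ENNReal.ofReal (δ / 3) + ENNReal.ofReal (δ / 6) + ENNReal.ofReal (δ / 2) := by gcongr
    _ = ENNReal.ofReal δ := by
        rw [← ENNReal.ofReal_add (by positivity) (by positivity),
          ← ENNReal.ofReal_add (by positivity) (by positivity)]
        congr 1
        ring

lemma aux_det {s o s' o' S b ts tt : ℝ} (hb : 0 < b) (hs : 0 ≤ s) (hsS : s ≤ S) (hbo : b ≤ o)
    (hts : 0 ≤ ts) (hto : 0 ≤ tt) (hs' : 0 ≤ s') (ho' : 0 < o') (h1 : s ≤ s' + ts)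
    (h2 : o' ≤ o + tt) :
    s / o ≤ s' / o' + (S / b - (S - ts) / (b + tt)) := by
  have ho : 0 < o := hb.trans_le hbo
  have e1 : (s - ts) / (o + tt) ≤ s' / o' := by
    rcases le_total (s - ts) 0 with h | h
    · exact (div_nonpos_of_nonpos_of_nonneg h (by positivity)).trans (by positivity)
    · exact div_le_div₀ hs' (by linarith) ho' h2
  have e2 : s / o - (s - ts) / (o + tt) = s / o * (tt / (o + tt)) + ts / (o + tt) := by
    field_simp
    ring
  have e3 : S / b - (S - ts) / (b + tt) = S / b * (tt / (b + tt)) + ts / (b + tt) := by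
    field_simp
    ring
  have hS : 0 ≤ S := hs.trans hsS
  have e4 : s / o * (tt / (o + tt)) + ts / (o + tt) ≤ S / b * (tt / (b + tt)) + ts / (b + tt) := by
    gcongr
  linarith

lemma aux_master (hn : 2 ≤ n) (D : Measure Z) [IsProbabilityMeasure D] (g r : Z → ℝ)
    (G : Z × Z → ℝ) (hg : Measurable g) (hr : Measurable r) (hG : Measurable G) {B Bref : ℝ}
    (hgB : ∀ z, g z ∈ Set.Icc 0 B) (hGB : ∀ q, G q ∈ Set.Icc 0 B)
    (hgr : ∀ z, |g z - r z| ≤ Bref) {ε δ : ℝ} (hδ : δ ∈ Set.Ioo (0 : ℝ) 1)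
    (hle : ∫ z, g z ∂D ≤ ∫ z, r z ∂D + ε) (P : Measure (Fin n → Z))
    (hP : P = Measure.pi fun _ => D) (gh rh Gh : (Fin n → Z) → ℝ)
    (hgh : ∀ ω, gh ω = (∑ i, g (ω i)) / n) (hrh : ∀ ω, rh ω = (∑ i, r (ω i)) / n)
    (hGh : ∀ ω, Gh ω = (∑ i, ∑ j ∈ Finset.univ.erase i, G (ω i, ω j)) /
      ((n : ℝ) * ((n : ℝ) - 1)))
    {b S : ℝ} (hbS : ∀ᵐ ω ∂P, b ≤ gh ω ∧ Gh ω ≤ S)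
    (o s : ℝ) (ho : o = ∫ z, g z ∂D) (hs : s = ∫ q, G q ∂(D.prod D)) :
    P {ω | ¬ (gh ω ≤ rh ω + (ε + 2 * Bref * Real.sqrt (Real.log (3 / δ) / (2 * n))) ∧
      gh ω ≤ o + B * Real.sqrt (Real.log (6 / δ) / (2 * n)) ∧
      s ≤ Gh ω + B * Real.sqrt (Real.log (6 / δ) / n))} ≤ ENNReal.ofReal δ ∧
    P {ω | ¬ (gh ω ≤ rh ω + (ε + 2 * Bref * Real.sqrt (Real.log (3 / δ) / (2 * n))) ∧
      o ≤ gh ω + B * Real.sqrt (Real.log (6 / δ) / (2 * n)) ∧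
      Gh ω ≤ s + B * Real.sqrt (Real.log (6 / δ) / n))} ≤ ENNReal.ofReal δ ∧
    b ≤ o ∧ s ≤ S ∧ 0 ≤ s ∧ (∀ ω, 0 ≤ Gh ω) ∧ 0 ≤ B := by
  obtain ⟨hδ0, hδ1⟩ := hδ
  have : IsProbabilityMeasure P := by rw [hP]; infer_instance
  obtain ⟨z0⟩ : Nonempty Z := nonempty_of_isProbabilityMeasure D
  have hB0 : 0 ≤ B := (hgB z0).1.trans (hgB z0).2
  have hBr0 : 0 ≤ Bref := (abs_nonneg _).trans (hgr z0)
  have hn0 : (2 : ℝ) ≤ n := by exact_mod_cast hn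
  have hnn : (0 : ℝ) < (n : ℝ) * ((n : ℝ) - 1) := by nlinarith
  have hl6 : 0 ≤ Real.log (6 / δ) := Real.log_nonneg (by rw [le_div_iff₀ hδ0]; linarith)
  have hl3 : 0 ≤ Real.log (3 / δ) := Real.log_nonneg (by rw [le_div_iff₀ hδ0]; linarith)
  have hexp6 : Real.exp (-Real.log (6 / δ)) = δ / 6 := by
    rw [Real.exp_neg, Real.exp_log (by positivity), inv_div]
  have hexp3 : Real.exp (-Real.log (3 / δ)) = δ / 3 := by
    rw [Real.exp_neg, Real.exp_log (by positivity), inv_div]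
  have hGh' : Gh = fun ω => (∑ i, ∑ j ∈ Finset.univ.erase i, G (ω i, ω j)) /
      ((n : ℝ) * ((n : ℝ) - 1)) := funext hGh
  have hgh' : gh = fun ω => (∑ i, g (ω i)) / n := funext hgh
  have hGhm : Measurable Gh := by rw [hGh']; fun_prop
  have hghm : Measurable gh := by
    rw [hgh']
    exact (Finset.measurable_fun_sum _ fun i _ => hg.comp (measurable_pi_apply i)).div_const _
  have hGh0 : ∀ ω, Gh ω ∈ Set.Icc 0 B := by
    intro ω
    rw [hGh]
    refine ⟨div_nonneg (Finset.sum_nonneg fun i _ => Finset.sum_nonneg fun j _ => (hGB _).1)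
      hnn.le, ?_⟩
    rw [div_le_iff₀ hnn]
    calc ∑ i, ∑ j ∈ Finset.univ.erase i, G (ω i, ω j)
        ≤ ∑ i : Fin n, ∑ j ∈ Finset.univ.erase i, B :=
          Finset.sum_le_sum fun i _ => Finset.sum_le_sum fun j _ => (hGB _).2
      _ = B * ((n : ℝ) * ((n : ℝ) - 1)) := by
          simp only [Finset.sum_const, Finset.card_erase_of_mem (Finset.mem_univ _),
            Finset.card_univ, Fintype.card_fin, nsmul_eq_mul]
          rw [Nat.cast_sub (by omega), Nat.cast_one]
          ring
  have hgh0 : ∀ ω, gh ω ∈ Set.Icc 0 B := by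
    intro ω
    rw [hgh]
    refine ⟨div_nonneg (Finset.sum_nonneg fun i _ => (hgB _).1) (by positivity), ?_⟩
    rw [div_le_iff₀ (by positivity)]
    calc ∑ i, g (ω i) ≤ ∑ i : Fin n, B := Finset.sum_le_sum fun i _ => (hgB _).2
      _ = B * n := by
          simp only [Finset.sum_const, Finset.card_univ, Fintype.card_fin, nsmul_eq_mul]
          ring
  have hIG : ∫ ω, Gh ω ∂P = s := by
    rw [hs, hP, hGh']; exact aux_int_switch hn D G hG hGB
  have hIg : ∫ ω, gh ω ∂P = o := by
    rw [ho, hP, hgh']; exact aux_int_mean hn D g hg hgB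
  have hiG : Integrable Gh P :=
    Integrable.of_mem_Icc 0 B hGhm.aemeasurable (ae_of_all _ hGh0)
  have hig : Integrable gh P :=
    Integrable.of_mem_Icc 0 B hghm.aemeasurable (ae_of_all _ hgh0)
  have hs0 : 0 ≤ s := by rw [← hIG]; exact integral_nonneg fun ω => (hGh0 ω).1
  have hsB : s ≤ B := by
    rw [← hIG]
    calc ∫ ω, Gh ω ∂P ≤ ∫ ω, B ∂P := integral_mono hiG (integrable_const _) fun ω => (hGh0 ω).2
      _ = B := by simp
  have hbo : b ≤ o := by
    rw [← hIg]
    calc b = ∫ ω, b ∂P := by simp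
      _ ≤ _ := integral_mono_ae (integrable_const _) hig (hbS.mono fun ω h => h.1)
  have hsS : s ≤ S := by
    rw [← hIG]
    calc ∫ ω, Gh ω ∂P ≤ ∫ ω, S ∂P :=
          integral_mono_ae hiG (integrable_const _) (hbS.mono fun ω h => h.2)
      _ = S := by simp
  -- the Rashomon-set event
  have hE1 : P {ω | ¬ gh ω ≤ rh ω + (ε + 2 * Bref * Real.sqrt (Real.log (3 / δ) / (2 * n)))} ≤
      ENNReal.ofReal (δ / 3) := by
    have h1 := aux_mean hn D (fun z => g z - r z) (hg.sub hr) (a := -Bref) (b := Bref)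
      (fun z => abs_le.1 (hgr z))
    rw [← hP, show Bref - -Bref = 2 * Bref by ring] at h1
    have h2 := aux_tail (by positivity) (by omega) h1 hl3 (K := 2 * n) (by positivity)
    have h3 : 2 * (n : ℝ) * Real.log (3 / δ) / (2 * n) = Real.log (3 / δ) := by
      field_simp
    rw [h3, hexp3] at h2
    refine (measure_mono ?_).trans h2
    intro ω hω
    simp only [Set.mem_ofPred_eq, not_le] at hω ⊢
    have higD : Integrable g D := Integrable.of_mem_Icc 0 B hg.aemeasurable (ae_of_all _ hgB)
    have hgrD : Integrable (fun z => g z - r z) D :=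
      Integrable.of_mem_Icc (-Bref) Bref (hg.sub hr).aemeasurable
        (ae_of_all _ fun z => abs_le.1 (hgr z))
    have hirD : Integrable r D := by
      have := higD.sub hgrD
      refine this.congr (ae_of_all _ fun z => ?_)
      simp
    rw [integral_sub higD hirD, Finset.sum_sub_distrib, sub_div, ← hgh, ← hrh]
    linarith
  -- the two events for the original loss
  have hsub := aux_mean hn D g hg hgB
  rw [← hP, sub_zero, ← ho] at hsub
  have h3 : 2 * (n : ℝ) * Real.log (6 / δ) / (2 * n) = Real.log (6 / δ) := by
    field_simp
  have hE2p : P {ω | ¬ gh ω ≤ o + B * Real.sqrt (Real.log (6 / δ) / (2 * n))} ≤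
      ENNReal.ofReal (δ / 6) := by
    have h2 := aux_tail hB0 (by omega) hsub hl6 (K := 2 * n) (by positivity)
    rw [h3, hexp6] at h2
    refine (measure_mono ?_).trans h2
    intro ω hω
    simp only [Set.mem_ofPred_eq, not_le] at hω ⊢
    rw [← hgh]
    linarith
  have hE2m : P {ω | ¬ o ≤ gh ω + B * Real.sqrt (Real.log (6 / δ) / (2 * n))} ≤
      ENNReal.ofReal (δ / 6) := by
    have h2 := aux_tail hB0 (by omega) hsub.neg hl6 (K := 2 * n) (by positivity)
    rw [h3, hexp6] at h2
    refine (measure_mono ?_).trans h2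
    intro ω hω
    simp only [Set.mem_ofPred_eq, not_le, Pi.neg_apply] at hω ⊢
    rw [← hgh]
    linarith
  -- the two events for the switched loss
  have hE3 : P {ω | ¬ s ≤ Gh ω + B * Real.sqrt (Real.log (6 / δ) / n)} ≤
      ENNReal.ofReal (δ / 2) ∧ P {ω | ¬ Gh ω ≤ s + B * Real.sqrt (Real.log (6 / δ) / n)} ≤
      ENNReal.ofReal (δ / 2) := by
    rcases le_total (n : ℝ) (Real.log (6 / δ)) with hbig | hsmall
    · have h1 : 1 ≤ Real.sqrt (Real.log (6 / δ) / n) := by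
        rw [Real.one_le_sqrt, le_div_iff₀ (by positivity)]
        linarith
      have h2 : B ≤ B * Real.sqrt (Real.log (6 / δ) / n) := le_mul_of_one_le_right hB0 h1
      constructor
      · have : {ω | ¬ s ≤ Gh ω + B * Real.sqrt (Real.log (6 / δ) / n)} = ∅ := by
          ext ω
          have := (hGh0 ω).1
          simp only [Set.mem_ofPred_eq, Set.mem_empty_iff_false, iff_false, not_not]
          linarith
        rw [this]; simp
      · have : {ω | ¬ Gh ω ≤ s + B * Real.sqrt (Real.log (6 / δ) / n)} = ∅ := by
          ext ω
          have := (hGh0 ω).2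
          simp only [Set.mem_ofPred_eq, Set.mem_empty_iff_false, iff_false, not_not]
          linarith
        rw [this]; simp
    · have hsw := aux_ustat hn D G hG hGB
      rw [← hP, sub_zero, ← hs] at hsw
      have hm : (n : ℝ) - 1 ≤ 2 * ((n / 2 : ℕ) : ℝ) := by
        have : n ≤ 2 * (n / 2) + 1 := by omega
        have : (n : ℝ) ≤ 2 * ((n / 2 : ℕ) : ℝ) + 1 := by exact_mod_cast this
        linarith
      have hex : Real.exp (-(2 * ((n / 2 : ℕ) : ℝ) * Real.log (6 / δ) / n)) ≤ δ / 2 := by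
        have h1 : -(2 * ((n / 2 : ℕ) : ℝ) * Real.log (6 / δ) / n) ≤
            1 + -Real.log (6 / δ) := by
          have : Real.log (6 / δ) - 1 ≤ 2 * ((n / 2 : ℕ) : ℝ) * Real.log (6 / δ) / n := by
            rw [le_div_iff₀ (by positivity)]
            nlinarith
          linarith
        calc _ ≤ Real.exp (1 + -Real.log (6 / δ)) := Real.exp_le_exp.2 h1
          _ = Real.exp 1 * (δ / 6) := by rw [Real.exp_add, hexp6]
          _ ≤ 3 * (δ / 6) := by
              gcongr
              exact Real.exp_one_lt_three.le
          _ = δ / 2 := by ring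
      have hNpos : 0 < n / 2 := by omega
      constructor
      · have h2 := aux_tail hB0 hNpos hsw.neg hl6 (K := n) (by positivity)
        refine (measure_mono ?_).trans (h2.trans (ENNReal.ofReal_le_ofReal hex))
        intro ω hω
        simp only [Set.mem_ofPred_eq, not_le, Pi.neg_apply] at hω ⊢
        rw [← hGh]
        linarith
      · have h2 := aux_tail hB0 hNpos hsw hl6 (K := n) (by positivity)
        refine (measure_mono ?_).trans (h2.trans (ENNReal.ofReal_le_ofReal hex))
        intro ω hω
        simp only [Set.mem_ofPred_eq, not_le] at hω ⊢
        rw [← hGh]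
        linarith
  exact ⟨aux_union hδ0 hE1 hE2p hE3.1, aux_union hδ0 hE1 hE2m hE3.2, hbo, hsS, hs0,
    fun ω => (hGh0 ω).1, hB0⟩

end

/-- Theorem 3 (conservative finite-sample bounds for model class reliance):
with probability at least `1 − δ`, `MCR₊(ε) ≤ MCR̂₊(ε₁) + Q₁`, and with
probability at least `1 − δ`, `MCR₋(ε) ≥ MCR̂₋(ε₁) − Q₁`, where
`ε₁ = ε + 2B_ref√(log(3/δ)/(2n))` and
`Q₁ = B_switch/b_orig − (B_switch − B_ind√(log(6/δ)/n))/(b_orig + B_ind√(log(6/δ)/(2n)))`. -/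
theorem stmt_3 {𝒴 𝒳1 𝒳2 : Type*}
    [MeasurableSpace 𝒴] [MeasurableSpace 𝒳1] [MeasurableSpace 𝒳2]
    (D : Measure (𝒴 × 𝒳1 × 𝒳2)) [IsProbabilityMeasure D]
    (F : Set ((𝒳1 × 𝒳2) → 𝒴))
    (L : ((𝒳1 × 𝒳2) → 𝒴) → (𝒴 × 𝒳1 × 𝒳2) → ℝ)
    (hL : ∀ f z, 0 ≤ L f z)
    (hLmeas : ∀ f ∈ F, Measurable (L f))
    (fref : (𝒳1 × 𝒳2) → 𝒴) (hfref : fref ∈ F)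
    (n : ℕ) (hn : 2 ≤ n)
    (Bind Bref borig Bswitch : ℝ) (hborig : 0 < borig)
    (ε δ : ℝ) (hε : 0 ≤ ε) (hδ : δ ∈ Set.Ioo (0 : ℝ) 1)
    -- population quantities
    (eorig eswitch : ((𝒳1 × 𝒳2) → 𝒴) → ℝ)
    (heorig : ∀ f, eorig f = ∫ z, L f z ∂D)
    (heswitch : ∀ f, eswitch f = ∫ q, L f (q.2.1, q.1.2.1, q.2.2.2) ∂(D.prod D))
    (MR : ((𝒳1 × 𝒳2) → 𝒴) → ℝ) (hMR : ∀ f, MR f = eswitch f / eorig f)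
    (R : ℝ → Set ((𝒳1 × 𝒳2) → 𝒴))
    (hR : ∀ e, R e = insert fref {f ∈ F | eorig f ≤ eorig fref + e})
    -- empirical quantities, over the i.i.d. sample measure `P = Dⁿ`
    (P : Measure (Fin n → 𝒴 × 𝒳1 × 𝒳2)) (hP : P = Measure.pi fun _ => D)
    (ehatorig ehatswitch : ((𝒳1 × 𝒳2) → 𝒴) → (Fin n → 𝒴 × 𝒳1 × 𝒳2) → ℝ)
    (hehatorig : ∀ f ω, ehatorig f ω = (∑ i, L f (ω i)) / n)
    (hehatswitch : ∀ f ω, ehatswitch f ω =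
      (∑ i, ∑ j ∈ Finset.univ.erase i, L f ((ω j).1, (ω i).2.1, (ω j).2.2)) /
        ((n : ℝ) * ((n : ℝ) - 1)))
    (MRhat : ((𝒳1 × 𝒳2) → 𝒴) → (Fin n → 𝒴 × 𝒳1 × 𝒳2) → ℝ)
    (hMRhat : ∀ f ω, MRhat f ω = ehatswitch f ω / ehatorig f ω)
    (Rhat : ℝ → (Fin n → 𝒴 × 𝒳1 × 𝒳2) → Set ((𝒳1 × 𝒳2) → 𝒴))
    (hRhat : ∀ e ω, Rhat e ω =
      insert fref {f ∈ F | ehatorig f ω ≤ ehatorig fref ω + e})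
    -- `f₊,ε` and `f₋,ε` attain the highest and lowest model reliance on `R(ε)`
    (fplus fminus : (𝒳1 × 𝒳2) → 𝒴)
    (hfplus : fplus ∈ R ε ∧ ∀ f ∈ R ε, MR f ≤ MR fplus)
    (hfminus : fminus ∈ R ε ∧ ∀ f ∈ R ε, MR fminus ≤ MR f)
    -- the empirical MCR values `MCR̂₊(e)`, `MCR̂₋(e)`, assumed to be attained
    (MCRhatP MCRhatM : ℝ → (Fin n → 𝒴 × 𝒳1 × 𝒳2) → ℝ)
    (hMCRhatP : ∀ e ω, IsGreatest ((fun f => MRhat f ω) '' Rhat e ω) (MCRhatP e ω))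
    (hMCRhatM : ∀ e ω, IsLeast ((fun f => MRhat f ω) '' Rhat e ω) (MCRhatM e ω))
    -- Assumptions 1, 2, 3 for `f₊,ε` and `f₋,ε`
    (hA1p : ∀ z, L fplus z ≤ Bind) (hA1m : ∀ z, L fminus z ≤ Bind)
    (hA2p : ∀ z, |L fplus z - L fref z| ≤ Bref)
    (hA2m : ∀ z, |L fminus z - L fref z| ≤ Bref)
    (hA3p : ∀ᵐ ω ∂P, borig ≤ ehatorig fplus ω ∧ ehatswitch fplus ω ≤ Bswitch)
    (hA3m : ∀ᵐ ω ∂P, borig ≤ ehatorig fminus ω ∧ ehatswitch fminus ω ≤ Bswitch)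
    -- `ε₁` and `Q₁`
    (ε₁ Q₁ : ℝ)
    (hε₁ : ε₁ = ε + 2 * Bref * Real.sqrt (Real.log (3 / δ) / (2 * n)))
    (hQ₁ : Q₁ = Bswitch / borig -
      (Bswitch - Bind * Real.sqrt (Real.log (6 / δ) / n)) /
        (borig + Bind * Real.sqrt (Real.log (6 / δ) / (2 * n)))) :
    P {ω | MCRhatP ε₁ ω + Q₁ < MR fplus} ≤ ENNReal.ofReal δ ∧
    P {ω | MR fminus < MCRhatM ε₁ ω - Q₁} ≤ ENNReal.ofReal δ := by
  have hmem : ∀ f ∈ R ε, f ∈ F ∧ eorig f ≤ eorig fref + ε := by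
    intro f hf
    rw [hR] at hf
    rcases hf with rfl | hf
    · exact ⟨hfref, by linarith⟩
    · exact hf
  have main : ∀ f ∈ R ε, (∀ z, L f z ≤ Bind) → (∀ z, |L f z - L fref z| ≤ Bref) →
      (∀ᵐ ω ∂P, borig ≤ ehatorig f ω ∧ ehatswitch f ω ≤ Bswitch) → _ :=
    fun f hf h1 h2 h3 => aux_master hn D (L f) (L fref)
      (fun q => L f (q.2.1, q.1.2.1, q.2.2.2)) (hLmeas f (hmem f hf).1) (hLmeas fref hfref)
      ((hLmeas f (hmem f hf).1).comp (by fun_prop)) (fun z => ⟨hL f z, h1 z⟩)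
      (fun q => ⟨hL f _, h1 _⟩) h2 hδ
      (by rw [← heorig, ← heorig]; exact (hmem f hf).2) P hP
      (ehatorig f) (ehatorig fref) (ehatswitch f) (hehatorig f) (hehatorig fref) (hehatswitch f)
      h3 (eorig f) (eswitch f) (heorig f) (heswitch f)
  constructor
  · obtain ⟨hp, -, hbo, hsS, hs0, hG0, hB0⟩ := main fplus hfplus.1 hA1p hA2p hA3p
    rw [← hε₁] at hp
    refine (measure_mono_ae ?_).trans hp
    filter_upwards [hA3p] with ω hω hbad hgood
    obtain ⟨g1, g2, g3⟩ := hgood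
    have hin : fplus ∈ Rhat ε₁ ω := by
      rw [hRhat]; exact Or.inr ⟨(hmem _ hfplus.1).1, g1⟩
    have hle : MRhat fplus ω ≤ MCRhatP ε₁ ω := (hMCRhatP ε₁ ω).2 ⟨fplus, hin, rfl⟩
    have hd := aux_det hborig hs0 hsS hbo (by positivity) (by positivity) (hG0 ω)
      (hborig.trans_le hω.1) g3 g2
    rw [← hQ₁, ← hMR, ← hMRhat] at hd
    have hbad' : MCRhatP ε₁ ω + Q₁ < MR fplus := hbad
    linarith
  · obtain ⟨-, hp, hbo, hsS, hs0, hG0, hB0⟩ := main fminus hfminus.1 hA1m hA2m hA3m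
    rw [← hε₁] at hp
    refine (measure_mono_ae ?_).trans hp
    filter_upwards [hA3m] with ω hω hbad hgood
    obtain ⟨g1, g2, g3⟩ := hgood
    have hin : fminus ∈ Rhat ε₁ ω := by
      rw [hRhat]; exact Or.inr ⟨(hmem _ hfminus.1).1, g1⟩
    have hle : MCRhatM ε₁ ω ≤ MRhat fminus ω := (hMCRhatM ε₁ ω).2 ⟨fminus, hin, rfl⟩
    have hd := aux_det hborig (hG0 ω) hω.2 hω.1 (by positivity) (by positivity) hs0
      (hborig.trans_le hbo) g3 g2
    rw [← hQ₁, ← hMR, ← hMRhat] at hd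
    have hbad' : MR fminus < MCRhatM ε₁ ω - Q₁ := hbad
    linarith
end

section
/- Let f* ∈ argmin_{f∈ℱ} e_orig(f) be a model attaining the lowest possible expected loss, and let f₊ ∈ argmax_{f∈R(0)} MR(f) and f₋ ∈ argmin_{f∈R(0)} MR(f). If f₊ and f₋ satisfy Assumptions 1, 2 and 3, then for any δ ∈ (0,1), P( MR(f*) ∈ [ MCR̂₋(ε₂) − Q₂, MCR̂₊(ε₂) + Q₂ ] ) ≥ 1 − δ, where ε₂ = 2B_ref·√(log(6/δ)/(2n)) and Q₂ = B_switch/b_orig − (B_switch − B_ind·√(log(12/δ)/n)) / (b_orig + B_ind·√(log(12/δ)/(2n))). -/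
open MeasureTheory

section helpers
open ProbabilityTheory
open scoped ENNReal NNReal

/-- The Finner inequality for lower marginals, on a product of probability measures. -/
lemma finner_aux {ι κ Z : Type*} [DecidableEq ι] [MeasurableSpace Z]
    (D : Measure Z) [IsProbabilityMeasure D] (S : Finset κ)
    (f : κ → (ι → Z) → ℝ≥0∞) (hf : ∀ s, Measurable (f s)) (p : κ → ℝ) (hp : ∀ s, 0 ≤ p s)
    (A : κ → Finset ι) (hA : ∀ s k, k ∉ A s → ∀ x y, f s (Function.update x k y) = f s x)
    (hsum : ∀ k, ∑ s ∈ S.filter (fun s => k ∈ A s), p s = 1) (T : Finset ι) (x : ι → Z) :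
    (∫⋯∫⁻_T, (fun ω => ∏ s ∈ S, f s ω ^ p s) ∂(fun _ => D)) x
      ≤ ∏ s ∈ S, ((∫⋯∫⁻_T, f s ∂(fun _ => D)) x) ^ p s := by
  classical
  induction T using Finset.induction generalizing x with
  | empty => simp
  | insert k T hk ih =>
    have hm : Measurable (fun ω => ∏ s ∈ S, f s ω ^ p s) :=
      Finset.measurable_prod _ fun s _ => (hf s).pow_const _
    rw [lmarginal_insert _ hm hk]
    refine (lintegral_mono fun y => ih (Function.update x k y)).trans ?_
    have hgm : ∀ s, Measurable fun y =>
        (∫⋯∫⁻_T, f s ∂(fun _ => D)) (Function.update x k y) := fun s =>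
      ((hf s).lmarginal _).comp (measurable_update x)
    have hconst : ∀ s ∈ S.filter (fun s => ¬ k ∈ A s), ∀ y,
        (∫⋯∫⁻_T, f s ∂(fun _ => D)) (Function.update x k y) =
          (∫⋯∫⁻_insert k T, f s ∂(fun _ => D)) x := by
      intro s hs y
      have hs2 := (Finset.mem_filter.1 hs).2
      have h1 : ∀ y, (∫⋯∫⁻_T, f s ∂(fun _ => D)) (Function.update x k y) =
          (∫⋯∫⁻_T, f s ∂(fun _ => D)) x := by
        intro y
        rw [lmarginal_update_of_notMem (hf s) hk]
        have hfe : f s ∘ (fun z => Function.update z k y) = f s := by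
          funext z
          exact hA s k hs2 z y
        rw [hfe]
      rw [lmarginal_insert _ (hf s) hk]
      simp [h1]
    calc _ = ∫⁻ y, (∏ s ∈ S.filter (fun s => ¬ k ∈ A s),
              ((∫⋯∫⁻_insert k T, f s ∂(fun _ => D)) x) ^ p s) *
            ∏ s ∈ S.filter (fun s => k ∈ A s),
              ((∫⋯∫⁻_T, f s ∂(fun _ => D)) (Function.update x k y)) ^ p s ∂D := by
          refine lintegral_congr fun y => ?_
          rw [← Finset.prod_filter_mul_prod_filter_not S (fun s => k ∈ A s), mul_comm]
          congr 1
          exact Finset.prod_congr rfl fun s hs => by rw [hconst s hs y]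
      _ = (∏ s ∈ S.filter (fun s => ¬ k ∈ A s),
              ((∫⋯∫⁻_insert k T, f s ∂(fun _ => D)) x) ^ p s) *
            ∫⁻ y, ∏ s ∈ S.filter (fun s => k ∈ A s),
              ((∫⋯∫⁻_T, f s ∂(fun _ => D)) (Function.update x k y)) ^ p s ∂D :=
          lintegral_const_mul _ (Finset.measurable_prod _ fun s _ => (hgm s).pow_const _)
      _ ≤ (∏ s ∈ S.filter (fun s => ¬ k ∈ A s),
              ((∫⋯∫⁻_insert k T, f s ∂(fun _ => D)) x) ^ p s) *
            ∏ s ∈ S.filter (fun s => k ∈ A s),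
              (∫⁻ y, (∫⋯∫⁻_T, f s ∂(fun _ => D)) (Function.update x k y) ∂D) ^ p s := by
          gcongr
          exact ENNReal.lintegral_prod_norm_pow_le _ (fun s _ => (hgm s).aemeasurable)
            (hsum k) (fun s _ => hp s)
      _ = _ := by
          rw [← Finset.prod_filter_mul_prod_filter_not S (fun s => k ∈ A s), mul_comm]
          congr 1
          exact Finset.prod_congr rfl fun s _ => by rw [lmarginal_insert _ (hf s) hk]

lemma pairs_card (n : ℕ) (k : Fin n) :
    ((Finset.univ.offDiag : Finset (Fin n × Fin n)).filter
      (fun s => k ∈ ({s.1, s.2} : Finset (Fin n)))).card = 2 * (n - 1) := by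
  have : ((Finset.univ.offDiag : Finset (Fin n × Fin n)).filter
      (fun s => k ∈ ({s.1, s.2} : Finset (Fin n)))) =
      ((Finset.univ.erase k).image fun j => (k, j)) ∪
        ((Finset.univ.erase k).image fun j => (j, k)) := by
    ext ⟨a, b⟩
    simp only [Finset.mem_filter, Finset.mem_offDiag, Finset.mem_univ, true_and,
      Finset.mem_insert, Finset.mem_singleton, Finset.mem_union, Finset.mem_image,
      Finset.mem_erase, Prod.mk.injEq, and_true, ne_eq]
    constructor
    · rintro ⟨h, rfl | rfl⟩
      · exact Or.inl ⟨b, fun hh => h hh.symm, rfl, rfl⟩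
      · exact Or.inr ⟨a, h, rfl, rfl⟩
    · rintro (⟨c, h, rfl, rfl⟩ | ⟨c, h, rfl, rfl⟩)
      · exact ⟨fun hh => h hh.symm, Or.inl rfl⟩
      · exact ⟨h, Or.inr rfl⟩
  rw [this, Finset.card_union_of_disjoint, Finset.card_image_of_injective,
    Finset.card_image_of_injective]
  · simp; omega
  · intro a b h; simpa using h
  · intro a b h; simpa using h
  · rw [Finset.disjoint_left]
    rintro ⟨a, b⟩ h1 h2
    simp only [Finset.mem_image, Finset.mem_erase, Prod.mk.injEq] at h1 h2
    grind

lemma mp_pair {Z : Type*} [MeasurableSpace Z] (D : Measure Z) [IsProbabilityMeasure D] {n : ℕ}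
    {i j : Fin n} (hij : i ≠ j) :
    MeasurePreserving (fun ω : Fin n → Z => (ω i, ω j)) (Measure.pi fun _ => D) (D.prod D) := by
  refine ⟨by fun_prop, ?_⟩
  have h : iIndepFun (fun (i : Fin n) (ω : Fin n → Z) => ω i) (Measure.pi fun _ => D) :=
    iIndepFun_pi (X := fun _ z => z) (fun _ => aemeasurable_id)
  have h2 := (indepFun_iff_map_prod_eq_prod_map_map
    (measurable_pi_apply i).aemeasurable (measurable_pi_apply j).aemeasurable).1
    (h.indepFun hij)
  rw [h2]
  congr 1
  · exact (measurePreserving_eval (fun _ : Fin n => D) i).map_eq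
  · exact (measurePreserving_eval (fun _ : Fin n => D) j).map_eq

lemma ustat_subG {Z : Type*} [MeasurableSpace Z] (D : Measure Z) [IsProbabilityMeasure D] {n : ℕ}
    (hn : 2 ≤ n) (k : Z × Z → ℝ) (hk : Measurable k) (a b : ℝ) (hb : ∀ q, k q ∈ Set.Icc a b)
    (c : ℝ≥0) (hc : HasSubgaussianMGF k c (D.prod D)) :
    HasSubgaussianMGF (fun ω : Fin n → Z =>
      (∑ s ∈ Finset.univ.offDiag, k (ω s.1, ω s.2)) / ((n : ℝ) * ((n : ℝ) - 1)))
      (2 * c / n) (Measure.pi fun _ => D) := by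
  have hn' : (2 : ℝ) ≤ n := by exact_mod_cast hn
  have hcard : ((Finset.univ.offDiag : Finset (Fin n × Fin n)).card : ℝ)
      = (n : ℝ) * ((n : ℝ) - 1) := by
    rw [Finset.offDiag_card]; simp
    rw [Nat.cast_sub (by nlinarith)]; push_cast; ring
  have hN : (0 : ℝ) < (n : ℝ) * ((n : ℝ) - 1) := by
    have : (0 : ℝ) < (n : ℝ) - 1 := by linarith
    positivity
  have hmeas : Measurable (fun ω : Fin n → Z =>
      (∑ s ∈ Finset.univ.offDiag, k (ω s.1, ω s.2)) / ((n : ℝ) * ((n : ℝ) - 1))) := by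
    fun_prop
  have hint : ∀ t : ℝ, Integrable (fun ω : Fin n → Z => Real.exp (t *
      ((∑ s ∈ Finset.univ.offDiag, k (ω s.1, ω s.2)) / ((n : ℝ) * ((n : ℝ) - 1)))))
      (Measure.pi fun _ => D) := by
    intro t
    refine integrable_exp_mul_of_mem_Icc (a := a) (b := b) hmeas.aemeasurable
      (Filter.Eventually.of_forall fun ω => ?_)
    constructor
    · rw [le_div_iff₀ hN, mul_comm, ← hcard, ← nsmul_eq_mul]
      exact Finset.card_nsmul_le_sum _ _ _ fun s _ => (hb _).1
    · rw [div_le_iff₀ hN, mul_comm, ← hcard, ← nsmul_eq_mul]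
      exact Finset.sum_le_card_nsmul _ _ _ fun s _ => (hb _).2
  refine ⟨hint, fun t => ?_⟩
  have hne : Nonempty Z := by
    by_contra h
    rw [not_nonempty_iff] at h
    have := measure_univ (μ := D)
    rw [Set.univ_eq_empty_iff.2 h] at this
    simp at this
  obtain ⟨z0⟩ := hne
  set p : ℝ := 1 / (2 * ((n : ℝ) - 1)) with hp
  have hp0 : 0 ≤ p := by
    have : (0 : ℝ) < (n : ℝ) - 1 := by linarith
    positivity
  let f : Fin n × Fin n → (Fin n → Z) → ℝ≥0∞ :=
    fun s ω => ENNReal.ofReal (Real.exp (2 * t / n * k (ω s.1, ω s.2)))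
  have hfin := finner_aux D (Finset.univ.offDiag : Finset (Fin n × Fin n)) f
    (fun s => by fun_prop) (fun _ => p) (fun _ => hp0) (fun s => {s.1, s.2})
    (by
      intro s j hj x y
      simp only [Finset.mem_insert, Finset.mem_singleton, not_or] at hj
      simp only [f]
      rw [Function.update_of_ne (Ne.symm hj.1), Function.update_of_ne (Ne.symm hj.2)])
    (by
      intro j
      rw [Finset.sum_const, pairs_card, nsmul_eq_mul, hp]
      push_cast [Nat.cast_sub (show 1 ≤ n by omega)]
      have : (0 : ℝ) < (n : ℝ) - 1 := by linarith
      field_simp)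
    Finset.univ (fun _ => z0)
  simp only [lmarginal_univ] at hfin
  have hfs : ∀ s ∈ (Finset.univ.offDiag : Finset (Fin n × Fin n)),
      ∫⁻ ω, f s ω ∂(Measure.pi fun _ => D) ≤
        ENNReal.ofReal (Real.exp (c * (2 * t / n) ^ 2 / 2)) := by
    intro s hs
    have hs' : s.1 ≠ s.2 := (Finset.mem_offDiag.1 hs).2.2
    have := (mp_pair D hs').lintegral_comp
      (f := fun q => ENNReal.ofReal (Real.exp (2 * t / n * k q))) (by fun_prop)
    simp only [f]
    rw [this, ← ofReal_integral_eq_lintegral_ofReal (hc.integrable_exp_mul _)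
      (Filter.Eventually.of_forall fun _ => (Real.exp_pos _).le)]
    exact ENNReal.ofReal_le_ofReal (hc.mgf_le _)
  have hlhs : ∀ ω, ∏ s ∈ (Finset.univ.offDiag : Finset (Fin n × Fin n)), f s ω ^ p =
      ENNReal.ofReal (Real.exp (t *
      ((∑ s ∈ Finset.univ.offDiag, k (ω s.1, ω s.2)) / ((n : ℝ) * ((n : ℝ) - 1))))) := by
    intro ω
    simp only [f]
    simp_rw [ENNReal.ofReal_rpow_of_pos (Real.exp_pos _), ← Real.exp_mul]
    rw [← ENNReal.ofReal_prod_of_nonneg (fun _ _ => (Real.exp_pos _).le), ← Real.exp_sum]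
    congr 2
    rw [Finset.sum_div, Finset.mul_sum]
    refine Finset.sum_congr rfl fun s _ => ?_
    have : (0 : ℝ) < (n : ℝ) - 1 := by linarith
    rw [hp]; field_simp
  simp_rw [hlhs] at hfin
  rw [← ofReal_integral_eq_lintegral_ofReal (hint t)
      (Filter.Eventually.of_forall fun _ => (Real.exp_pos _).le)] at hfin
  have h2 := hfin.trans (Finset.prod_le_prod' fun s hs => ENNReal.rpow_le_rpow (hfs s hs) hp0)
  rw [Finset.prod_const, ENNReal.ofReal_rpow_of_pos (Real.exp_pos _), ← ENNReal.ofReal_pow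
    (Real.rpow_nonneg (Real.exp_pos _).le _), ENNReal.ofReal_le_ofReal_iff (by positivity),
    ← Real.exp_mul, ← Real.exp_nat_mul, hcard] at h2
  refine h2.trans (le_of_eq ?_)
  congr 1
  have : (0 : ℝ) < (n : ℝ) - 1 := by linarith
  rw [hp]; push_cast; field_simp; try ring

/-- One-sided Hoeffding inequality for order-two U-statistics, valid for odd `n` too. -/
lemma ustat_tail {Z : Type*} [MeasurableSpace Z] (D : Measure Z) [IsProbabilityMeasure D] {n : ℕ}
    (hn : 2 ≤ n) (h : Z × Z → ℝ) (hk : Measurable h) (a b : ℝ) (hab : a < b)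
    (hb : ∀ q, h q ∈ Set.Icc a b) (t : ℝ) (ht : 0 ≤ t) :
    (Measure.pi fun _ : Fin n => D).real {ω | ∫ q, h q ∂(D.prod D) + t ≤
      (∑ s ∈ Finset.univ.offDiag, h (ω s.1, ω s.2)) / ((n : ℝ) * ((n : ℝ) - 1))}
      ≤ Real.exp (-(n * t ^ 2 / (b - a) ^ 2)) := by
  have hn' : (2 : ℝ) ≤ n := by exact_mod_cast hn
  have hcard : ((Finset.univ.offDiag : Finset (Fin n × Fin n)).card : ℝ)
      = (n : ℝ) * ((n : ℝ) - 1) := by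
    rw [Finset.offDiag_card]; simp
    rw [Nat.cast_sub (by nlinarith)]; push_cast; ring
  have hN : (0 : ℝ) < (n : ℝ) * ((n : ℝ) - 1) := by
    have : (0 : ℝ) < (n : ℝ) - 1 := by linarith
    positivity
  have hs := hasSubgaussianMGF_of_mem_Icc (μ := D.prod D) hk.aemeasurable
    (Filter.Eventually.of_forall hb)
  have h2 := (ustat_subG D hn _ (by fun_prop) (a - ∫ q, h q ∂(D.prod D))
    (b - ∫ q, h q ∂(D.prod D)) (fun q => ⟨by linarith [(hb q).1], by linarith [(hb q).2]⟩)
    _ hs).measure_ge_le ht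
  convert h2 using 1
  · congr 1
    ext ω
    simp only [Set.mem_ofPred_eq]
    rw [Finset.sum_sub_distrib, Finset.sum_const, nsmul_eq_mul, hcard, sub_div,
      mul_div_cancel_left₀ _ hN.ne', le_sub_iff_add_le, add_comm]
  · congr 1
    have : (‖b - a‖₊ : ℝ) = b - a := by
      simp [abs_of_pos (sub_pos.2 hab)]
    have h0 : b - a ≠ 0 := (sub_pos.2 hab).ne'
    push_cast
    rw [Real.norm_of_nonneg (sub_pos.2 hab).le]
    field_simp
    try ring

lemma mean_tail {Z : Type*} [MeasurableSpace Z] (D : Measure Z) [IsProbabilityMeasure D] {n : ℕ}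
    (hn : 2 ≤ n) (h : Z → ℝ) (hk : Measurable h) (a b : ℝ) (hab : a < b)
    (hb : ∀ q, h q ∈ Set.Icc a b) (t : ℝ) (ht : 0 ≤ t) :
    (Measure.pi fun _ : Fin n => D).real {ω | ∫ q, h q ∂D + t ≤ (∑ i, h (ω i)) / (n : ℝ)}
      ≤ Real.exp (-(2 * n * t ^ 2 / (b - a) ^ 2)) := by
  have hn' : (0 : ℝ) < n := by positivity
  have hs := hasSubgaussianMGF_of_mem_Icc (μ := D) hk.aemeasurable
    (Filter.Eventually.of_forall hb)
  have hind : iIndepFun (fun (i : Fin n) (ω : Fin n → Z) => h (ω i) - ∫ q, h q ∂D)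
      (Measure.pi fun _ => D) :=
    iIndepFun_pi (X := fun _ z => h z - ∫ q, h q ∂D) (fun _ => by fun_prop)
  have h2 := HasSubgaussianMGF.measure_sum_ge_le_of_iIndepFun hind (s := Finset.univ)
    (c := fun _ => (‖b - a‖₊ / 2) ^ 2) (fun i _ => by
      have hmp := measurePreserving_eval (fun _ : Fin n => D) i
      refine HasSubgaussianMGF.of_map (Y := fun ω : Fin n → Z => ω i)
        (X := fun z => h z - ∫ q, h q ∂D) (measurable_pi_apply i).aemeasurable ?_
      have he : (Measure.pi fun _ => D).map (fun ω : Fin n → Z => ω i) = D := hmp.map_eq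
      rw [he]
      exact hs) (ε := n * t) (by positivity)
  convert h2 using 1
  · congr 1
    ext ω
    simp only [Set.mem_ofPred_eq]
    rw [Finset.sum_sub_distrib, Finset.sum_const, nsmul_eq_mul, le_div_iff₀ hn']
    simp only [Finset.card_univ, Fintype.card_fin]
    constructor <;> intro h <;> linarith
  · congr 1
    have h0 : b - a ≠ 0 := (sub_pos.2 hab).ne'
    push_cast
    rw [Real.norm_of_nonneg (sub_pos.2 hab).le]
    simp
    field_simp
    try ring

/-- The deterministic comparison. -/
lemma ratio_bound {s o s' o' a b Bs bo : ℝ} (hbo : 0 < bo) (ha : 0 ≤ a) (hb : 0 ≤ b)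
    (hs : 0 ≤ s) (hs' : 0 ≤ s') (ho : bo ≤ o) (ho' : 0 < o') (hsB : s ≤ Bs)
    (h1 : s - a ≤ s') (h2 : o' ≤ o + b) :
    s / o ≤ s' / o' + (Bs / bo - (Bs - a) / (bo + b)) := by
  have hO : 0 < o := by linarith
  have e1 : (s - a) / (o + b) ≤ s' / o' := by
    rcases le_or_gt 0 (s - a) with h | h
    · exact div_le_div₀ hs' h1 ho' h2
    · exact (div_neg_of_neg_of_pos h (by linarith)).le.trans (by positivity)
  have e2 : ∀ s o : ℝ, 0 < o → s / o - (s - a) / (o + b) = s * (b / (o * (o + b))) + a / (o + b) := by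
    intro s o ho
    have : 0 < o + b := by linarith
    field_simp
    ring
  have e3 : s * (b / (o * (o + b))) + a / (o + b) ≤ Bs * (b / (bo * (bo + b))) + a / (bo + b) := by
    gcongr
    linarith
  have := e2 s o hO
  have := e2 Bs bo hbo
  linarith

lemma integrable_bdd {Ω : Type*} [MeasurableSpace Ω] (μ : Measure Ω) [IsProbabilityMeasure μ]
    {g : Ω → ℝ} (hg : Measurable g) {B : ℝ} (h0 : ∀ x, 0 ≤ g x) (hB : ∀ x, g x ≤ B) :
    Integrable g μ :=
  Integrable.of_bound hg.aestronglyMeasurable B (Filter.Eventually.of_forall fun x => by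
    rw [Real.norm_of_nonneg (h0 x)]; exact hB x)

lemma mean_integral {Z : Type*} [MeasurableSpace Z] (D : Measure Z) [IsProbabilityMeasure D]
    {n : ℕ} (hn : 2 ≤ n) (h : Z → ℝ) (hm : Measurable h) {B : ℝ} (h0 : ∀ x, 0 ≤ h x)
    (hB : ∀ x, h x ≤ B) :
    ∫ ω, (∑ i, h (ω i)) / (n : ℝ) ∂(Measure.pi fun _ : Fin n => D) = ∫ z, h z ∂D := by
  have hn' : (0 : ℝ) < n := by positivity
  have key : ∀ i : Fin n, ∫ ω, h (ω i) ∂(Measure.pi fun _ : Fin n => D) = ∫ z, h z ∂D := by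
    intro i
    have he : (Measure.pi fun _ => D).map (fun ω : Fin n → Z => ω i) = D :=
      (measurePreserving_eval (fun _ : Fin n => D) i).map_eq
    rw [← integral_map (φ := fun ω : Fin n → Z => ω i) (f := h)
      (measurable_pi_apply i).aemeasurable hm.aestronglyMeasurable, he]
  rw [integral_div, integral_finsetSum _ fun i _ =>
    integrable_bdd _ (g := fun ω : Fin n → Z => h (ω i))
      (hm.comp (measurable_pi_apply i)) (fun _ => h0 _) (fun _ => hB _)]
  simp_rw [key]
  simp
  field_simp

lemma ustat_integral {Z : Type*} [MeasurableSpace Z] (D : Measure Z) [IsProbabilityMeasure D]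
    {n : ℕ} (hn : 2 ≤ n) (h : Z × Z → ℝ) (hm : Measurable h) {B : ℝ} (h0 : ∀ x, 0 ≤ h x)
    (hB : ∀ x, h x ≤ B) :
    ∫ ω, (∑ s ∈ Finset.univ.offDiag, h (ω s.1, ω s.2)) / ((n : ℝ) * ((n : ℝ) - 1))
      ∂(Measure.pi fun _ : Fin n => D) = ∫ z, h z ∂(D.prod D) := by
  have hn' : (2 : ℝ) ≤ n := by exact_mod_cast hn
  have hcard : ((Finset.univ.offDiag : Finset (Fin n × Fin n)).card : ℝ)
      = (n : ℝ) * ((n : ℝ) - 1) := by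
    rw [Finset.offDiag_card]; simp
    rw [Nat.cast_sub (by nlinarith)]; push_cast; ring
  have hN : (0 : ℝ) < (n : ℝ) * ((n : ℝ) - 1) := by
    have : (0 : ℝ) < (n : ℝ) - 1 := by linarith
    positivity
  have key : ∀ s ∈ (Finset.univ.offDiag : Finset (Fin n × Fin n)),
      ∫ ω, h (ω s.1, ω s.2) ∂(Measure.pi fun _ : Fin n => D) = ∫ z, h z ∂(D.prod D) := by
    intro s hs
    have hmp := mp_pair D (Finset.mem_offDiag.1 hs).2.2
    rw [← hmp.map_eq, integral_map hmp.measurable.aemeasurable hm.aestronglyMeasurable]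
  rw [integral_div, integral_finsetSum _ fun i _ =>
    integrable_bdd _ (by fun_prop) (fun _ => h0 _) (fun _ => hB _)]
  rw [Finset.sum_congr rfl key, Finset.sum_const, nsmul_eq_mul, hcard,
    mul_div_cancel_left₀ _ hN.ne']

end helpers


/-- Corollary 4 (bound on the model reliance of a best-in-class model): with
probability at least `1 − δ`,
`MR(f*) ∈ [MCR̂₋(ε₂) − Q₂, MCR̂₊(ε₂) + Q₂]`, where
`ε₂ = 2B_ref√(log(6/δ)/(2n))` and
`Q₂ = B_switch/b_orig − (B_switch − B_ind√(log(12/δ)/n))/(b_orig + B_ind√(log(12/δ)/(2n)))`. -/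
theorem stmt_4 {𝒴 𝒳1 𝒳2 : Type*}
    [MeasurableSpace 𝒴] [MeasurableSpace 𝒳1] [MeasurableSpace 𝒳2]
    (D : Measure (𝒴 × 𝒳1 × 𝒳2)) [IsProbabilityMeasure D]
    (F : Set ((𝒳1 × 𝒳2) → 𝒴))
    (L : ((𝒳1 × 𝒳2) → 𝒴) → (𝒴 × 𝒳1 × 𝒳2) → ℝ)
    (hL : ∀ f z, 0 ≤ L f z)
    (hLmeas : ∀ f ∈ F, Measurable (L f))
    (fref : (𝒳1 × 𝒳2) → 𝒴) (hfref : fref ∈ F)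
    (n : ℕ) (hn : 2 ≤ n)
    (Bind Bref borig Bswitch : ℝ) (hborig : 0 < borig)
    (δ : ℝ) (hδ : δ ∈ Set.Ioo (0 : ℝ) 1)
    -- population quantities
    (eorig eswitch : ((𝒳1 × 𝒳2) → 𝒴) → ℝ)
    (heorig : ∀ f, eorig f = ∫ z, L f z ∂D)
    (heswitch : ∀ f, eswitch f = ∫ q, L f (q.2.1, q.1.2.1, q.2.2.2) ∂(D.prod D))
    (MR : ((𝒳1 × 𝒳2) → 𝒴) → ℝ) (hMR : ∀ f, MR f = eswitch f / eorig f)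
    (R : ℝ → Set ((𝒳1 × 𝒳2) → 𝒴))
    (hR : ∀ e, R e = insert fref {f ∈ F | eorig f ≤ eorig fref + e})
    -- empirical quantities, over the i.i.d. sample measure `P = Dⁿ`
    (P : Measure (Fin n → 𝒴 × 𝒳1 × 𝒳2)) (hP : P = Measure.pi fun _ => D)
    (ehatorig ehatswitch : ((𝒳1 × 𝒳2) → 𝒴) → (Fin n → 𝒴 × 𝒳1 × 𝒳2) → ℝ)
    (hehatorig : ∀ f ω, ehatorig f ω = (∑ i, L f (ω i)) / n)
    (hehatswitch : ∀ f ω, ehatswitch f ω =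
      (∑ i, ∑ j ∈ Finset.univ.erase i, L f ((ω j).1, (ω i).2.1, (ω j).2.2)) /
        ((n : ℝ) * ((n : ℝ) - 1)))
    (MRhat : ((𝒳1 × 𝒳2) → 𝒴) → (Fin n → 𝒴 × 𝒳1 × 𝒳2) → ℝ)
    (hMRhat : ∀ f ω, MRhat f ω = ehatswitch f ω / ehatorig f ω)
    (Rhat : ℝ → (Fin n → 𝒴 × 𝒳1 × 𝒳2) → Set ((𝒳1 × 𝒳2) → 𝒴))
    (hRhat : ∀ e ω, Rhat e ω =
      insert fref {f ∈ F | ehatorig f ω ≤ ehatorig fref ω + e})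
    -- `f*` attains the lowest possible expected loss over `ℱ`
    (fstar : (𝒳1 × 𝒳2) → 𝒴) (hfstarF : fstar ∈ F)
    (hfstar : ∀ f ∈ F, eorig fstar ≤ eorig f)
    -- `f₊` and `f₋` attain the highest and lowest model reliance on `R(0)`
    (fplus fminus : (𝒳1 × 𝒳2) → 𝒴)
    (hfplus : fplus ∈ R 0 ∧ ∀ f ∈ R 0, MR f ≤ MR fplus)
    (hfminus : fminus ∈ R 0 ∧ ∀ f ∈ R 0, MR fminus ≤ MR f)
    -- the empirical MCR values `MCR̂₊(e)`, `MCR̂₋(e)`, assumed to be attained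
    (MCRhatP MCRhatM : ℝ → (Fin n → 𝒴 × 𝒳1 × 𝒳2) → ℝ)
    (hMCRhatP : ∀ e ω, IsGreatest ((fun f => MRhat f ω) '' Rhat e ω) (MCRhatP e ω))
    (hMCRhatM : ∀ e ω, IsLeast ((fun f => MRhat f ω) '' Rhat e ω) (MCRhatM e ω))
    -- Assumptions 1, 2, 3 for `f₊` and `f₋`
    (hA1p : ∀ z, L fplus z ≤ Bind) (hA1m : ∀ z, L fminus z ≤ Bind)
    (hA2p : ∀ z, |L fplus z - L fref z| ≤ Bref)
    (hA2m : ∀ z, |L fminus z - L fref z| ≤ Bref)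
    (hA3p : ∀ᵐ ω ∂P, borig ≤ ehatorig fplus ω ∧ ehatswitch fplus ω ≤ Bswitch)
    (hA3m : ∀ᵐ ω ∂P, borig ≤ ehatorig fminus ω ∧ ehatswitch fminus ω ≤ Bswitch)
    -- `ε₂` and `Q₂`
    (ε₂ Q₂ : ℝ)
    (hε₂ : ε₂ = 2 * Bref * Real.sqrt (Real.log (6 / δ) / (2 * n)))
    (hQ₂ : Q₂ = Bswitch / borig -
      (Bswitch - Bind * Real.sqrt (Real.log (12 / δ) / n)) /
        (borig + Bind * Real.sqrt (Real.log (12 / δ) / (2 * n)))) :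
    ENNReal.ofReal (1 - δ) ≤
      P {ω | MR fstar ∈ Set.Icc (MCRhatM ε₂ ω - Q₂) (MCRhatP ε₂ ω + Q₂)} := by
  classical
  obtain ⟨hδ0, hδ1⟩ := hδ
  have hn' : (2 : ℝ) ≤ n := by exact_mod_cast hn
  have hnpos : (0 : ℝ) < n := by linarith
  subst hP
  set P := Measure.pi fun _ : Fin n => D with hPdef
  have hl12 : 0 ≤ Real.log (12 / δ) := Real.log_nonneg (by rw [le_div_iff₀ hδ0]; linarith)
  have hl6 : 0 ≤ Real.log (6 / δ) := Real.log_nonneg (by rw [le_div_iff₀ hδ0]; linarith)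
  set a := Bind * Real.sqrt (Real.log (12 / δ) / n) with ha
  set b := Bind * Real.sqrt (Real.log (12 / δ) / (2 * n)) with hb
  have hRF : ∀ f ∈ R 0, f ∈ F ∧ eorig f ≤ eorig fref := by
    intro f hf
    rw [hR] at hf
    rcases hf with rfl | ⟨h1, h2⟩
    · exact ⟨hfref, le_rfl⟩
    · exact ⟨h1, by linarith⟩
  have e12 : Real.exp (-Real.log (12 / δ)) = δ / 12 := by
    rw [Real.exp_neg, Real.exp_log (by positivity)]; field_simp
  have e6 : Real.exp (-Real.log (6 / δ)) = δ / 6 := by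
    rw [Real.exp_neg, Real.exp_log (by positivity)]; field_simp
  have toE : ∀ (S : Set (Fin n → 𝒴 × 𝒳1 × 𝒳2)) (r : ℝ), P.real S ≤ r →
      P S ≤ ENNReal.ofReal r := by
    intro S r h
    rw [← ofReal_measureReal]
    exact ENNReal.ofReal_le_ofReal h
  have hsw : ∀ f ω, ehatswitch f ω = (∑ s ∈ Finset.univ.offDiag,
      (fun q : (𝒴 × 𝒳1 × 𝒳2) × (𝒴 × 𝒳1 × 𝒳2) => L f (q.2.1, q.1.2.1, q.2.2.2))
        (ω s.1, ω s.2)) / ((n : ℝ) * ((n : ℝ) - 1)) := by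
    intro f ω
    rw [hehatswitch]
    congr 1
    exact (Finset.sum_finset_product (Finset.univ.offDiag : Finset (Fin n × Fin n))
      (Finset.univ : Finset (Fin n)) (fun i => Finset.univ.erase i) (by
        rintro ⟨i, j⟩
        simp [eq_comm])
      (f := fun s : Fin n × Fin n => L f ((ω s.2).1, (ω s.1).2.1, (ω s.2).2.2))).symm
  have claim : ∀ f ∈ R 0, (∀ z, L f z ≤ Bind) → (∀ z, |L f z - L fref z| ≤ Bref) →
      (∀ᵐ ω ∂P, borig ≤ ehatorig f ω ∧ ehatswitch f ω ≤ Bswitch) →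
      0 ≤ a ∧ 0 ≤ b ∧ 0 ≤ eswitch f ∧ (∀ ω, 0 ≤ ehatswitch f ω) ∧
      borig ≤ eorig f ∧ eswitch f ≤ Bswitch ∧
      P {ω | f ∉ Rhat ε₂ ω} ≤ ENNReal.ofReal (δ / 6) ∧
      P {ω | eorig f + b ≤ ehatorig f ω} ≤ ENNReal.ofReal (δ / 12) ∧
      P {ω | ehatorig f ω ≤ eorig f - b} ≤ ENNReal.ofReal (δ / 12) ∧
      P {ω | eswitch f + a ≤ ehatswitch f ω} ≤ ENNReal.ofReal (δ / 12) ∧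
      P {ω | ehatswitch f ω ≤ eswitch f - a} ≤ ENNReal.ofReal (δ / 12) := by
    intro f hf h1 h2 h3
    obtain ⟨hfF, hfle⟩ := hRF f hf
    have hm := hLmeas f hfF
    have hmk : Measurable (fun q : (𝒴 × 𝒳1 × 𝒳2) × (𝒴 × 𝒳1 × 𝒳2) =>
        L f (q.2.1, q.1.2.1, q.2.2.2)) := hm.comp (by fun_prop)
    have hmo : Measurable (ehatorig f) := by
      have : ehatorig f = fun ω => (∑ i, L f (ω i)) / n := funext (hehatorig f)
      rw [this]
      exact (Finset.measurable_sum _ fun i _ => hm.comp (measurable_pi_apply i)).div_const _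
    have hB : 0 < Bind := by
      obtain ⟨ω, hω, -⟩ := h3.exists
      rw [hehatorig, le_div_iff₀ hnpos] at hω
      by_contra hcon
      have : ∑ i, L f (ω i) ≤ 0 := Finset.sum_nonpos fun i _ => by
        have := h1 (ω i); linarith
      nlinarith
    have ha0 : 0 ≤ a := by positivity
    have hb0 : 0 ≤ b := by positivity
    have hs0 : ∀ ω, 0 ≤ ehatswitch f ω := by
      intro ω
      rw [hehatswitch]
      have : (0 : ℝ) < (n : ℝ) - 1 := by linarith
      exact div_nonneg (Finset.sum_nonneg fun i _ => Finset.sum_nonneg fun j _ => hL _ _)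
        (by positivity)
    have hio : ∫ ω, ehatorig f ω ∂P = eorig f := by
      simp_rw [hehatorig, heorig]
      exact mean_integral D hn (L f) hm (hL f) h1
    have his : ∫ ω, ehatswitch f ω ∂P = eswitch f := by
      simp_rw [hsw, heswitch]
      exact ustat_integral D hn _ hmk (fun _ => hL f _) (fun _ => h1 _)
    have hxa : (n : ℝ) * a ^ 2 / Bind ^ 2 = Real.log (12 / δ) := by
      rw [ha, mul_pow, Real.sq_sqrt (by positivity)]
      field_simp
    have hxb : 2 * (n : ℝ) * b ^ 2 / Bind ^ 2 = Real.log (12 / δ) := by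
      rw [hb, mul_pow, Real.sq_sqrt (by positivity)]
      field_simp
    refine ⟨ha0, hb0, ?_, hs0, ?_, ?_, ?_, ?_, ?_, ?_, ?_⟩
    · rw [heswitch]; exact integral_nonneg fun _ => hL _ _
    · rw [← hio]
      have : Integrable (ehatorig f) P := by
        refine integrable_bdd P hmo (B := Bind) (fun ω => ?_) (fun ω => ?_)
        · rw [hehatorig]; exact div_nonneg (Finset.sum_nonneg fun i _ => hL _ _) hnpos.le
        · rw [hehatorig, div_le_iff₀ hnpos]
          refine (Finset.sum_le_card_nsmul (Finset.univ : Finset (Fin n)) (fun i => L f (ω i)) Bind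
            fun i _ => h1 _).trans ?_
          simp [mul_comm]
      calc borig = ∫ _, borig ∂P := by simp
        _ ≤ _ := integral_mono_ae (integrable_const _) this (h3.mono fun ω h => h.1)
    · rw [← his]
      calc _ ≤ ∫ _, Bswitch ∂P :=
            integral_mono_of_nonneg (Filter.Eventually.of_forall hs0) (integrable_const _)
              (h3.mono fun ω h => h.2)
        _ = _ := by simp
    · have hBr : 0 ≤ Bref := by
        obtain ⟨ω, hω⟩ := h3.exists
        exact (abs_nonneg _).trans (h2 (ω ⟨0, by omega⟩))
      rcases hBr.eq_or_lt with h0 | hpos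
      · have : {ω | f ∉ Rhat ε₂ ω} = ∅ := by
          ext ω
          simp only [Set.mem_ofPred_eq, Set.mem_empty_iff_false, iff_false, not_not]
          rw [hRhat]
          right
          refine ⟨hfF, ?_⟩
          have : ∀ z, L f z = L fref z := fun z => by
            have := h2 z
            rw [← h0] at this
            have := abs_nonpos_iff.1 this
            linarith
          rw [hehatorig, hehatorig, hε₂, ← h0]
          simp [this]
        rw [this]; simp
      · have hmr := hLmeas fref hfref
        have hif : Integrable (L f) D := integrable_bdd D hm (hL f) h1
        have hir : Integrable (L fref) D := integrable_bdd D hmr (B := Bind + Bref) (hL fref)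
          (fun z => by have := abs_le.1 (h2 z); linarith [h1 z, this.1])
        have hε0 : 0 ≤ ε₂ := by rw [hε₂]; positivity
        have ht := mean_tail D hn (fun z => L f z - L fref z) (hm.sub hmr) (-Bref) Bref
          (by linarith) (fun z => abs_le.1 (h2 z)) ε₂ hε0
        have hx : 2 * (n : ℝ) * ε₂ ^ 2 / (Bref - -Bref) ^ 2 = Real.log (6 / δ) := by
          rw [hε₂, mul_pow, Real.sq_sqrt (by positivity)]
          field_simp
          ring
        rw [hx, e6] at ht
        refine (measure_mono ?_).trans (toE _ _ ht)
        intro ω hω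
        simp only [Set.mem_ofPred_eq] at hω ⊢
        rw [hRhat] at hω
        have hω2 : ehatorig fref ω + ε₂ < ehatorig f ω := by
          by_contra hcon
          exact hω (Or.inr ⟨hfF, not_lt.1 hcon⟩)
        rw [integral_sub hif hir, ← heorig, ← heorig, Finset.sum_sub_distrib, sub_div,
          ← hehatorig, ← hehatorig]
        linarith
    · have ht := mean_tail D hn (L f) hm 0 Bind hB (fun z => ⟨hL f z, h1 z⟩) b hb0
      rw [sub_zero, hxb, e12, ← heorig] at ht
      simp_rw [← hehatorig] at ht
      exact toE _ _ ht
    · have ht := mean_tail D hn (fun z => - L f z) hm.neg (-Bind) 0 (by linarith)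
        (fun z => ⟨neg_le_neg (h1 z), neg_nonpos.2 (hL f z)⟩) b hb0
      rw [sub_neg_eq_add, zero_add, hxb, e12, integral_neg, ← heorig] at ht
      simp_rw [Finset.sum_neg_distrib, neg_div, ← hehatorig] at ht
      refine (measure_mono ?_).trans (toE _ _ ht)
      intro ω hω
      simp only [Set.mem_ofPred_eq] at hω ⊢
      linarith
    · have ht := ustat_tail D hn _ hmk 0 Bind hB (fun z => ⟨hL f _, h1 _⟩) a ha0
      rw [sub_zero, hxa, e12, ← heswitch] at ht
      simp_rw [← hsw] at ht
      exact toE _ _ ht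
    · have ht := ustat_tail D hn _ hmk.neg (-Bind) 0 (by linarith)
        (fun z => ⟨neg_le_neg (h1 _), neg_nonpos.2 (hL f _)⟩) a ha0
      rw [sub_neg_eq_add, zero_add, hxa, e12] at ht
      refine (measure_mono ?_).trans (toE _ _ ht)
      intro ω hω
      simp only [Set.mem_ofPred_eq] at hω ⊢
      simp only [Pi.neg_apply]
      rw [integral_neg, ← heswitch, Finset.sum_neg_distrib, neg_div]
      have := hsw f ω
      simp only at this
      rw [← this]
      linarith
  obtain ⟨ha0, hb0, ps0, phs0, pbo, pbs, pM, pO, -, -, pS⟩ :=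
    claim fplus hfplus.1 hA1p hA2p hA3p
  obtain ⟨-, -, ms0, mhs0, mbo, mbs, mM, -, mO, mS, -⟩ :=
    claim fminus hfminus.1 hA1m hA2m hA3m
  have hstarR : fstar ∈ R 0 := by
    rw [hR]
    exact Or.inr ⟨hfstarF, by linarith [hfstar fref hfref]⟩
  set G := {ω | MR fstar ∈ Set.Icc (MCRhatM ε₂ ω - Q₂) (MCRhatP ε₂ ω + Q₂)} with hG
  have np := ae_iff.1 hA3p
  have nm := ae_iff.1 hA3m
  set S1 := {ω | fplus ∉ Rhat ε₂ ω}
  set S2 := {ω | eorig fplus + b ≤ ehatorig fplus ω}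
  set S3 := {ω | ehatswitch fplus ω ≤ eswitch fplus - a}
  set T1 := {ω | fminus ∉ Rhat ε₂ ω}
  set T2 := {ω | ehatorig fminus ω ≤ eorig fminus - b}
  set T3 := {ω | eswitch fminus + a ≤ ehatswitch fminus ω}
  set N1 := {ω | ¬ (borig ≤ ehatorig fplus ω ∧ ehatswitch fplus ω ≤ Bswitch)}
  set N2 := {ω | ¬ (borig ≤ ehatorig fminus ω ∧ ehatswitch fminus ω ≤ Bswitch)}
  have hcover : (Set.univ : Set (Fin n → 𝒴 × 𝒳1 × 𝒳2)) ⊆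
      G ∪ (S1 ∪ (S2 ∪ (S3 ∪ (T1 ∪ (T2 ∪ (T3 ∪ (N1 ∪ N2))))))) := by
    intro ω _
    by_contra hcon
    simp only [Set.mem_union, not_or] at hcon
    obtain ⟨hg, h1, h2, h3, h4, h5, h6, h7, h8⟩ := hcon
    simp only [S1, S2, S3, T1, T2, T3, N1, N2, Set.mem_ofPred_eq, not_not, not_le] at h1 h2 h3 h4 h5 h6 h7 h8
    apply hg
    have r1 := ratio_bound (o' := ehatorig fplus ω) hborig ha0 hb0 ps0 (phs0 ω) pbo
      (by linarith [h7.1]) pbs h3.le h2.le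
    have r2 := ratio_bound (o' := eorig fminus) (a := a) (b := b) hborig ha0 hb0 (mhs0 ω) ms0 h8.1
      (by linarith) h8.2 (by linarith) (by linarith)
    rw [← hQ₂, ← hMR, ← hMRhat] at r1
    rw [← hQ₂, ← hMR, ← hMRhat] at r2
    have u1 := (hMCRhatP ε₂ ω).2 ⟨fplus, h1, rfl⟩
    have u2 := (hMCRhatM ε₂ ω).2 ⟨fminus, h4, rfl⟩
    have v1 := hfplus.2 fstar hstarR
    have v2 := hfminus.2 fstar hstarR
    simp only at u1 u2
    exact ⟨by linarith, by linarith⟩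
  have hbad : P (S1 ∪ (S2 ∪ (S3 ∪ (T1 ∪ (T2 ∪ (T3 ∪ (N1 ∪ N2))))))) ≤ ENNReal.ofReal δ := by
    calc _ ≤ P S1 + (P S2 + (P S3 + (P T1 + (P T2 + (P T3 + (P N1 + P N2)))))) := by
          refine (measure_union_le _ _).trans (add_le_add le_rfl ?_)
          refine (measure_union_le _ _).trans (add_le_add le_rfl ?_)
          refine (measure_union_le _ _).trans (add_le_add le_rfl ?_)
          refine (measure_union_le _ _).trans (add_le_add le_rfl ?_)
          refine (measure_union_le _ _).trans (add_le_add le_rfl ?_)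
          refine (measure_union_le _ _).trans (add_le_add le_rfl ?_)
          exact measure_union_le _ _
      _ ≤ ENNReal.ofReal (δ / 6) + (ENNReal.ofReal (δ / 12) + (ENNReal.ofReal (δ / 12) +
          (ENNReal.ofReal (δ / 6) + (ENNReal.ofReal (δ / 12) + (ENNReal.ofReal (δ / 12) +
            (0 + 0)))))) := by
          rw [np, nm]
          gcongr
      _ ≤ _ := by
          rw [add_zero, add_zero]
          repeat rw [← ENNReal.ofReal_add (by positivity) (by positivity)]
          exact ENNReal.ofReal_le_ofReal (by linarith)
  have hone : 1 ≤ P G + ENNReal.ofReal δ := by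
    calc 1 = P Set.univ := by simp
      _ ≤ _ := measure_mono hcover
      _ ≤ _ := measure_union_le _ _
      _ ≤ _ := by gcongr
  rw [ENNReal.ofReal_sub _ hδ0.le, ENNReal.ofReal_one]
  exact tsub_le_iff_right.2 hone
end

section
/- If Assumptions 1 and 3 hold for every f ∈ ℱ, then for any r > 0 and δ ∈ (0,1), P( sup_{f∈ℱ} | MR̂(f) − MR(f) | > q(δ, r, n) ) ≤ δ. -/
open MeasureTheory

/-- Finner's inequality (equal weights). -/
theorem mr_finner {ι E Z : Type*} [Fintype ι] [DecidableEq ι] [Fintype E] [MeasurableSpace Z]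
    (D : Measure Z) [IsProbabilityMeasure D] (S : E → Finset ι) (d : ℕ) (hd0 : 0 < d)
    (hd : ∀ i, (Finset.univ.filter fun e => i ∈ S e).card = d) (s : Finset ι) :
    ∀ (h : E → (ι → Z) → ENNReal), (∀ e, Measurable (h e)) →
    (∀ e i, i ∉ S e → ∀ x t, h e (Function.update x i t) = h e x) →
    ∀ x, (∫⋯∫⁻_s, (fun x => ∏ e, h e x ^ ((d : ℝ)⁻¹)) ∂(fun _ : ι => D)) x ≤
      ∏ e, ((∫⋯∫⁻_s, h e ∂(fun _ : ι => D)) x) ^ ((d : ℝ)⁻¹) := by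
  have hdR : (d : ℝ) ≠ 0 := by positivity
  induction s using Finset.induction with
  | empty => intro h _ _ x; simp
  | insert i s hi ih =>
    intro h hm hdep x
    have hupd : Measurable fun q : (ι → Z) × Z => Function.update q.1 i q.2 := by
      exact measurable_update'
    rw [lmarginal_insert' _ (by fun_prop) hi]
    have h1 : ∀ e, (∫⋯∫⁻_insert i s, h e ∂(fun _ : ι => D)) x =
        (∫⋯∫⁻_s, (fun x ↦ ∫⁻ t, h e (Function.update x i t) ∂D) ∂(fun _ : ι => D)) x := by
      intro e; rw [lmarginal_insert' _ (hm e) hi]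
    simp_rw [h1]
    refine le_trans (lmarginal_mono ?_ x) (ih (fun e x => ∫⁻ t, h e (Function.update x i t) ∂D)
      ?_ ?_ x)
    · intro y
      dsimp only
      calc ∫⁻ t, ∏ e, h e (Function.update y i t) ^ ((d : ℝ)⁻¹) ∂D
          = ∫⁻ t, (∏ e with i ∉ S e, h e y ^ ((d : ℝ)⁻¹)) *
              (∏ e with i ∈ S e, h e (Function.update y i t) ^ ((d : ℝ)⁻¹)) ∂D := by
            congr 1; ext t
            rw [← Finset.prod_filter_mul_prod_filter_not Finset.univ (fun e => i ∈ S e), mul_comm]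
            congr 1
            apply Finset.prod_congr rfl
            intro e he
            rw [hdep e i (by simpa using he)]
        _ = (∏ e with i ∉ S e, h e y ^ ((d : ℝ)⁻¹)) *
              ∫⁻ t, (∏ e with i ∈ S e, h e (Function.update y i t) ^ ((d : ℝ)⁻¹)) ∂D := by
            rw [lintegral_const_mul]
            apply Finset.measurable_prod
            intro e _
            exact ((hm e).comp (hupd.comp measurable_prodMk_left)).pow_const _
        _ ≤ (∏ e with i ∉ S e, h e y ^ ((d : ℝ)⁻¹)) *
              (∏ e with i ∈ S e, (∫⁻ t, h e (Function.update y i t) ∂D) ^ ((d : ℝ)⁻¹)) := by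
            gcongr
            refine ENNReal.lintegral_prod_norm_pow_le (p := fun _ => (d : ℝ)⁻¹)
              (f := fun e t => h e (Function.update y i t)) _ ?_ ?_ ?_
            · intro e _
              exact ((hm e).comp (hupd.comp measurable_prodMk_left)).aemeasurable
            · rw [Finset.sum_const, hd i]; simp [hdR]
            · intro e _; positivity
        _ = _ := by
            rw [← Finset.prod_filter_mul_prod_filter_not Finset.univ (fun e => i ∈ S e), mul_comm]
            congr 1
            apply Finset.prod_congr rfl
            intro e he
            simp_rw [hdep e i (by simpa using he)]
            simp
    · intro e
      exact Measurable.lintegral_prod_right' (f := fun q : (ι → Z) × Z =>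
        h e (Function.update q.1 i q.2)) ((hm e).comp hupd)
    · intro e j hj x t
      by_cases hij : i = j
      · subst hij; simp
      · congr 1; ext u
        rw [Function.update_comm (Ne.symm hij), hdep e j hj]

/-- Moment generating function bound. -/
theorem mr_mgf {ι E Z : Type*} [Fintype ι] [DecidableEq ι] [Fintype E] [Nonempty E]
    [MeasurableSpace Z]
    (D : Measure Z) [IsProbabilityMeasure D] (S : E → Finset ι) (d : ℕ) (hd0 : 0 < d)
    (hd : ∀ i, (Finset.univ.filter fun e => i ∈ S e).card = d)
    (a : E → (ι → Z) → Z) (ham : ∀ e, Measurable (a e))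
    (hdep : ∀ e i, i ∉ S e → ∀ x t, a e (Function.update x i t) = a e x)
    (ν : Measure Z) [IsProbabilityMeasure ν]
    (hlaw : ∀ e, (Measure.pi fun _ : ι => D).map (a e) = ν)
    (B : ℝ) (hB : 0 ≤ B) (φ : Z → ℝ) (hφm : Measurable φ) (hφ : ∀ z, φ z ∈ Set.Icc 0 B) (l : ℝ) :
    ∫⁻ ω, ENNReal.ofReal (Real.exp (l * ((∑ e, φ (a e ω)) / Fintype.card E - ∫ z, φ z ∂ν)))
      ∂(Measure.pi fun _ : ι => D) ≤
      ENNReal.ofReal (Real.exp (l ^ 2 * B ^ 2 / (8 * (Fintype.card E / d)))) := by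
  set m : ℝ := ∫ z, φ z ∂ν with hmdef
  have hE : (0 : ℝ) < Fintype.card E := by exact_mod_cast Fintype.card_pos
  have hdR : (0 : ℝ) < d := by exact_mod_cast hd0
  set u : ℝ := l * d / Fintype.card E with hu
  let k : Z → ENNReal := fun z => ENNReal.ofReal (Real.exp (u * (φ z - m)))
  have hk : Measurable k := by fun_prop
  have hint : ∫⁻ z, k z ∂ν ≤ ENNReal.ofReal (Real.exp (u ^ 2 * B ^ 2 / 8)) := by
    have hs := ProbabilityTheory.hasSubgaussianMGF_of_mem_Icc (μ := ν) (X := φ) (a := 0) (b := B)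
      hφm.aemeasurable (ae_of_all _ hφ)
    have h1 := hs.mgf_le u
    have h2 := hs.integrable_exp_mul u
    rw [← ofReal_integral_eq_lintegral_ofReal h2 (ae_of_all _ fun _ => (Real.exp_pos _).le)]
    apply ENNReal.ofReal_le_ofReal
    refine h1.trans (le_of_eq ?_)
    congr 1
    simp [abs_of_nonneg hB]
    ring
  have hF := mr_finner D S d hd0 hd Finset.univ (fun e ω => k (a e ω))
    (fun e => hk.comp (ham e)) (fun e i hi x t => by simp only [hdep e i hi])
  obtain ⟨x⟩ : Nonempty (ι → Z) := by
    have : Nonempty Z := D.nonempty_of_neZero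
    infer_instance
  have hF := hF x
  rw [lmarginal_univ] at hF
  simp only [lmarginal_univ] at hF
  have hlin : ∀ e, ∫⁻ ω, k (a e ω) ∂(Measure.pi fun _ : ι => D) = ∫⁻ z, k z ∂ν := by
    intro e
    rw [← hlaw e, lintegral_map hk (ham e)]
  simp only [hlin] at hF
  calc _ = ∫⁻ ω, ∏ e, k (a e ω) ^ ((d : ℝ)⁻¹) ∂(Measure.pi fun _ : ι => D) := by
        congr 1; ext ω
        have : ∀ e, k (a e ω) ^ ((d : ℝ)⁻¹) =
            ENNReal.ofReal (Real.exp ((u * (φ (a e ω) - m)) * (d : ℝ)⁻¹)) := by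
          intro e
          rw [ENNReal.ofReal_rpow_of_pos (Real.exp_pos _), ← Real.exp_mul]
        simp_rw [this]
        rw [← ENNReal.ofReal_prod_of_nonneg (fun _ _ => (Real.exp_pos _).le), ← Real.exp_sum]
        congr 2
        rw [← Finset.sum_mul, ← Finset.mul_sum, Finset.sum_sub_distrib]
        simp only [Finset.sum_const, Finset.card_univ, nsmul_eq_mul]
        rw [hu]; field_simp
    _ ≤ _ := hF
    _ ≤ ∏ e : E, (ENNReal.ofReal (Real.exp (u ^ 2 * B ^ 2 / 8))) ^ ((d : ℝ)⁻¹) := by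
        gcongr
    _ = _ := by
        rw [ENNReal.ofReal_rpow_of_pos (Real.exp_pos _), ← Real.exp_mul,
          ← ENNReal.ofReal_prod_of_nonneg (fun _ _ => (Real.exp_pos _).le), ← Real.exp_sum]
        congr 2
        simp only [Finset.sum_const, Finset.card_univ, nsmul_eq_mul]
        rw [hu]; field_simp

/-- One-sided tail. -/
theorem mr_tail1 {Ω : Type*} [MeasurableSpace Ω] (P : Measure Ω) (X : Ω → ℝ) (hX : Measurable X)
    (B M : ℝ) (hB : 0 < B) (hM : 0 < M)
    (h : ∀ l : ℝ, ∫⁻ ω, ENNReal.ofReal (Real.exp (l * X ω)) ∂P ≤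
      ENNReal.ofReal (Real.exp (l ^ 2 * B ^ 2 / (8 * M)))) (t : ℝ) (ht : 0 < t) :
    P {ω | t ≤ |X ω|} ≤ ENNReal.ofReal (2 * Real.exp (- (2 * M * t ^ 2 / B ^ 2))) := by
  have key : ∀ s : ℝ, (s = 1 ∨ s = -1) →
      P {ω | t ≤ s * X ω} ≤ ENNReal.ofReal (Real.exp (- (2 * M * t ^ 2 / B ^ 2))) := by
    intro s hs
    have hs2 : s ^ 2 = 1 := by rcases hs with rfl | rfl <;> norm_num
    set l : ℝ := 4 * M * t / B ^ 2 with hl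
    have hlp : 0 < l := by positivity
    have h1 := mul_meas_ge_le_lintegral (μ := P)
      (f := fun ω => ENNReal.ofReal (Real.exp (l * s * X ω))) (by fun_prop)
      (ENNReal.ofReal (Real.exp (l * t)))
    have h2 := h1.trans (h (l * s))
    have h3 : P {ω | t ≤ s * X ω} ≤ P {ω | ENNReal.ofReal (Real.exp (l * t)) ≤
        ENNReal.ofReal (Real.exp (l * s * X ω))} := by
      apply measure_mono
      intro ω hω
      apply ENNReal.ofReal_le_ofReal
      apply Real.exp_le_exp.2
      rw [mul_assoc]
      exact mul_le_mul_of_nonneg_left hω hlp.le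
    have h4 : ENNReal.ofReal (Real.exp (l * t)) * P {ω | t ≤ s * X ω} ≤
        ENNReal.ofReal (Real.exp (l * t)) *
          ENNReal.ofReal (Real.exp (- (2 * M * t ^ 2 / B ^ 2))) := by
      refine (mul_le_mul_right h3 _).trans (h2.trans (le_of_eq ?_))
      rw [← ENNReal.ofReal_mul (Real.exp_pos _).le, ← Real.exp_add]
      congr 2
      rw [mul_pow, hs2, hl]; field_simp; ring
    exact (ENNReal.mul_le_mul_iff_right (by simp [Real.exp_pos]) ENNReal.ofReal_ne_top).1 h4
  calc P {ω | t ≤ |X ω|} ≤ P ({ω | t ≤ 1 * X ω} ∪ {ω | t ≤ (-1) * X ω}) := by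
        apply measure_mono
        intro ω hω
        simp only [Set.mem_ofPred_eq, Set.mem_union] at *
        rcases le_abs.1 hω with h | h
        · left; linarith
        · right; linarith
    _ ≤ _ := measure_union_le _ _
    _ ≤ _ := add_le_add (key 1 (Or.inl rfl)) (key (-1) (Or.inr rfl))
    _ = _ := by rw [← ENNReal.ofReal_add (Real.exp_pos _).le (Real.exp_pos _).le]; ring_nf

/-- Using the cover on the mixture of two probability measures, the second one empirical. -/
theorem mr_cover {E Z H : Type*} [Fintype E] [Nonempty E] [MeasurableSpace Z]
    (L : H → Z → ℝ) (B s : ℝ) (G : Finset H) (f : H) (hfm : Measurable (L f))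
    (hf : ∀ z, L f z ∈ Set.Icc 0 B)
    (hG : ∀ g ∈ G, Measurable (L g) ∧ ∀ z, 0 ≤ L g z ∧ L g z ≤ B)
    (hc : ∀ D' : Measure Z, IsProbabilityMeasure D' → ∃ g ∈ G, (∫ z, |L f z - L g z| ∂D') ≤ s)
    (ν : Measure Z) [IsProbabilityMeasure ν] (a : E → Z) :
    ∃ g ∈ G, (∫ z, |L f z - L g z| ∂ν) + (∑ e, |L f (a e) - L g (a e)|) / Fintype.card E
      ≤ 2 * s := by
  let κ : ENNReal := (Fintype.card E : ENNReal)⁻¹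
  have hE : (0 : ℝ) < Fintype.card E := by exact_mod_cast Fintype.card_pos
  let μe : Measure Z := κ • ∑ e, Measure.dirac (a e)
  have hμe : IsProbabilityMeasure μe := ⟨by
    simp only [μe, κ, Measure.smul_apply, Measure.coe_finsetSum, Finset.sum_apply, measure_univ,
      Finset.sum_const, Finset.card_univ, nsmul_eq_mul, mul_one, smul_eq_mul]
    exact ENNReal.inv_mul_cancel (by simp) (by simp)⟩
  let D' : Measure Z := (2⁻¹ : ENNReal) • (ν + μe)
  have hD' : IsProbabilityMeasure D' := ⟨by
    simp only [D', Measure.smul_apply, Measure.add_apply, measure_univ, smul_eq_mul]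
    rw [one_add_one_eq_two]
    exact ENNReal.inv_mul_cancel (by simp) (by simp)⟩
  obtain ⟨g, hg, hle⟩ := hc D' hD'
  refine ⟨g, hg, ?_⟩
  have hm : Measurable fun z => |L f z - L g z| := (hfm.sub (hG g hg).1).abs
  have hb : ∀ z, ‖|L f z - L g z|‖ ≤ B := by
    intro z
    have h1 := hf z
    have h2 := (hG g hg).2 z
    rw [Real.norm_eq_abs, abs_abs, abs_le]
    constructor <;> linarith [h1.1, h1.2, h2.1, h2.2]
  have hi : ∀ (m : Measure Z) [IsFiniteMeasure m], Integrable (fun z => |L f z - L g z|) m := by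
    intro m _
    exact Integrable.of_bound hm.aestronglyMeasurable B (ae_of_all _ hb)
  have he : ∫ z, |L f z - L g z| ∂μe = (∑ e, |L f (a e) - L g (a e)|) / Fintype.card E := by
    simp only [μe, κ]
    rw [integral_smul_measure, integral_finsetSum_measure (fun e _ => hi _)]
    simp_rw [integral_dirac' _ _ hm.stronglyMeasurable]
    simp [div_eq_inv_mul]
  simp only [D'] at hle
  rw [integral_smul_measure, integral_add_measure (hi _) (hi _), he] at hle
  simp at hle
  linarith

/-- Uniform deviation bound. -/
theorem mr_unif {ι E Z H : Type*} [Fintype ι] [DecidableEq ι] [Fintype E] [Nonempty E]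
    [MeasurableSpace Z]
    (D : Measure Z) [IsProbabilityMeasure D] (S : E → Finset ι) (d : ℕ) (hd0 : 0 < d)
    (hd : ∀ i, (Finset.univ.filter fun e => i ∈ S e).card = d)
    (a : E → (ι → Z) → Z) (ham : ∀ e, Measurable (a e))
    (hdep : ∀ e i, i ∉ S e → ∀ x t, a e (Function.update x i t) = a e x)
    (ν : Measure Z) [IsProbabilityMeasure ν]
    (hlaw : ∀ e, (Measure.pi fun _ : ι => D).map (a e) = ν)
    (L : H → Z → ℝ) (B s δ M : ℝ) (hB : 0 < B) (hδ : δ ∈ Set.Ioo (0 : ℝ) 1)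
    (hM : M = Fintype.card E / d)
    (F : Set H) (hF : F.Nonempty) (hFm : ∀ f ∈ F, Measurable (L f))
    (hFb : ∀ f ∈ F, ∀ z, L f z ∈ Set.Icc 0 B) (G : Finset H)
    (hG : ∀ g ∈ G, Measurable (L g) ∧ ∀ z, 0 ≤ L g z ∧ L g z ≤ B)
    (hc : ∀ f ∈ F, ∀ D' : Measure Z, IsProbabilityMeasure D' →
      ∃ g ∈ G, (∫ z, |L f z - L g z| ∂D') ≤ s) :
    (Measure.pi fun _ : ι => D) {ω | ∃ f ∈ F,
      B * Real.sqrt (Real.log (4 * (G.card : ℝ) / δ) / (2 * M)) + 2 * s <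
        |(∑ e, L f (a e ω)) / Fintype.card E - ∫ z, L f z ∂ν|} ≤ ENNReal.ofReal (δ / 2) := by
  have hE : (0 : ℝ) < Fintype.card E := by exact_mod_cast Fintype.card_pos
  have hdR : (0 : ℝ) < d := by exact_mod_cast hd0
  have hMp : 0 < M := by rw [hM]; positivity
  have hNpos : 1 ≤ G.card := by
    obtain ⟨f, hf⟩ := hF
    obtain ⟨g, hg, _⟩ := hc f hf ν inferInstance
    exact Finset.card_pos.2 ⟨g, hg⟩
  have hNR : (1 : ℝ) ≤ G.card := by exact_mod_cast hNpos
  have hx : 1 < 4 * (G.card : ℝ) / δ := by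
    rw [lt_div_iff₀ hδ.1]; linarith [hδ.2]
  have hlog : 0 < Real.log (4 * (G.card : ℝ) / δ) := Real.log_pos hx
  set t : ℝ := B * Real.sqrt (Real.log (4 * (G.card : ℝ) / δ) / (2 * M)) with ht
  have htp : 0 < t := by positivity
  have hexp : Real.exp (- (2 * M * t ^ 2 / B ^ 2)) = δ / (4 * G.card) := by
    have : 2 * M * t ^ 2 / B ^ 2 = Real.log (4 * (G.card : ℝ) / δ) := by
      rw [ht, mul_pow, Real.sq_sqrt (by positivity)]; field_simp
    rw [this, Real.exp_neg, Real.exp_log (by linarith), inv_div]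
  calc _ ≤ (Measure.pi fun _ : ι => D) (⋃ g ∈ G, {ω | t ≤
        |(∑ e, L g (a e ω)) / Fintype.card E - ∫ z, L g z ∂ν|}) := by
        apply measure_mono
        rintro ω ⟨f, hf, hlt⟩
        obtain ⟨g, hg, hle⟩ := mr_cover L B s G f (hFm f hf) (hFb f hf) hG (hc f hf) ν
          (fun e => a e ω)
        simp only [Set.mem_iUnion, Set.mem_ofPred_eq]
        refine ⟨g, hg, ?_⟩
        have hif : Integrable (L f) ν := Integrable.of_mem_Icc 0 B (hFm f hf).aemeasurable
          (ae_of_all _ (hFb f hf))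
        have hig : Integrable (L g) ν := Integrable.of_mem_Icc 0 B (hG g hg).1.aemeasurable
          (ae_of_all _ (hG g hg).2)
        have h1 : |(∫ z, L f z ∂ν) - ∫ z, L g z ∂ν| ≤ ∫ z, |L f z - L g z| ∂ν := by
          rw [← integral_sub hif hig]; exact abs_integral_le_integral_abs
        have h2 : |(∑ e, L f (a e ω)) / Fintype.card E - (∑ e, L g (a e ω)) / Fintype.card E| ≤
            (∑ e, |L f (a e ω) - L g (a e ω)|) / Fintype.card E := by
          rw [← sub_div, abs_div, abs_of_pos hE, ← Finset.sum_sub_distrib]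
          gcongr
          exact Finset.abs_sum_le_sum_abs _ _
        have h3 := abs_le.1 h1
        have h4 := abs_le.1 h2
        by_contra hcon
        push Not at hcon
        have h5 := abs_lt.1 hcon
        have : |(∑ e, L f (a e ω)) / Fintype.card E - ∫ z, L f z ∂ν| ≤ t + 2 * s := by
          rw [abs_le]; constructor <;> linarith [h3.1, h3.2, h4.1, h4.2, h5.1, h5.2]
        linarith
    _ ≤ ∑ g ∈ G, (Measure.pi fun _ : ι => D) {ω | t ≤
        |(∑ e, L g (a e ω)) / Fintype.card E - ∫ z, L g z ∂ν|} := measure_biUnion_finset_le _ _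
    _ ≤ ∑ g ∈ G, ENNReal.ofReal (2 * (δ / (4 * G.card))) := by
        apply Finset.sum_le_sum
        intro g hg
        rw [← hexp]
        have hgm := (hG g hg).1
        refine mr_tail1 _ (fun ω => (∑ e, L g (a e ω)) / Fintype.card E - ∫ z, L g z ∂ν) ?_ B M
          hB hMp ?_ t htp
        · exact ((Finset.measurable_sum _ fun e _ => hgm.comp (ham e)).div_const _).sub_const _
        · intro l
          rw [hM]
          exact mr_mgf D S d hd0 hd a ham hdep ν hlaw B hB.le (L g) hgm (hG g hg).2 l
    _ = _ := by
        rw [Finset.sum_const, nsmul_eq_mul, ← ENNReal.ofReal_natCast, ← ENNReal.ofReal_mul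
          (by positivity)]
        congr 1
        field_simp; ring

/-- Almost sure properties hold, up to small errors, uniformly over the class. -/
theorem mr_ae {Ω E Z H : Type*} [Fintype E] [MeasurableSpace Ω] [MeasurableSpace Z]
    (P : Measure Ω) (a : E → Ω → Z)
    (L : H → Z → ℝ) (B s : ℝ) (hs : 0 < s)
    (F : Set H) (hFm : ∀ f ∈ F, Measurable (L f))
    (hFb : ∀ f ∈ F, ∀ z, L f z ∈ Set.Icc 0 B) (G : Finset H)
    (hG : ∀ g ∈ G, Measurable (L g) ∧ ∀ z, 0 ≤ L g z ∧ L g z ≤ B)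
    (hc : ∀ f ∈ F, ∀ D' : Measure Z, IsProbabilityMeasure D' →
      ∃ g ∈ G, (∫ z, |L f z - L g z| ∂D') ≤ s)
    (Q : H → Ω → Prop) (hQ : ∀ f ∈ F, ∀ᵐ ω ∂P, Q f ω) :
    ∀ᵐ ω ∂P, ∀ f ∈ F, ∃ ω', Q f ω' ∧ ∀ e, |L f (a e ω) - L f (a e ω')| ≤ 3 * s := by
  let κ : Ω → (E × G → ℤ) := fun ω p => ⌊L p.2 (a p.1 ω) / s⌋
  have h1 : ∀ᵐ ω ∂P, P (κ ⁻¹' {κ ω}) ≠ 0 := by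
    rw [ae_iff]
    have : {ω | ¬ P (κ ⁻¹' {κ ω}) ≠ 0} ⊆
        ⋃ c ∈ {c : E × G → ℤ | P (κ ⁻¹' {c}) = 0}, κ ⁻¹' {c} := by
      intro ω hω
      simp only [Set.mem_iUnion]
      exact ⟨κ ω, by simpa using hω, rfl⟩
    refine measure_mono_null this ?_
    rw [measure_biUnion_null_iff (Set.to_countable _)]
    intro c hc; exact hc
  filter_upwards [h1] with ω hω f hf
  have h2 : ∃ ω' ∈ κ ⁻¹' {κ ω}, Q f ω' := by
    by_contra hcon
    push Not at hcon
    exact hω (measure_mono_null (fun x hx => hcon x hx) (ae_iff.1 (hQ f hf)))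
  obtain ⟨ω', hκ, hq⟩ := h2
  refine ⟨ω', hq, fun e => ?_⟩
  obtain ⟨g, hg, hle⟩ := mr_cover L B s G f (hFm f hf) (hFb f hf) hG (hc f hf)
    (Measure.dirac (a e ω)) (fun _ : Unit => a e ω')
  have hm : Measurable fun z => |L f z - L g z| := ((hFm f hf).sub (hG g hg).1).abs
  rw [integral_dirac' _ _ hm.stronglyMeasurable] at hle
  simp at hle
  have h3 : ⌊L g (a e ω') / s⌋ = ⌊L g (a e ω) / s⌋ := congrFun hκ (e, ⟨g, hg⟩)
  have h4 := Int.abs_sub_lt_one_of_floor_eq_floor h3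
  rw [← sub_div, abs_div, abs_of_pos hs, div_lt_one hs] at h4
  have h5 := abs_lt.1 h4
  have h6 := abs_le.1 (le_refl |L f (a e ω) - L g (a e ω)|)
  have h7 := abs_le.1 (le_refl |L f (a e ω') - L g (a e ω')|)
  rw [abs_le]; constructor <;> linarith [h5.1, h5.2, h6.1, h6.2, h7.1, h7.2]

/-- The empirical mean is unbiased. -/
theorem mr_mean {Ω E Z : Type*} [Fintype E] [Nonempty E] [MeasurableSpace Ω] [MeasurableSpace Z]
    (P : Measure Ω) [IsProbabilityMeasure P] (a : E → Ω → Z) (ham : ∀ e, Measurable (a e))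
    (ν : Measure Z) (hlaw : ∀ e, P.map (a e) = ν)
    (φ : Z → ℝ) (hφ : Measurable φ) (B : ℝ) (hb : ∀ z, φ z ∈ Set.Icc 0 B) :
    Integrable (fun ω => (∑ e, φ (a e ω)) / Fintype.card E) P ∧
    ∫ ω, (∑ e, φ (a e ω)) / Fintype.card E ∂P = ∫ z, φ z ∂ν := by
  have hE : (0 : ℝ) < Fintype.card E := by exact_mod_cast Fintype.card_pos
  have hi : ∀ e, Integrable (fun ω => φ (a e ω)) P := fun e =>
    Integrable.of_mem_Icc 0 B (hφ.comp (ham e)).aemeasurable (ae_of_all _ fun ω => hb _)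
  refine ⟨(integrable_finsetSum _ fun e _ => hi e).div_const _, ?_⟩
  rw [integral_div, integral_finsetSum _ fun e _ => hi e]
  have : ∀ e, ∫ ω, φ (a e ω) ∂P = ∫ z, φ z ∂ν := by
    intro e
    rw [← hlaw e, integral_map (ham e).aemeasurable hφ.aestronglyMeasurable]
  simp_rw [this]
  simp

/-- The deterministic ratio bound. -/
theorem mr_ratio {b S A C s o s' o' : ℝ} (hb : 0 < b) (hC : 0 ≤ C) (hA : 0 ≤ A)
    (ho : b ≤ o) (hs0 : 0 ≤ s) (hs : s ≤ S) (ho' : 0 < o') (hs'0 : 0 ≤ s')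
    (h1 : s - A ≤ s') (h2 : o' ≤ o + C) :
    s / o - s' / o' ≤ S / b - (S - A) / (b + C) := by
  have hop : 0 < o := by linarith
  have e1 : (s - A) / (o + C) ≤ s' / o' := by
    calc (s - A) / (o + C) ≤ s' / (o + C) := by gcongr
      _ ≤ s' / o' := by gcongr
  have e2 : s / o - (s - A) / (o + C) ≤ S / b - (S - A) / (b + C) := by
    have k1 : ∀ x y : ℝ, 0 < y → x / y - (x - A) / (y + C) = (x * (1 / y - 1 / (y + C))) +
        A * (1 / (y + C)) := by
      intro x y hy; field_simp; ring
    rw [k1 s o hop, k1 S b hb]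
    have k2 : 1 / o - 1 / (o + C) ≤ 1 / b - 1 / (b + C) := by
      have k3 : ∀ y : ℝ, 0 < y → 1 / y - 1 / (y + C) = C / (y * (y + C)) := by
        intro y hy; field_simp; ring
      rw [k3 o hop, k3 b hb]
      gcongr
    have k4 : 0 ≤ 1 / o - 1 / (o + C) := by
      rw [sub_nonneg]; apply one_div_le_one_div_of_le hop; linarith
    have k5 : 1 / (o + C) ≤ 1 / (b + C) := by
      apply one_div_le_one_div_of_le <;> linarith
    gcongr
    linarith
  linarith

theorem mr_sum_offdiag {n : ℕ} {R : Type*} [AddCommMonoid R] (φ : Fin n → Fin n → R) :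
    ∑ e : {p : Fin n × Fin n // p.1 ≠ p.2}, φ e.1.1 e.1.2 =
      ∑ i, ∑ j ∈ Finset.univ.erase i, φ i j := by
  rw [← Finset.sum_subtype (Finset.univ.filter fun p : Fin n × Fin n => p.1 ≠ p.2) (by simp)
    (fun p => φ p.1 p.2), Finset.sum_filter, ← Finset.univ_product_univ, Finset.sum_product]
  apply Finset.sum_congr rfl
  intro i _
  rw [← Finset.sum_filter]
  apply Finset.sum_congr
  · ext j; simp [eq_comm]
  · simp

theorem mr_card_offdiag (n : ℕ) :
    Fintype.card {p : Fin n × Fin n // p.1 ≠ p.2} = n * (n - 1) := by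
  have h := mr_sum_offdiag (n := n) (fun _ _ => (1 : ℕ))
  simpa [Finset.card_erase_of_mem] using h

theorem mr_deg_offdiag (n : ℕ) (i : Fin n) :
    (Finset.univ.filter fun e : {p : Fin n × Fin n // p.1 ≠ p.2} =>
      i ∈ ({e.1.1, e.1.2} : Finset (Fin n))).card = 2 * (n - 1) := by
  rw [Finset.card_filter]
  have h0 : ∀ e : {p : Fin n × Fin n // p.1 ≠ p.2},
      (if i ∈ ({e.1.1, e.1.2} : Finset (Fin n)) then 1 else 0) =
      (if i = e.1.1 then 1 else 0) + (if i = e.1.2 then 1 else 0) := by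
    rintro ⟨⟨k, j⟩, hkj⟩
    have hkj' : k ≠ j := hkj
    simp only [Finset.mem_insert, Finset.mem_singleton]
    by_cases h1 : i = k
    · have h2 : i ≠ j := fun h => hkj' (h1.symm.trans h)
      simp [h1, hkj']
    · simp [h1]
  rw [Finset.sum_congr rfl fun e _ => h0 e]
  rw [mr_sum_offdiag (fun k j => (if i = k then 1 else 0) + (if i = j then 1 else 0))]
  simp only [Finset.sum_add_distrib]
  have h1 : ∑ k : Fin n, ∑ j ∈ Finset.univ.erase k, (if i = k then 1 else 0) = n - 1 := by
    simp [Finset.card_erase_of_mem]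
  have h2 : ∑ k : Fin n, ∑ j ∈ Finset.univ.erase k, (if i = j then 1 else 0) = n - 1 := by
    have : ∀ k : Fin n, ∑ j ∈ Finset.univ.erase k, (if i = j then 1 else 0) =
        if k ∈ Finset.univ.erase i then 1 else 0 := by
      intro k; rw [Finset.sum_ite_eq]; simp [eq_comm]
    simp_rw [this]
    rw [← Finset.card_filter]
    simp [Finset.filter_ne', Finset.card_erase_of_mem]
  rw [h1, h2]; ring

theorem mr_pair_law {n : ℕ} {Z : Type*} [MeasurableSpace Z] (D : Measure Z)
    [IsProbabilityMeasure D] (i j : Fin n) (hij : i ≠ j) :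
    (Measure.pi fun _ : Fin n => D).map (fun ω => (ω i, ω j)) = D.prod D := by
  have h1 := ProbabilityTheory.iIndepFun_pi (μ := fun _ : Fin n => D) (X := fun _ z => z)
    (fun _ => aemeasurable_id)
  have h2 := (h1.indepFun hij).map_prod_eq_prod_map_map (measurable_pi_apply i).aemeasurable
    (measurable_pi_apply j).aemeasurable
  rw [h2]
  congr 1
  · exact (measurePreserving_eval (fun _ : Fin n => D) i).map_eq
  · exact (measurePreserving_eval (fun _ : Fin n => D) j).map_eq

/-- Theorem 5 (uniform bound for empirical model reliance): if Assumptions 1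
and 3 hold for every `f ∈ ℱ`, then for any `r > 0` and `δ ∈ (0,1)`, the
probability that some `f ∈ ℱ` has `|MR̂(f) − MR(f)| > q(δ, r, n)` is at most
`δ`, where `q` is defined through the covering number `𝒩(ℱ, ·)` for
`r`-margin-expectation-covers. -/
theorem stmt_5 {𝒴 𝒳1 𝒳2 : Type*}
    [MeasurableSpace 𝒴] [MeasurableSpace 𝒳1] [MeasurableSpace 𝒳2]
    (D : Measure (𝒴 × 𝒳1 × 𝒳2)) [IsProbabilityMeasure D]
    (F : Set ((𝒳1 × 𝒳2) → 𝒴))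
    (L : ((𝒳1 × 𝒳2) → 𝒴) → (𝒴 × 𝒳1 × 𝒳2) → ℝ)
    (hL : ∀ f z, 0 ≤ L f z)
    (hLmeas : ∀ f ∈ F, Measurable (L f))
    (n : ℕ) (hn : 2 ≤ n)
    (Bind borig Bswitch : ℝ) (hborig : 0 < borig)
    (r δ : ℝ) (hr : 0 < r) (hδ : δ ∈ Set.Ioo (0 : ℝ) 1)
    -- population quantities
    (eorig eswitch : ((𝒳1 × 𝒳2) → 𝒴) → ℝ)
    (heorig : ∀ f, eorig f = ∫ z, L f z ∂D)
    (heswitch : ∀ f, eswitch f = ∫ q, L f (q.2.1, q.1.2.1, q.2.2.2) ∂(D.prod D))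
    (MR : ((𝒳1 × 𝒳2) → 𝒴) → ℝ) (hMR : ∀ f, MR f = eswitch f / eorig f)
    -- empirical quantities, over the i.i.d. sample measure `P = Dⁿ`
    (P : Measure (Fin n → 𝒴 × 𝒳1 × 𝒳2)) (hP : P = Measure.pi fun _ => D)
    (ehatorig ehatswitch : ((𝒳1 × 𝒳2) → 𝒴) → (Fin n → 𝒴 × 𝒳1 × 𝒳2) → ℝ)
    (hehatorig : ∀ f ω, ehatorig f ω = (∑ i, L f (ω i)) / n)
    (hehatswitch : ∀ f ω, ehatswitch f ω =
      (∑ i, ∑ j ∈ Finset.univ.erase i, L f ((ω j).1, (ω i).2.1, (ω j).2.2)) /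
        ((n : ℝ) * ((n : ℝ) - 1)))
    (MRhat : ((𝒳1 × 𝒳2) → 𝒴) → (Fin n → 𝒴 × 𝒳1 × 𝒳2) → ℝ)
    (hMRhat : ∀ f ω, MRhat f ω = ehatswitch f ω / ehatorig f ω)
    -- Assumptions 1 and 3 for every `f ∈ ℱ`
    (hA1 : ∀ f ∈ F, ∀ z, L f z ≤ Bind)
    (hA3 : ∀ f ∈ F, ∀ᵐ ω ∂P, borig ≤ ehatorig f ω ∧ ehatswitch f ω ≤ Bswitch)
    -- `𝒩(ℱ, s)`: the size of the smallest `s`-margin-expectation-cover of `ℱ`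
    (N : ℝ → ℕ)
    (hN : ∀ s : ℝ, 0 < s → IsLeast
      {m : ℕ | ∃ G : Finset ((𝒳1 × 𝒳2) → 𝒴), G.card = m ∧
        (∀ g ∈ G, Measurable (L g) ∧ ∀ z, 0 ≤ L g z ∧ L g z ≤ Bind) ∧
        ∀ f ∈ F, ∀ D' : Measure (𝒴 × 𝒳1 × 𝒳2), IsProbabilityMeasure D' →
          ∃ g ∈ G, (∫ z, |L f z - L g z| ∂D') ≤ s} (N s))
    -- `q(δ, r, n)`
    (qv : ℝ)
    (hqv : qv = Bswitch / borig -
      (Bswitch - (Bind * Real.sqrt (Real.log (4 * (N (r * Real.sqrt 2) : ℝ) / δ) / n)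
          + 2 * r * Real.sqrt 2)) /
        (borig + (Bind * Real.sqrt (Real.log (4 * (N r : ℝ) / δ) / (2 * n)) + 2 * r))) :
    P {ω | ∃ f ∈ F, qv < |MRhat f ω - MR f|} ≤ ENNReal.ofReal δ := by
  classical
  have hsq : 0 < r * Real.sqrt 2 := by positivity
  obtain ⟨⟨G₁, hG₁c, hG₁, hcov₁⟩, -⟩ := hN r hr
  obtain ⟨⟨G₂, hG₂c, hG₂, hcov₂⟩, -⟩ := hN _ hsq
  rcases F.eq_empty_or_nonempty with hFe | hFne
  · subst hFe; simp
  have hPprob : IsProbabilityMeasure P := by rw [hP]; infer_instance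
  have hFb : ∀ f ∈ F, ∀ z, L f z ∈ Set.Icc 0 Bind := fun f hf z => ⟨hL f z, hA1 f hf z⟩
  have hn0 : (0 : ℝ) < n := by exact_mod_cast (by omega : 0 < n)
  have hn1 : (0 : ℝ) < (n : ℝ) - 1 := by
    have : (2 : ℝ) ≤ n := by exact_mod_cast hn
    linarith
  haveI : Nonempty (Fin n) := ⟨⟨0, by omega⟩⟩
  -- the switched pairs
  let E := {p : Fin n × Fin n // p.1 ≠ p.2}
  haveI : Nonempty E := ⟨⟨(⟨0, by omega⟩, ⟨1, by omega⟩), by simp⟩⟩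
  let sw : (𝒴 × 𝒳1 × 𝒳2) × (𝒴 × 𝒳1 × 𝒳2) → 𝒴 × 𝒳1 × 𝒳2 := fun q => (q.2.1, q.1.2.1, q.2.2.2)
  have hsw : Measurable sw := by fun_prop
  let ao : Fin n → (Fin n → 𝒴 × 𝒳1 × 𝒳2) → 𝒴 × 𝒳1 × 𝒳2 := fun i ω => ω i
  let as : E → (Fin n → 𝒴 × 𝒳1 × 𝒳2) → 𝒴 × 𝒳1 × 𝒳2 := fun e ω => sw (ω e.1.1, ω e.1.2)
  have hao : ∀ e, Measurable (ao e) := fun e => measurable_pi_apply e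
  have has : ∀ e, Measurable (as e) := fun e =>
    hsw.comp ((measurable_pi_apply _).prodMk (measurable_pi_apply _))
  let ν : Measure (𝒴 × 𝒳1 × 𝒳2) := (D.prod D).map sw
  haveI : IsProbabilityMeasure ν := Measure.isProbabilityMeasure_map hsw.aemeasurable
  have hlo : ∀ e, (Measure.pi fun _ : Fin n => D).map (ao e) = D := fun e =>
    (measurePreserving_eval (fun _ : Fin n => D) e).map_eq
  have hls : ∀ e, (Measure.pi fun _ : Fin n => D).map (as e) = ν := by
    intro e
    have := mr_pair_law D e.1.1 e.1.2 e.2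
    simp only [ν]
    rw [← this, Measure.map_map hsw
      ((measurable_pi_apply _).prodMk (measurable_pi_apply _))]
    rfl
  have hcardE : (Fintype.card E : ℝ) = n * ((n : ℝ) - 1) := by
    have : Fintype.card E = n * (n - 1) := mr_card_offdiag n
    rw [this, Nat.cast_mul, Nat.cast_sub (by omega), Nat.cast_one]
  have hos : ∀ f ω, ehatorig f ω = (∑ e, L f (ao e ω)) / Fintype.card (Fin n) := by
    intro f ω; rw [hehatorig, Fintype.card_fin]
  have hss : ∀ f ω, ehatswitch f ω = (∑ e, L f (as e ω)) / Fintype.card E := by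
    intro f ω
    rw [hehatswitch, hcardE, ← mr_sum_offdiag
      (fun i j => L f ((ω j).1, (ω i).2.1, (ω j).2.2))]
  have heν : ∀ f ∈ F, eswitch f = ∫ z, L f z ∂ν := by
    intro f hf
    rw [heswitch, integral_map hsw.aemeasurable (hLmeas f hf).aestronglyMeasurable]
  have hos0 : ∀ f ω, 0 ≤ ehatorig f ω := fun f ω => by
    rw [hos]; exact div_nonneg (Finset.sum_nonneg fun _ _ => hL _ _) (by positivity)
  have hss0 : ∀ f ω, 0 ≤ ehatswitch f ω := fun f ω => by
    rw [hss]; exact div_nonneg (Finset.sum_nonneg fun _ _ => hL _ _) (by positivity)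
  -- population versions of Assumption 3
  have heo : ∀ f ∈ F, borig ≤ eorig f := by
    intro f hf
    obtain ⟨hi, hm⟩ := mr_mean P ao hao D (by rw [hP]; exact hlo) (L f) (hLmeas f hf) Bind
      (hFb f hf)
    rw [heorig, ← hm]
    have := integral_mono_ae (μ := P) (integrable_const borig) hi (by
      filter_upwards [hA3 f hf] with ω hω
      rw [← hos]; exact hω.1)
    simpa using this
  have hes : ∀ f ∈ F, eswitch f ≤ Bswitch := by
    intro f hf
    obtain ⟨hi, hm⟩ := mr_mean P as has ν (by rw [hP]; exact hls) (L f) (hLmeas f hf) Bind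
      (hFb f hf)
    rw [heν f hf, ← hm]
    have := integral_mono_ae (μ := P) hi (integrable_const Bswitch) (by
      filter_upwards [hA3 f hf] with ω hω
      rw [← hss]; exact hω.2)
    simpa using this
  have hes0 : ∀ f, 0 ≤ eswitch f := fun f => by
    rw [heswitch]; exact integral_nonneg fun _ => hL _ _
  have hBind : 0 < Bind := by
    obtain ⟨f, hf⟩ := hFne
    have h1 := heo f hf
    rw [heorig] at h1
    have h2 : ∫ z, L f z ∂D ≤ ∫ _, Bind ∂D := integral_mono
      (Integrable.of_mem_Icc 0 Bind (hLmeas f hf).aemeasurable (ae_of_all _ (hFb f hf)))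
      (integrable_const _) (hA1 f hf)
    simp at h2
    linarith
  -- Assumption 3 holds simultaneously for all models
  have hunif : ∀ᵐ ω ∂P, ∀ f ∈ F, borig ≤ ehatorig f ω ∧ ehatswitch f ω ≤ Bswitch := by
    have key : ∀ m : ℕ, ∀ᵐ ω ∂P, ∀ f ∈ F, borig - 3 * (1 / ((m : ℝ) + 1)) ≤ ehatorig f ω ∧
        ehatswitch f ω ≤ Bswitch + 3 * (1 / ((m : ℝ) + 1)) := by
      intro m
      have hs : 0 < 1 / ((m : ℝ) + 1) := by positivity
      obtain ⟨⟨G, -, hG, hcov⟩, -⟩ := hN _ hs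
      have h := mr_ae P (Sum.elim ao as) L Bind _ hs F hLmeas hFb G hG hcov
        (fun f ω => borig ≤ ehatorig f ω ∧ ehatswitch f ω ≤ Bswitch) hA3
      filter_upwards [h] with ω hω f hf
      obtain ⟨ω', ⟨q1, q2⟩, hcl⟩ := hω f hf
      set η : ℝ := 3 * (1 / ((m : ℝ) + 1))
      have hmean : ∀ {I : Type} [Fintype I] [Nonempty I] (x y : I → ℝ), (∀ e, x e ≤ y e + η) →
          (∑ e, x e) / Fintype.card I ≤ (∑ e, y e) / Fintype.card I + η := by
        intro I _ _ x y hxy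
        have hI : (0 : ℝ) < Fintype.card I := by exact_mod_cast Fintype.card_pos
        have : ∑ e, x e ≤ ∑ e, (y e + η) := Finset.sum_le_sum fun e _ => hxy e
        rw [Finset.sum_add_distrib, Finset.sum_const, Finset.card_univ, nsmul_eq_mul] at this
        rw [div_add' _ _ _ hI.ne', div_le_div_iff_of_pos_right hI]
        linarith
      constructor
      · have := hmean (fun e => L f (ao e ω')) (fun e => L f (ao e ω)) (fun e => by
          have := (abs_le.1 (hcl (Sum.inl e))).1
          simp only [Sum.elim_inl] at this
          linarith)
        rw [← hos, ← hos] at this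
        linarith
      · have := hmean (fun e => L f (as e ω)) (fun e => L f (as e ω')) (fun e => by
          have := (abs_le.1 (hcl (Sum.inr e))).2
          simp only [Sum.elim_inr] at this
          linarith)
        rw [← hss, ← hss] at this
        linarith
    filter_upwards [ae_all_iff.2 key] with ω hω f hf
    have hlim : Filter.Tendsto (fun m : ℕ => 3 * (1 / ((m : ℝ) + 1))) Filter.atTop (nhds 0) := by
      simpa using (tendsto_one_div_add_atTop_nhds_zero_nat (𝕜 := ℝ)).const_mul 3
    constructor
    · refine le_of_tendsto (f := fun m : ℕ => borig - 3 * (1 / ((m : ℝ) + 1))) (x := Filter.atTop)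
        (by simpa using tendsto_const_nhds.sub hlim) (Filter.Eventually.of_forall fun m => (hω m f hf).1)
    · refine ge_of_tendsto (f := fun m : ℕ => Bswitch + 3 * (1 / ((m : ℝ) + 1)))
        (x := Filter.atTop)
        (by simpa using tendsto_const_nhds.add hlim) (Filter.Eventually.of_forall fun m => (hω m f hf).2)
  -- the two uniform deviation bounds
  have hU1 := mr_unif D (fun i : Fin n => ({i} : Finset (Fin n))) 1 one_pos
    (fun i => by simp [Finset.filter_eq]) ao hao
    (fun e i hi x t => by
      simp only [Finset.mem_singleton] at hi
      simp only [ao]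
      exact Function.update_of_ne (Ne.symm hi) _ _)
    D hlo L Bind r δ n hBind hδ (by simp) F hFne hLmeas hFb G₁ hG₁ hcov₁
  have hU2 := mr_unif D (fun e : E => ({e.1.1, e.1.2} : Finset (Fin n))) (2 * (n - 1)) (by omega)
    (fun i => mr_deg_offdiag n i) as has
    (fun e i hi x t => by
      simp only [Finset.mem_insert, Finset.mem_singleton, not_or] at hi
      simp only [as]
      rw [Function.update_of_ne (Ne.symm hi.1), Function.update_of_ne (Ne.symm hi.2)])
    ν hls L Bind (r * Real.sqrt 2) δ (n / 2) hBind hδ (by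
      rw [hcardE, Nat.cast_mul, Nat.cast_sub (by omega)]
      push_cast
      field_simp) F hFne hLmeas hFb G₂ hG₂ hcov₂
  rw [← hP, hG₁c] at hU1
  rw [← hP, hG₂c, show 2 * ((n : ℝ) / 2) = n by ring, ← mul_assoc] at hU2
  set A : ℝ := Bind * Real.sqrt (Real.log (4 * (N (r * Real.sqrt 2) : ℝ) / δ) / n)
          + 2 * r * Real.sqrt 2 with hA
  set C : ℝ := Bind * Real.sqrt (Real.log (4 * (N r : ℝ) / δ) / (2 * n)) + 2 * r with hC
  have hA0 : 0 ≤ A := by positivity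
  have hC0 : 0 ≤ C := by positivity
  have hU3 := ae_iff.1 hunif
  calc P {ω | ∃ f ∈ F, qv < |MRhat f ω - MR f|} ≤ P (({ω | ∃ f ∈ F,
      C < |(∑ e, L f (ao e ω)) / Fintype.card (Fin n) - ∫ z, L f z ∂D|} ∪
      {ω | ∃ f ∈ F, A < |(∑ e, L f (as e ω)) / Fintype.card E - ∫ z, L f z ∂ν|}) ∪
      {ω | ¬ ∀ f ∈ F, borig ≤ ehatorig f ω ∧ ehatswitch f ω ≤ Bswitch}) := by
        apply measure_mono
        rintro ω ⟨f, hf, hlt⟩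
        by_contra hcon
        simp only [Set.mem_union, not_or, Set.mem_ofPred_eq, not_not, not_exists, not_and,
          not_lt] at hcon
        obtain ⟨⟨c1, c2⟩, c3⟩ := hcon
        have d1 := c1 f hf
        have d2 := c2 f hf
        obtain ⟨d3, d4⟩ := c3 f hf
        rw [← hos, ← heorig] at d1
        rw [← hss, ← heν f hf] at d2
        have d1' := abs_le.1 d1
        have d2' := abs_le.1 d2
        have p1 := heo f hf
        have p2 := hes f hf
        have r1 := mr_ratio (A := A) (C := C) hborig hC0 hA0 d3 (hss0 f ω) d4
          (hborig.trans_le p1) (hes0 f) (by linarith [d2'.2]) (by linarith [d1'.1])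
        have r2 := mr_ratio (A := A) (C := C) hborig hC0 hA0 p1 (hes0 f) p2
          (hborig.trans_le d3) (hss0 f ω) (by linarith [d2'.1]) (by linarith [d1'.2])
        have : |MRhat f ω - MR f| ≤ qv := by
          rw [hMRhat, hMR, hqv, abs_le]
          constructor <;> linarith
        linarith
    _ ≤ (ENNReal.ofReal (δ / 2) + ENNReal.ofReal (δ / 2)) + 0 :=
        (measure_union_le _ _).trans (add_le_add ((measure_union_le _ _).trans
          (add_le_add hU1 hU2)) hU3.le)
    _ = ENNReal.ofReal δ := by
        rw [add_zero, ← ENNReal.ofReal_add (by linarith [hδ.1]) (by linarith [hδ.1])]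
        congr 1; ring
end

section
/- Given ε ≥ 0, r > 0 and δ ∈ (0,1), if Assumptions 1, 2 and 3 hold for all f ∈ ℱ, then P( MCR₊(ε) < MCR̂₊(ε₃) − Q₃ ) ≤ δ and P( MCR₋(ε) > MCR̂₋(ε₃) + Q₃ ) ≤ δ, where ε₃ = ε − 2B_ref·√(log(4·𝒩(ℱ, r)/δ)/(2n)) − 2r and Q₃ = q(δ/2, r, n). -/
open MeasureTheory

namespace MCRAux

open ProbabilityTheory
open scoped ENNReal

variable {α : Type*} [MeasurableSpace α]

lemma cs_lintegral {β : Type*} [MeasurableSpace β] (μ : Measure β) {f g : β → ℝ≥0∞}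
    (hf : Measurable f) (hg : Measurable g) :
    (∫⁻ a, f a * g a ∂μ) ^ 2 ≤ (∫⁻ a, f a ^ 2 ∂μ) * ∫⁻ a, g a ^ 2 ∂μ := by
  have h := ENNReal.lintegral_mul_le_Lp_mul_Lq μ Real.HolderConjugate.two_two
    hf.aemeasurable hg.aemeasurable
  have h2 : ∀ x : ℝ≥0∞, (x ^ (1 / 2 : ℝ)) ^ 2 = x := fun x => by
    rw [← ENNReal.rpow_natCast, ← ENNReal.rpow_mul]; norm_num
  calc (∫⁻ a, f a * g a ∂μ) ^ 2 ≤ ((∫⁻ a, f a ^ (2:ℝ) ∂μ) ^ (1 / 2 : ℝ) *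
        (∫⁻ a, g a ^ (2:ℝ) ∂μ) ^ (1 / 2 : ℝ)) ^ 2 := by gcongr; exact h
    _ = _ := by
      rw [mul_pow, h2, h2]
      simp only [ENNReal.rpow_two]

lemma cs_lintegral' {β : Type*} [MeasurableSpace β] (μ : Measure β) {f g : β → ℝ≥0∞}
    (hf : Measurable f) (hg : Measurable g) {A B : ℝ≥0∞}
    (hA : ∫⁻ a, f a ^ 2 ∂μ ≤ A ^ 2) (hB : ∫⁻ a, g a ^ 2 ∂μ ≤ B ^ 2) :
    ∫⁻ a, f a * g a ∂μ ≤ A * B := by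
  have h := cs_lintegral μ hf hg
  have h3 : (∫⁻ a, f a * g a ∂μ) ^ 2 ≤ (A * B) ^ 2 := by
    rw [mul_pow]; exact h.trans (mul_le_mul' hA hB)
  exact (ENNReal.pow_le_pow_left_iff (by norm_num)).1 h3

/-- Composition of kernels: Hilbert-Schmidt norms are submultiplicative. -/
lemma hs_comp (D : Measure α) [IsProbabilityMeasure D] {u f : α × α → ℝ≥0∞}
    (hu : Measurable u) (hf : Measurable f) {A B : ℝ≥0∞}
    (hA : ∫⁻ p, u p ^ 2 ∂(D.prod D) ≤ A ^ 2) (hB : ∫⁻ p, f p ^ 2 ∂(D.prod D) ≤ B ^ 2) :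
    ∫⁻ p, (∫⁻ z, u (z, p.2) * f (z, p.1) ∂D) ^ 2 ∂(D.prod D) ≤ (A * B) ^ 2 := by
  have hm1 : Measurable fun y => ∫⁻ z, u (z, y) ^ 2 ∂D :=
    Measurable.lintegral_prod_left' (f := fun p : α × α => u p ^ 2) (by fun_prop)
  have hm2 : Measurable fun y => ∫⁻ z, f (z, y) ^ 2 ∂D :=
    Measurable.lintegral_prod_left' (f := fun p : α × α => f p ^ 2) (by fun_prop)
  calc ∫⁻ p, (∫⁻ z, u (z, p.2) * f (z, p.1) ∂D) ^ 2 ∂(D.prod D)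
      ≤ ∫⁻ p, (∫⁻ z, f (z, p.1) ^ 2 ∂D) * (∫⁻ z, u (z, p.2) ^ 2 ∂D) ∂(D.prod D) := by
        apply lintegral_mono
        intro p
        beta_reduce
        rw [mul_comm (∫⁻ z, f (z, p.1) ^ 2 ∂D)]
        exact cs_lintegral D (by fun_prop) (by fun_prop)
    _ = (∫⁻ y, ∫⁻ z, f (z, y) ^ 2 ∂D ∂D) * (∫⁻ y, ∫⁻ z, u (z, y) ^ 2 ∂D ∂D) :=
        lintegral_prod_mul hm2.aemeasurable hm1.aemeasurable
    _ = (∫⁻ p, f p ^ 2 ∂(D.prod D)) * (∫⁻ p, u p ^ 2 ∂(D.prod D)) := by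
        rw [lintegral_prod_symm' _ (by fun_prop), lintegral_prod_symm' _ (by fun_prop)]
    _ ≤ (A * B) ^ 2 := by
        rw [mul_comm, mul_pow]; exact mul_le_mul' hA hB

lemma lintegral_pi_succ (D : Measure α) [IsProbabilityMeasure D] (m : ℕ)
    (φ : (Fin (m + 1) → α) → ℝ≥0∞) (hφ : Measurable φ) :
    ∫⁻ x, φ x ∂(Measure.pi fun _ => D) =
      ∫⁻ y, ∫⁻ z, φ (Fin.cons z y) ∂D ∂(Measure.pi fun _ : Fin m => D) := by
  have := ((measurePreserving_piFinSuccAbove (fun _ : Fin (m+1) => D) 0).symm)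
  rw [← this.lintegral_comp hφ]
  rw [lintegral_prod_symm' (fun a => φ ((MeasurableEquiv.piFinSuccAbove (fun _ => α) 0).symm a))
    (hφ.comp (MeasurableEquiv.measurable _))]
  simp [MeasurableEquiv.piFinSuccAbove_symm_apply, Fin.insertNthEquiv]

lemma cycle_bound (D : Measure α) [IsProbabilityMeasure D] {f : α × α → ℝ≥0∞}
    (hf : Measurable f) {B : ℝ≥0∞} (hB : ∫⁻ p, f p ^ 2 ∂(D.prod D) ≤ B ^ 2) (m : ℕ) :
    ∀ (u : α × α → ℝ≥0∞) (_ : Measurable u) (A : ℝ≥0∞)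
      (_ : ∫⁻ p, u p ^ 2 ∂(D.prod D) ≤ A ^ 2),
    ∫⁻ x, u (x 0, x (Fin.last (m + 1))) * ∏ k : Fin (m + 1), f (x k.castSucc, x k.succ)
      ∂(Measure.pi fun _ : Fin (m + 2) => D) ≤ A * B ^ (m + 1) := by
  induction m with
  | zero =>
    intro u hu A hA
    rw [lintegral_pi_succ _ _ _ (by fun_prop)]
    have hmp := measurePreserving_funUnique D (Fin 1)
    have e1 : ∫⁻ y, ∫⁻ z, u ((Fin.cons z y : Fin 2 → α) 0, (Fin.cons z y : Fin 2 → α) (Fin.last 1))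
        * ∏ k : Fin 1, f ((Fin.cons z y : Fin 2 → α) k.castSucc, (Fin.cons z y : Fin 2 → α) k.succ) ∂D
          ∂(Measure.pi fun _ : Fin 1 => D)
        = ∫⁻ y, ∫⁻ z, u (z, y) * f (z, y) ∂D ∂D := by
      rw [← hmp.lintegral_comp (f := fun y => ∫⁻ z, u (z, y) * f (z, y) ∂D)
        (Measurable.lintegral_prod_left' (f := fun p : α × α => u p * f p) (by fun_prop))]
      apply lintegral_congr
      intro y
      apply lintegral_congr
      intro z
      rw [Fin.prod_univ_one]
      rfl
    refine (le_of_eq e1).trans ?_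
    rw [← lintegral_prod_symm' (fun p : α × α => u p * f p) (by fun_prop)]
    simpa using cs_lintegral' _ hu hf hA hB
  | succ m ih =>
    intro u hu A hA
    rw [lintegral_pi_succ _ _ _ (by fun_prop)]
    have hu' : Measurable fun p : α × α => ∫⁻ z, u (z, p.2) * f (z, p.1) ∂D :=
      Measurable.lintegral_prod_left'
        (f := fun q : α × (α × α) => u (q.1, q.2.2) * f (q.1, q.2.1)) (by fun_prop)
    refine le_trans (le_of_eq ?_) ((ih _ hu' (A * B) (hs_comp D hu hf hA hB)).trans
      (le_of_eq (by ring)))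
    apply lintegral_congr
    intro y
    rw [← lintegral_mul_const _ (by fun_prop)]
    apply lintegral_congr
    intro z
    rw [Fin.prod_univ_succ]
    simp only [Fin.castSucc_zero, Fin.cons_zero, Fin.cons_succ, ← Fin.succ_castSucc, ← Fin.succ_last]
    rw [mul_assoc]

end MCRAux

namespace MCRAux

open ProbabilityTheory
open scoped ENNReal

variable {α : Type*} [MeasurableSpace α]

/-- cyclic sum -/
def cyc {m : ℕ} (h : α × α → ℝ) (x : Fin (m + 2) → α) : ℝ :=
  h (x (Fin.last (m + 1)), x 0) + ∑ k : Fin (m + 1), h (x k.castSucc, x k.succ)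

lemma cyc_measurable {m : ℕ} {h : α × α → ℝ} (hh : Measurable h) :
    Measurable (cyc (m := m) h) := by
  unfold cyc
  fun_prop

lemma cyc_mgf (D : Measure α) [IsProbabilityMeasure D] {h : α × α → ℝ} (hh : Measurable h)
    {B : ℝ} (hB : ∀ p, h p ∈ Set.Icc 0 B) (m : ℕ) (t : ℝ) :
    ∫⁻ x, ENNReal.ofReal (Real.exp (t * (cyc h x - (m + 2) * ∫ p, h p ∂(D.prod D))))
      ∂(Measure.pi fun _ : Fin (m + 2) => D)
      ≤ ENNReal.ofReal (Real.exp (t ^ 2 * B ^ 2 * (m + 2) / 4)) := by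
  set s := ∫ p, h p ∂(D.prod D) with hs
  set f : α × α → ℝ≥0∞ := fun p => ENNReal.ofReal (Real.exp (t * (h p - s))) with hfdef
  have hf : Measurable f := by fun_prop
  set K : ℝ≥0∞ := ENNReal.ofReal (Real.exp (t ^ 2 * B ^ 2 / 4)) with hK
  have hsub := hasSubgaussianMGF_of_mem_Icc (μ := D.prod D) hh.aemeasurable
    (Filter.Eventually.of_forall hB)
  have hfK : ∫⁻ p, f p ^ 2 ∂(D.prod D) ≤ K ^ 2 := by
    have h1 : ∀ p, f p ^ 2 = ENNReal.ofReal (Real.exp ((2 * t) * (h p - s))) := by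
      intro p
      rw [hfdef]
      beta_reduce
      rw [← ENNReal.ofReal_pow (Real.exp_pos _).le, ← Real.exp_nat_mul]
      congr 2; push_cast; ring
    simp_rw [h1]
    rw [← ofReal_integral_eq_lintegral_ofReal (hsub.integrable_exp_mul (2 * t))
      (Filter.Eventually.of_forall fun _ => (Real.exp_pos _).le), hK,
      ← ENNReal.ofReal_pow (Real.exp_pos _).le, ← Real.exp_nat_mul]
    apply ENNReal.ofReal_le_ofReal
    refine (hsub.mgf_le (2 * t)).trans (le_of_eq ?_)
    congr 1
    simp
    rw [div_pow, sq_abs]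
    ring
  have huK : ∫⁻ p, (f p.swap) ^ 2 ∂(D.prod D) ≤ K ^ 2 := by
    rw [lintegral_prod_swap (fun p => f p ^ 2)]; exact hfK
  have := cycle_bound D hf hfK m (fun p => f p.swap) (by fun_prop) K huK
  refine le_trans (le_of_eq ?_) (this.trans (le_of_eq ?_))
  · apply lintegral_congr
    intro x
    simp only [hfdef, Prod.swap_prod_mk]
    rw [← ENNReal.ofReal_prod_of_nonneg (fun _ _ => (Real.exp_pos _).le),
      ← ENNReal.ofReal_mul (Real.exp_pos _).le, ← Real.exp_sum, ← Real.exp_add]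
    congr 2
    unfold cyc
    rw [← Finset.mul_sum, Finset.sum_sub_distrib]
    simp
    ring
  · rw [← pow_succ', hK, ← ENNReal.ofReal_pow (Real.exp_pos _).le, ← Real.exp_nat_mul]
    congr 2
    push_cast; ring

lemma perm_sum {n : ℕ} (φ : Fin n → Fin n → ℝ) (a b : Fin n) (hab : a ≠ b) :
    ((n : ℝ) * ((n : ℝ) - 1)) * ∑ σ : Equiv.Perm (Fin n), φ (σ a) (σ b) =
      (n.factorial : ℝ) * ∑ i, ∑ j ∈ Finset.univ.erase i, φ i j := by
  have key : ∀ a' b' : Fin n, a' ≠ b' → ∑ σ : Equiv.Perm (Fin n), φ (σ a') (σ b') =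
      ∑ σ : Equiv.Perm (Fin n), φ (σ a) (σ b) := by
    intro a' b' hab'
    obtain ⟨τ, h1, h2⟩ : ∃ τ : Equiv.Perm (Fin n), τ a = a' ∧ τ b = b' := by
      refine ⟨(Equiv.swap (Equiv.swap a a' b) b').trans (Equiv.refl _) * Equiv.swap a a', ?_, ?_⟩
      · have : a' ≠ Equiv.swap a a' b := by
          intro h
          have := congrArg (Equiv.swap a a') h
          simp at this
          exact hab this
        simp [Equiv.swap_apply_of_ne_of_ne this hab']
      · simp
    rw [← Equiv.sum_comp (Equiv.mulRight τ) (fun σ => φ (σ a) (σ b))]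
    simp [h1, h2]
  have h1 : ∑ i : Fin n, ∑ j ∈ Finset.univ.erase i, ∑ σ : Equiv.Perm (Fin n), φ (σ i) (σ j)
      = ((n : ℝ) * ((n : ℝ) - 1)) * ∑ σ : Equiv.Perm (Fin n), φ (σ a) (σ b) := by
    have : ∀ i : Fin n, ∑ j ∈ Finset.univ.erase i, ∑ σ : Equiv.Perm (Fin n), φ (σ i) (σ j)
        = ((n : ℝ) - 1) * ∑ σ : Equiv.Perm (Fin n), φ (σ a) (σ b) := by
      intro i
      rw [Finset.sum_congr rfl (fun j hj => key i j (Finset.ne_of_mem_erase hj).symm)]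
      rw [Finset.sum_const, Finset.card_erase_of_mem (Finset.mem_univ _), nsmul_eq_mul]
      have : 1 ≤ n := by have := a.isLt; omega
      simp [Nat.cast_sub this]
    simp_rw [this]
    simp; ring
  rw [← h1]
  have h2 : ∀ σ : Equiv.Perm (Fin n), ∑ i : Fin n, ∑ j ∈ Finset.univ.erase i, φ (σ i) (σ j)
      = ∑ i : Fin n, ∑ j ∈ Finset.univ.erase i, φ i j := by
    intro σ
    rw [← Equiv.sum_comp σ (fun i => ∑ j ∈ Finset.univ.erase i, φ i j)]
    apply Finset.sum_congr rfl
    intro i _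
    refine Finset.sum_bij (fun j _ => σ j) ?_ ?_ ?_ ?_
    · intro j hj; simpa using hj
    · intro _ _ _ _ h; exact σ.injective h
    · intro j hj; exact ⟨σ.symm j, by simp at hj ⊢; intro h; exact hj (by rw [← h]; simp), by simp⟩
    · intros; rfl
  calc ∑ i : Fin n, ∑ j ∈ Finset.univ.erase i, ∑ σ : Equiv.Perm (Fin n), φ (σ i) (σ j)
      = ∑ σ : Equiv.Perm (Fin n), ∑ i : Fin n, ∑ j ∈ Finset.univ.erase i, φ (σ i) (σ j) := by
        rw [Finset.sum_comm]
        apply Finset.sum_congr rfl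
        intro i _
        rw [Finset.sum_comm]
    _ = _ := by
      simp_rw [h2]
      rw [Finset.sum_const, nsmul_eq_mul, Finset.card_univ, Fintype.card_perm, Fintype.card_fin]

/-- The U-statistic. -/
noncomputable def ust {n : ℕ} (h : α × α → ℝ) (x : Fin n → α) : ℝ :=
  (∑ i, ∑ j ∈ Finset.univ.erase i, h (x i, x j)) / ((n : ℝ) * ((n : ℝ) - 1))

lemma ust_measurable {n : ℕ} {h : α × α → ℝ} (hh : Measurable h) :
    Measurable (ust (n := n) h) := by
  unfold ust
  fun_prop

lemma ust_eq_avg {m : ℕ} (h : α × α → ℝ) (x : Fin (m + 2) → α) :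
    ust h x = ∑ σ : Equiv.Perm (Fin (m + 2)), (((m + 2).factorial : ℝ))⁻¹ *
      (cyc h (x ∘ σ) / (m + 2)) := by
  have hn : (((m + 2 : ℕ) : ℝ) * (((m + 2 : ℕ) : ℝ) - 1)) ≠ 0 := by
    push_cast
    have : (0 : ℝ) ≤ m := Nat.cast_nonneg m
    have h1 : (0 : ℝ) < (m + 2) * (m + 2 - 1) := by nlinarith
    exact h1.ne'
  have hfac : ((m + 2).factorial : ℝ) ≠ 0 := by exact_mod_cast (Nat.factorial_pos _).ne'
  have key : ∀ a b : Fin (m + 2), a ≠ b →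
      ∑ σ : Equiv.Perm (Fin (m + 2)), h (x (σ a), x (σ b)) = ((m + 2).factorial : ℝ) * ust h x := by
    intro a b hab
    have := perm_sum (fun i j => h (x i, x j)) a b hab
    unfold ust
    rw [← mul_div_assoc, eq_div_iff hn, ← this]
    ring
  have h2 : ∑ σ : Equiv.Perm (Fin (m + 2)), cyc h (x ∘ σ) =
      (m + 2) * (((m + 2).factorial : ℝ) * ust h x) := by
    unfold cyc
    rw [Finset.sum_add_distrib, Finset.sum_comm]
    simp only [Function.comp]
    rw [key _ _ (by simp [Fin.ext_iff]),
      Finset.sum_congr rfl (fun k _ => key k.castSucc k.succ (by simp [Fin.ext_iff]))]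
    simp
    ring
  rw [← Finset.mul_sum, ← Finset.sum_div, h2]
  field_simp

lemma ust_mem {n : ℕ} (hn : 2 ≤ n) {h : α × α → ℝ} {B : ℝ} (hB : ∀ p, h p ∈ Set.Icc 0 B)
    (x : Fin n → α) : ust h x ∈ Set.Icc 0 B := by
  have hn' : (2 : ℝ) ≤ n := by exact_mod_cast hn
  have hpos : (0 : ℝ) < (n : ℝ) * ((n : ℝ) - 1) := by nlinarith
  constructor
  · unfold ust
    exact div_nonneg (Finset.sum_nonneg fun i _ => Finset.sum_nonneg fun j _ => (hB _).1) hpos.le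
  · unfold ust
    rw [div_le_iff₀ hpos]
    calc ∑ i, ∑ j ∈ Finset.univ.erase i, h (x i, x j)
        ≤ ∑ i : Fin n, ∑ j ∈ Finset.univ.erase i, B :=
          Finset.sum_le_sum fun i _ => Finset.sum_le_sum fun j _ => (hB _).2
      _ = _ := by
        simp [Finset.card_erase_of_mem, Nat.cast_sub (show 1 ≤ n by omega)]
        ring

lemma ust_subG (D : Measure α) [IsProbabilityMeasure D] {h : α × α → ℝ} (hh : Measurable h)
    {B : ℝ} (hB : ∀ p, h p ∈ Set.Icc 0 B) (n : ℕ) (hn : 2 ≤ n) :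
    HasSubgaussianMGF (fun x => ust h x - ∫ p, h p ∂(D.prod D))
      (Real.toNNReal (B ^ 2 / (2 * n))) (Measure.pi fun _ : Fin n => D) := by
  set s := ∫ p, h p ∂(D.prod D) with hs
  have hX : Measurable (fun x : Fin n → α => ust h x - s) := (ust_measurable hh).sub_const _
  refine ⟨fun t => integrable_exp_mul_of_mem_Icc (a := 0 - s) (b := B - s) hX.aemeasurable ?_,
    fun t => ?_⟩
  · refine Filter.Eventually.of_forall fun x => ?_
    have := ust_mem hn hB x
    exact ⟨by linarith [this.1], by linarith [this.2]⟩
  obtain ⟨m, rfl⟩ : ∃ m, n = m + 2 := ⟨n - 2, by omega⟩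
  set P : Measure (Fin (m + 2) → α) := Measure.pi fun _ => D with hP
  rw [Real.coe_toNNReal _ (by positivity)]
  unfold mgf
  rw [integral_eq_lintegral_of_nonneg_ae (Filter.Eventually.of_forall fun _ => (Real.exp_pos _).le)
    ((hX.const_mul t).exp.aestronglyMeasurable)]
  apply ENNReal.toReal_le_of_le_ofReal (Real.exp_pos _).le
  have hfac : (0 : ℝ) < ((m + 2).factorial : ℝ) := by exact_mod_cast Nat.factorial_pos _
  set c : ℝ := (((m + 2).factorial : ℝ))⁻¹ with hc
  have hc0 : 0 ≤ c := by positivity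
  have hsum : ∑ _σ : Equiv.Perm (Fin (m + 2)), c = 1 := by
    simp only [Finset.sum_const, nsmul_eq_mul, Finset.card_univ, Fintype.card_perm,
      Fintype.card_fin, hc]
    field_simp
  have hjen : ∀ x : Fin (m + 2) → α, Real.exp (t * (ust h x - s)) ≤
      ∑ σ : Equiv.Perm (Fin (m + 2)),
        c * Real.exp (t / (m + 2) * (cyc h (x ∘ σ) - (m + 2) * s)) := by
    intro x
    have h1 : t * (ust h x - s) = ∑ σ : Equiv.Perm (Fin (m + 2)),
        c • (t / (m + 2) * (cyc h (x ∘ σ) - (m + 2) * s)) := by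
      have h2 : s = ∑ _σ : Equiv.Perm (Fin (m + 2)), c * s := by
        rw [← Finset.sum_mul, hsum, one_mul]
      rw [ust_eq_avg, ← hc]
      nth_rewrite 1 [h2]
      rw [← Finset.sum_sub_distrib, Finset.mul_sum]
      apply Finset.sum_congr rfl
      intro σ _
      have : (m : ℝ) + 2 ≠ 0 := by positivity
      simp only [smul_eq_mul]
      field_simp
    rw [h1]
    have := convexOn_exp.map_sum_le (t := Finset.univ) (w := fun _ : Equiv.Perm (Fin (m + 2)) => c)
      (p := fun σ => t / (m + 2) * (cyc h (x ∘ σ) - (m + 2) * s)) (fun _ _ => hc0) hsum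
      (fun _ _ => Set.mem_univ _)
    simpa using this
  have hperm : ∀ σ : Equiv.Perm (Fin (m + 2)),
      MeasurePreserving (fun x : Fin (m + 2) → α => x ∘ σ) P P := by
    intro σ
    have := measurePreserving_arrowCongr' (fun _ : Fin (m + 2) => D) (fun _ : Fin (m + 2) => D)
      σ.symm (MeasurableEquiv.refl α) (fun _ => MeasurePreserving.id D)
    exact this
  have hcm := cyc_measurable (m := m) hh
  calc ∫⁻ x, ENNReal.ofReal (Real.exp (t * (ust h x - s))) ∂P
      ≤ ∫⁻ x, ∑ σ : Equiv.Perm (Fin (m + 2)), ENNReal.ofReal c *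
          ENNReal.ofReal (Real.exp (t / (m + 2) * (cyc h (x ∘ σ) - (m + 2) * s))) ∂P := by
        apply lintegral_mono
        intro x
        refine (ENNReal.ofReal_le_ofReal (hjen x)).trans (le_of_eq ?_)
        rw [ENNReal.ofReal_sum_of_nonneg (fun _ _ => by positivity)]
        simp_rw [ENNReal.ofReal_mul hc0]
    _ = ∑ σ : Equiv.Perm (Fin (m + 2)), ENNReal.ofReal c *
          ∫⁻ x, ENNReal.ofReal (Real.exp (t / (m + 2) * (cyc h x - (m + 2) * s))) ∂P := by
        rw [lintegral_finsetSum]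
        · apply Finset.sum_congr rfl
          intro σ _
          rw [lintegral_const_mul]
          · rw [← (hperm σ).lintegral_comp
              (f := fun x => ENNReal.ofReal (Real.exp (t / (m + 2) * (cyc h x - (m + 2) * s))))
              (by fun_prop)]
          · have := (hperm σ).measurable
            have := hcm.comp this
            simp only [Function.comp_def] at this ⊢
            fun_prop
        · intro σ _
          have := (hperm σ).measurable
          have := hcm.comp this
          simp only [Function.comp_def] at this ⊢
          fun_prop
    _ ≤ ∑ σ : Equiv.Perm (Fin (m + 2)), ENNReal.ofReal c *
          ENNReal.ofReal (Real.exp ((t / (m + 2)) ^ 2 * B ^ 2 * (m + 2) / 4)) := by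
        gcongr
        exact cyc_mgf D hh hB m _
    _ = ENNReal.ofReal (Real.exp ((t / (m + 2)) ^ 2 * B ^ 2 * (m + 2) / 4)) := by
        rw [← Finset.sum_mul, ← ENNReal.ofReal_sum_of_nonneg (fun _ _ => hc0), hsum]
        simp
    _ ≤ _ := by
        apply le_of_eq
        congr 2
        have : (m : ℝ) + 2 ≠ 0 := by positivity
        push_cast
        field_simp
        ring

/-- Generic tail bound. -/
lemma tail_of_subG {Ω : Type*} [MeasurableSpace Ω] {P : Measure Ω} [IsProbabilityMeasure P]
    {X : Ω → ℝ} {c : NNReal} {e M : ℝ} (hc : 0 < (c : ℝ)) (he : 0 ≤ e) (hM : 0 < M)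
    (h : HasSubgaussianMGF X c P) (heM : e ^ 2 = 2 * c * Real.log M) :
    P {ω | e < X ω} ≤ ENNReal.ofReal (1 / M) := by
  have h1 := h.measure_ge_le he
  have h2 : Real.exp (-e ^ 2 / (2 * c)) = 1 / M := by
    rw [heM, neg_div, mul_div_cancel_left₀ _ (by positivity), Real.exp_neg, Real.exp_log hM,
      one_div]
  rw [h2] at h1
  calc P {ω | e < X ω} ≤ P {ω | e ≤ X ω} :=
        measure_mono fun ω (hω : e < X ω) => show e ≤ X ω from hω.le
    _ ≤ ENNReal.ofReal (1 / M) := by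
      rw [← ofReal_measureReal]
      exact ENNReal.ofReal_le_ofReal h1

lemma ust_tail (D : Measure α) [IsProbabilityMeasure D] {h : α × α → ℝ} (hh : Measurable h)
    {B : ℝ} (hB : ∀ p, h p ∈ Set.Icc 0 B) (n : ℕ) (hn : 2 ≤ n) {M : ℝ} (hM : 1 ≤ M) :
    (Measure.pi fun _ : Fin n => D) {x | B * Real.sqrt (Real.log M / n) <
      ust h x - ∫ p, h p ∂(D.prod D)} ≤ ENNReal.ofReal (1 / M) ∧
    (Measure.pi fun _ : Fin n => D) {x | B * Real.sqrt (Real.log M / n) <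
      (∫ p, h p ∂(D.prod D)) - ust h x} ≤ ENNReal.ofReal (1 / M) := by
  have hlog := Real.log_nonneg hM
  have hn0 : (0 : ℝ) < n := by exact_mod_cast (by omega : 0 < n)
  have hne : Nonempty (α × α) := (D.prod D).nonempty_of_neZero
  have hB0 : 0 ≤ B := hne.elim fun p => (hB p).1.trans (hB p).2
  rcases hB0.eq_or_lt with rfl | hBpos
  · have h0 : ∀ p, h p = 0 := fun p => le_antisymm (hB p).2 (hB p).1
    simp [ust, h0]
  · have hsub := ust_subG D hh hB n hn
    have hc : ((Real.toNNReal (B ^ 2 / (2 * n)) : NNReal) : ℝ) = B ^ 2 / (2 * n) :=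
      Real.coe_toNNReal _ (by positivity)
    have hceq : (B * Real.sqrt (Real.log M / n)) ^ 2 =
        2 * ((Real.toNNReal (B ^ 2 / (2 * n)) : NNReal) : ℝ) * Real.log M := by
      rw [hc, mul_pow, Real.sq_sqrt (by positivity)]
      field_simp
    refine ⟨tail_of_subG (by rw [hc]; positivity) (by positivity) (by linarith) hsub hceq, ?_⟩
    have := tail_of_subG (by rw [hc]; positivity) (by positivity) (by linarith) hsub.neg hceq
    simpa using this

lemma mean_tail (D : Measure α) [IsProbabilityMeasure D] {ψ : α → ℝ} (hψ : Measurable ψ)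
    {a b : ℝ} (hab : ∀ p, ψ p ∈ Set.Icc a b) (n : ℕ) (hn : 2 ≤ n) {M : ℝ} (hM : 1 ≤ M) :
    (Measure.pi fun _ : Fin n => D) {x | (b - a) * Real.sqrt (Real.log M / (2 * n)) <
      (∑ i, ψ (x i)) / n - ∫ p, ψ p ∂D} ≤ ENNReal.ofReal (1 / M) ∧
    (Measure.pi fun _ : Fin n => D) {x | (b - a) * Real.sqrt (Real.log M / (2 * n)) <
      (∫ p, ψ p ∂D) - (∑ i, ψ (x i)) / n} ≤ ENNReal.ofReal (1 / M) := by
  have hlog := Real.log_nonneg hM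
  have hn0 : (0 : ℝ) < n := by exact_mod_cast (by omega : 0 < n)
  have hne : Nonempty α := D.nonempty_of_neZero
  have hB0 : a ≤ b := hne.elim fun p => (hab p).1.trans (hab p).2
  rcases hB0.eq_or_lt with rfl | hBpos
  · have h0 : ∀ p, ψ p = a := fun p => le_antisymm (hab p).2 (hab p).1
    simp [h0, hn0.ne']
  · set P := (Measure.pi fun _ : Fin n => D) with hP
    have hi : ∀ i : Fin n, HasSubgaussianMGF (fun x : Fin n → α => ψ (x i) - ∫ p, ψ p ∂D)
        ((‖b - a‖₊ / 2) ^ 2) P := by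
      intro i
      have h1 := hasSubgaussianMGF_of_mem_Icc (μ := P) (X := fun x : Fin n → α => ψ (x i))
        (a := a) (b := b) (hψ.comp (measurable_pi_apply i)).aemeasurable (Filter.Eventually.of_forall fun x => hab _)
      have h2 : ∫ x, ψ (x i) ∂P = ∫ p, ψ p ∂D :=
        integral_comp_eval (μ := fun _ : Fin n => D) (i := i) hψ.aestronglyMeasurable
      rwa [h2] at h1
    have hind : iIndepFun (fun (i : Fin n) (x : Fin n → α) => ψ (x i) - ∫ p, ψ p ∂D) P :=
      iIndepFun_pi (X := fun _ z => ψ z - ∫ p, ψ p ∂D) (fun i => by fun_prop)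
    have hsum := HasSubgaussianMGF.sum_of_iIndepFun hind (s := Finset.univ) (fun i _ => hi i)
    set c : NNReal := ∑ i : Fin n, (‖b - a‖₊ / 2) ^ 2 with hcdef
    have hc : (c : ℝ) = n * ((b - a) / 2) ^ 2 := by
      rw [hcdef]
      simp [div_pow]
    have hba : 0 < b - a := by linarith
    have hceq : (n * ((b - a) * Real.sqrt (Real.log M / (2 * n)))) ^ 2 =
        2 * c * Real.log M := by
      rw [hc, mul_pow, mul_pow, Real.sq_sqrt (by positivity)]
      field_simp
    have e1 : ∀ x : Fin n → α, ∑ i, (ψ (x i) - ∫ p, ψ p ∂D) =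
        n * ((∑ i, ψ (x i)) / n - ∫ p, ψ p ∂D) := by
      intro x
      rw [Finset.sum_sub_distrib]
      simp
      field_simp
    simp only [e1] at hsum
    constructor
    · have := tail_of_subG (by rw [hc]; positivity) (by positivity) (by linarith) hsum hceq
      refine le_trans (measure_mono ?_) this
      intro x hx
      exact mul_lt_mul_of_pos_left hx hn0
    · have := tail_of_subG (by rw [hc]; positivity) (by positivity) (by linarith) hsum.neg hceq
      refine le_trans (measure_mono ?_) this
      intro x hx
      have := mul_lt_mul_of_pos_left (show (b - a) * Real.sqrt (Real.log M / (2 * n)) <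
        (∫ p, ψ p ∂D) - (∑ i, ψ (x i)) / n from hx) hn0
      simp only [Set.mem_ofPred_eq, Pi.neg_apply]
      linarith

end MCRAux

namespace MCRAux

open ProbabilityTheory
open scoped ENNReal

variable {α : Type*} [MeasurableSpace α] {Φ : Type*}

/-- `G` is an `s`-cover of `F`. -/
def Cov (L : Φ → α → ℝ) (F : Set Φ) (B : ℝ) (G : Finset Φ) (s : ℝ) : Prop :=
  (∀ g ∈ G, Measurable (L g) ∧ ∀ z, 0 ≤ L g z ∧ L g z ≤ B) ∧
    ∀ f ∈ F, ∀ D' : Measure α, IsProbabilityMeasure D' →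
      ∃ g ∈ G, (∫ z, |L f z - L g z| ∂D') ≤ s

lemma integrable_of_bdd {μ : Measure α} [IsFiniteMeasure μ] {φ : α → ℝ} (hφ : Measurable φ)
    {a b : ℝ} (h : ∀ z, φ z ∈ Set.Icc a b) : Integrable φ μ :=
  Integrable.of_mem_Icc a b hφ.aemeasurable (Filter.Eventually.of_forall h)

lemma mix_cover {L : Φ → α → ℝ} {F : Set Φ} {B s : ℝ} {G : Finset Φ} (hG : Cov L F B G s)
    {f : Φ} (hf : f ∈ F) (hfm : Measurable (L f)) (hfb : ∀ z, L f z ∈ Set.Icc 0 B)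
    (μ : Measure α) [IsProbabilityMeasure μ] {κ : Type*} (S : Finset κ) (hS : S.Nonempty)
    (p : κ → α) :
    ∃ g ∈ G, (∫ z, |L f z - L g z| ∂μ) + (∑ k ∈ S, |L f (p k) - L g (p k)|) / S.card ≤ 2 * s := by
  have hcard : (0 : ℝ) < S.card := by exact_mod_cast hS.card_pos
  set ν : Measure α := ((S.card : ℝ≥0∞)⁻¹) • ∑ k ∈ S, Measure.dirac (p k) with hν
  have hνp : IsProbabilityMeasure ν := by
    constructor
    simp only [hν, Measure.smul_apply, Measure.finsetSum_apply, measure_univ, smul_eq_mul]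
    simp only [Finset.sum_const, nsmul_eq_mul, mul_one]
    exact ENNReal.inv_mul_cancel (by exact_mod_cast hS.card_pos.ne') (by simp)
  set D' : Measure α := (2⁻¹ : ℝ≥0∞) • μ + (2⁻¹ : ℝ≥0∞) • ν with hD'
  have hDp : IsProbabilityMeasure D' := by
    constructor
    simp [hD', ENNReal.inv_two_add_inv_two]
  obtain ⟨g, hg, hle⟩ := hG.2 f hf D' hDp
  refine ⟨g, hg, ?_⟩
  have hgm := (hG.1 g hg).1
  have hgb := (hG.1 g hg).2
  have hm : Measurable fun z => |L f z - L g z| := by fun_prop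
  have hb : ∀ z, |L f z - L g z| ∈ Set.Icc 0 B := fun z =>
    ⟨abs_nonneg _, abs_le.2 ⟨by linarith [(hfb z).1, (hgb z).2], by linarith [(hfb z).2, (hgb z).1]⟩⟩
  have hi : ∀ (μ : Measure α) [IsFiniteMeasure μ], Integrable (fun z => |L f z - L g z|) μ :=
    fun μ _ => integrable_of_bdd hm hb
  have hνi : ∫ z, |L f z - L g z| ∂ν = (∑ k ∈ S, |L f (p k) - L g (p k)|) / S.card := by
    rw [hν, integral_smul_measure, integral_finsetSum_measure (fun _ _ => hi _)]
    simp only [integral_dirac' _ _ hm.stronglyMeasurable]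
    simp
    ring
  rw [hD', integral_add_measure ((hi μ).smul_measure (by simp)) ((hi ν).smul_measure (by simp)),
    integral_smul_measure, integral_smul_measure, hνi] at hle
  simp at hle
  linarith

lemma transfer {L : Φ → α → ℝ} {f g : Φ} {s : ℝ}
    (μ : Measure α) [IsProbabilityMeasure μ] {κ : Type*} (S : Finset κ) (p : κ → α)
    (hle : (∫ z, |L f z - L g z| ∂μ) + (∑ k ∈ S, |L f (p k) - L g (p k)|) / S.card ≤ s)
    {φ ψ : α → ℝ} (hφ : Integrable φ μ) (hψ : Integrable ψ μ)
    (hL : Integrable (fun z => |L f z - L g z|) μ)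
    (hd : ∀ z, |φ z - ψ z| ≤ |L f z - L g z|) :
    |((∑ k ∈ S, φ (p k)) / S.card - ∫ z, φ z ∂μ) - ((∑ k ∈ S, ψ (p k)) / S.card - ∫ z, ψ z ∂μ)|
      ≤ s := by
  have h1 : |(∫ z, φ z ∂μ) - ∫ z, ψ z ∂μ| ≤ ∫ z, |L f z - L g z| ∂μ := by
    rw [← integral_sub hφ hψ]
    exact (abs_integral_le_integral_abs).trans (integral_mono (hφ.sub hψ).abs hL hd)
  have h2 : |(∑ k ∈ S, φ (p k)) / S.card - (∑ k ∈ S, ψ (p k)) / S.card| ≤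
      (∑ k ∈ S, |L f (p k) - L g (p k)|) / S.card := by
    rw [← sub_div, abs_div, Nat.abs_cast, ← Finset.sum_sub_distrib]
    gcongr
    exact (Finset.abs_sum_le_sum_abs _ _).trans (Finset.sum_le_sum fun k _ => hd _)
  have h3 := abs_le.1 h1
  have h4 := abs_le.1 h2
  exact abs_le.2 ⟨by linarith, by linarith⟩

lemma union_le {Ω : Type*} [MeasurableSpace Ω] {P : Measure Ω} {G : Finset Φ} {E : Set Ω}
    {A : Φ → Set Ω} {x : ℝ} (hE : ∀ ω ∈ E, ∃ g ∈ G, ω ∈ A g)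
    (hA : ∀ g ∈ G, P (A g) ≤ ENNReal.ofReal x) : P E ≤ ENNReal.ofReal (G.card * x) := by
  calc P E ≤ P (⋃ g ∈ G, A g) := measure_mono fun ω hω => by
        obtain ⟨g, hg, h⟩ := hE ω hω
        simp only [Set.mem_iUnion]; exact ⟨g, hg, h⟩
    _ ≤ ∑ g ∈ G, P (A g) := measure_biUnion_finset_le _ _
    _ ≤ ∑ g ∈ G, ENNReal.ofReal x := Finset.sum_le_sum hA
    _ = _ := by
      rw [Finset.sum_const, nsmul_eq_mul, ENNReal.ofReal_mul (by positivity), ENNReal.ofReal_natCast]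

lemma unif_mean {L : Φ → α → ℝ} {F : Set Φ} {B s : ℝ} {G : Finset Φ} (hG : Cov L F B G s)
    (hFm : ∀ f ∈ F, Measurable (L f)) (hFb : ∀ f ∈ F, ∀ z, L f z ∈ Set.Icc 0 B)
    (D : Measure α) [IsProbabilityMeasure D] {a b : ℝ} (φ ψ : Φ → α → ℝ)
    (hφ : ∀ f ∈ F, Integrable (φ f) D) (hψ : ∀ g ∈ G, Measurable (ψ g))
    (hψb : ∀ g ∈ G, ∀ z, ψ g z ∈ Set.Icc a b)
    (hd : ∀ f ∈ F, ∀ g ∈ G, ∀ z, |φ f z - ψ g z| ≤ |L f z - L g z|)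
    (n : ℕ) (hn : 2 ≤ n) {M : ℝ} (hM : 1 ≤ M) :
    (Measure.pi fun _ : Fin n => D) {x | ∃ f ∈ F,
        (b - a) * Real.sqrt (Real.log M / (2 * n)) + 2 * s < (∑ i, φ f (x i)) / n - ∫ p, φ f p ∂D}
      ≤ ENNReal.ofReal (G.card * (1 / M)) ∧
    (Measure.pi fun _ : Fin n => D) {x | ∃ f ∈ F,
        (b - a) * Real.sqrt (Real.log M / (2 * n)) + 2 * s < (∫ p, φ f p ∂D) - (∑ i, φ f (x i)) / n}
      ≤ ENNReal.ofReal (G.card * (1 / M)) := by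
  have key : ∀ x : Fin n → α, ∀ f ∈ F, ∃ g ∈ G,
      |((∑ i, φ f (x i)) / n - ∫ p, φ f p ∂D) - ((∑ i, ψ g (x i)) / n - ∫ p, ψ g p ∂D)| ≤ 2 * s := by
    intro x f hf
    have : Nonempty (Fin n) := ⟨⟨0, by omega⟩⟩
    obtain ⟨g, hg, hle⟩ := mix_cover hG hf (hFm f hf) (hFb f hf) D (Finset.univ : Finset (Fin n))
      Finset.univ_nonempty x
    refine ⟨g, hg, ?_⟩
    have := transfer D (Finset.univ : Finset (Fin n)) x hle (hφ f hf)
      (integrable_of_bdd (hψ g hg) (hψb g hg))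
      ((integrable_of_bdd (hFm f hf) (hFb f hf)).sub
        (integrable_of_bdd (hG.1 g hg).1 (hG.1 g hg).2)).abs (hd f hf g hg)
    simpa using this
  constructor
  · refine union_le ?_ fun g hg => (mean_tail D (hψ g hg) (hψb g hg) n hn hM).1
    rintro x ⟨f, hf, hlt⟩
    obtain ⟨g, hg, h⟩ := key x f hf
    refine ⟨g, hg, ?_⟩
    have := abs_le.1 h
    simp only [Set.mem_ofPred_eq]
    linarith
  · refine union_le ?_ fun g hg => (mean_tail D (hψ g hg) (hψb g hg) n hn hM).2
    rintro x ⟨f, hf, hlt⟩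
    obtain ⟨g, hg, h⟩ := key x f hf
    refine ⟨g, hg, ?_⟩
    have := abs_le.1 h
    simp only [Set.mem_ofPred_eq]
    linarith

lemma unif_ust {L : Φ → α → ℝ} {F : Set Φ} {B s : ℝ} {G : Finset Φ} (hG : Cov L F B G s)
    (hFm : ∀ f ∈ F, Measurable (L f)) (hFb : ∀ f ∈ F, ∀ z, L f z ∈ Set.Icc 0 B)
    (D : Measure α) [IsProbabilityMeasure D] (sw : α × α → α) (hsw : Measurable sw)
    (n : ℕ) (hn : 2 ≤ n) {M : ℝ} (hM : 1 ≤ M) :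
    (Measure.pi fun _ : Fin n => D) {x | ∃ f ∈ F,
        B * Real.sqrt (Real.log M / n) + 2 * s <
          ust (fun p => L f (sw p)) x - ∫ p, L f (sw p) ∂(D.prod D)}
      ≤ ENNReal.ofReal (G.card * (1 / M)) ∧
    (Measure.pi fun _ : Fin n => D) {x | ∃ f ∈ F,
        B * Real.sqrt (Real.log M / n) + 2 * s <
          (∫ p, L f (sw p) ∂(D.prod D)) - ust (fun p => L f (sw p)) x}
      ≤ ENNReal.ofReal (G.card * (1 / M)) := by
  set μ := (D.prod D).map sw with hμ
  have hμp : IsProbabilityMeasure μ := Measure.isProbabilityMeasure_map hsw.aemeasurable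
  set S : Finset ((_ : Fin n) × Fin n) := Finset.univ.sigma (fun i => Finset.univ.erase i) with hSdef
  have hcard : (S.card : ℝ) = (n : ℝ) * ((n : ℝ) - 1) := by
    rw [hSdef, Finset.card_sigma]
    simp [Finset.card_erase_of_mem, Nat.cast_sub (show 1 ≤ n by omega)]
  have hSne : S.Nonempty :=
    ⟨⟨⟨0, by omega⟩, ⟨1, by omega⟩⟩, by simp [hSdef, Fin.ext_iff]⟩
  have hust : ∀ (f : Φ) (x : Fin n → α), ust (fun p => L f (sw p)) x =
      (∑ k ∈ S, L f (sw (x k.1, x k.2))) / S.card := by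
    intro f x
    rw [ust, hcard, hSdef, Finset.sum_sigma]
  have hint : ∀ f : Φ, Measurable (L f) → ∫ p, L f (sw p) ∂(D.prod D) = ∫ z, L f z ∂μ := by
    intro f hf
    rw [hμ, integral_map hsw.aemeasurable hf.aestronglyMeasurable]
  have key : ∀ x : Fin n → α, ∀ f ∈ F, ∃ g ∈ G,
      |(ust (fun p => L f (sw p)) x - ∫ p, L f (sw p) ∂(D.prod D)) -
        (ust (fun p => L g (sw p)) x - ∫ p, L g (sw p) ∂(D.prod D))| ≤ 2 * s := by
    intro x f hf
    obtain ⟨g, hg, hle⟩ := mix_cover hG hf (hFm f hf) (hFb f hf) μ S hSne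
      (fun k => sw (x k.1, x k.2))
    refine ⟨g, hg, ?_⟩
    have h1 : Integrable (L f) μ := integrable_of_bdd (hFm f hf) (hFb f hf)
    have h2 : Integrable (L g) μ := integrable_of_bdd (hG.1 g hg).1 (hG.1 g hg).2
    have := transfer μ S _ hle h1 h2 (h1.sub h2).abs (fun z => le_rfl)
    rw [hust, hust, hint f (hFm f hf), hint g (hG.1 g hg).1]
    exact this
  have ht := fun g hg => ust_tail D (h := fun p => L g (sw p)) ((hG.1 g hg).1.comp hsw)
    (fun p => (hG.1 g hg).2 (sw p)) n hn hM
  constructor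
  · refine union_le ?_ fun g hg => (ht g hg).1
    rintro x ⟨f, hf, hlt⟩
    obtain ⟨g, hg, h⟩ := key x f hf
    refine ⟨g, hg, ?_⟩
    have := abs_le.1 h
    simp only [Set.mem_ofPred_eq]
    linarith
  · refine union_le ?_ fun g hg => (ht g hg).2
    rintro x ⟨f, hf, hlt⟩
    obtain ⟨g, hg, h⟩ := key x f hf
    refine ⟨g, hg, ?_⟩
    have := abs_le.1 h
    simp only [Set.mem_ofPred_eq]
    linarith

/-- A class with finite covers at all scales is totally bounded in sup norm. -/
lemma sup_dense {L : Φ → α → ℝ} {F : Set Φ} {B : ℝ}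
    (hcov : ∀ s : ℝ, 0 < s → ∃ G : Finset Φ, Cov L F B G s)
    (hFm : ∀ f ∈ F, Measurable (L f)) (hFb : ∀ f ∈ F, ∀ z, L f z ∈ Set.Icc 0 B)
    (τ : ℝ) (hτ : 0 < τ) :
    ∃ T ⊆ F, T.Finite ∧ ∀ f ∈ F, ∃ f' ∈ T, ∀ z, |L f z - L f' z| ≤ τ := by
  set η := τ / 7 with hη
  have hη0 : 0 < η := by positivity
  obtain ⟨G, hG⟩ := hcov η hη0
  have hfl : ∀ x y : ℝ, ⌊x / η⌋ = ⌊y / η⌋ → |x - y| ≤ η := by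
    intro x y h
    have := Int.abs_sub_lt_one_of_floor_eq_floor h
    rw [← sub_div, abs_div, abs_of_pos hη0, div_lt_one hη0] at this
    exact this.le
  have hflm : ∀ x : ℝ, x ∈ Set.Icc 0 B → ⌊x / η⌋ ∈ Set.Icc (0 : ℤ) ⌊B / η⌋ := by
    intro x hx
    refine ⟨Int.floor_nonneg.2 (div_nonneg hx.1 hη0.le), Int.floor_le_floor ?_⟩
    gcongr
    exact hx.2
  let key : α → (G → ℤ) := fun z g => ⌊L g z / η⌋
  have hkfin : (Set.range key).Finite := by
    refine (Set.Finite.pi (fun _ : G => Set.finite_Icc (0 : ℤ) ⌊B / η⌋)).subset ?_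
    rintro _ ⟨z, rfl⟩ g _
    exact hflm _ ((hG.1 g g.2).2 z)
  have hosc : ∀ f ∈ F, ∀ z z', key z = key z' → |L f z - L f z'| ≤ 3 * η := by
    intro f hf z z' hzz
    obtain ⟨g, hg, hle⟩ := mix_cover hG hf (hFm f hf) (hFb f hf) (Measure.dirac z)
      ({z'} : Finset α) (Finset.singleton_nonempty _) id
    have hm : Measurable fun z => |L f z - L g z| :=
      ((hFm f hf).sub (hG.1 g hg).1).abs
    rw [integral_dirac' _ _ hm.stronglyMeasurable] at hle
    simp at hle
    have h1 := hfl _ _ (congrFun hzz ⟨g, hg⟩)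
    simp only at h1
    have e : L f z - L f z' = (L f z - L g z) + (L g z - L g z') - (L f z' - L g z') := by ring
    rw [e]
    have h2 := abs_sub ((L f z - L g z) + (L g z - L g z')) (L f z' - L g z')
    have h3 := abs_add_le (L f z - L g z) (L g z - L g z')
    linarith
  have : Finite (Set.range key) := hkfin
  let rep : Set.range key → α := fun c => c.2.choose
  have hrep : ∀ c, key (rep c) = c := fun c => c.2.choose_spec
  let pat : Φ → (Set.range key → ℤ) := fun f c => ⌊L f (rep c) / η⌋
  have hpfin : (pat '' F).Finite := by
    refine (Set.Finite.pi (fun _ : Set.range key => Set.finite_Icc (0 : ℤ) ⌊B / η⌋)).subset ?_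
    rintro _ ⟨f, hf, rfl⟩ c _
    exact hflm _ (hFb f hf _)
  obtain ⟨T, hTF, hbij⟩ := Set.exists_subset_bijOn F pat
  refine ⟨T, hTF, hbij.finite_iff_finite.2 hpfin, ?_⟩
  intro f hf
  obtain ⟨f', hf', he⟩ := hbij.surjOn (Set.mem_image_of_mem pat hf)
  refine ⟨f', hf', fun z => ?_⟩
  set c : Set.range key := ⟨key z, z, rfl⟩ with hc
  have h1 := hosc f hf z (rep c) (hrep c).symm
  have h2 := hosc f' (hTF hf') z (rep c) (hrep c).symm
  have h3 : |L f' (rep c) - L f (rep c)| ≤ η := hfl _ _ (congrFun he c)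
  have h1' := abs_le.1 h1
  have h2' := abs_le.1 h2
  have h3' := abs_le.1 h3
  have : τ = 7 * η := by rw [hη]; ring
  exact abs_le.2 ⟨by linarith, by linarith⟩

lemma ae_all {L : Φ → α → ℝ} {F : Set Φ} {B : ℝ}
    (hcov : ∀ s : ℝ, 0 < s → ∃ G : Finset Φ, Cov L F B G s)
    (hFm : ∀ f ∈ F, Measurable (L f)) (hFb : ∀ f ∈ F, ∀ z, L f z ∈ Set.Icc 0 B)
    {Ω : Type*} [MeasurableSpace Ω] {P : Measure Ω} (X : Φ → Ω → ℝ) (c : ℝ)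
    (hX : ∀ f f' : Φ, ∀ τ : ℝ, (∀ z, |L f z - L f' z| ≤ τ) → ∀ ω, X f ω ≤ X f' ω + τ)
    (hc : ∀ f ∈ F, ∀ᵐ ω ∂P, X f ω ≤ c) : ∀ᵐ ω ∂P, ∀ f ∈ F, X f ω ≤ c := by
  have h := fun k : ℕ => sup_dense hcov hFm hFb (1 / ((k : ℝ) + 1)) (by positivity)
  choose T hTF hTfin hT using h
  have h1 : ∀ᵐ ω ∂P, ∀ k, ∀ f ∈ T k, X f ω ≤ c := by
    rw [ae_all_iff]
    intro k
    rw [ae_ball_iff (hTfin k).countable]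
    exact fun f hf => hc f (hTF k hf)
  filter_upwards [h1] with ω hω f hf
  apply le_of_forall_pos_le_add
  intro e he
  obtain ⟨k, hk⟩ := exists_nat_one_div_lt he
  obtain ⟨f', hf', hd⟩ := hT k f hf
  have := hX f f' _ hd ω
  have := hω k f' hf'
  linarith

end MCRAux

namespace MCRAux

open ProbabilityTheory
open scoped ENNReal

lemma ratio_bound {x y o p A C b Bs : ℝ} (hb : 0 < b) (hbp : b ≤ p) (hyB : y ≤ Bs) (hy : 0 ≤ y)
    (hx : 0 ≤ x) (ho : 0 < o) (hop : o ≤ p + C) (hyx : y - A ≤ x) (hA : 0 ≤ A) (hC : 0 ≤ C) :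
    y / p - x / o ≤ Bs / b - (Bs - A) / (b + C) := by
  have hp : 0 < p := lt_of_lt_of_le hb hbp
  have h1 : (y - A) / (p + C) ≤ x / o := by
    rcases le_or_gt (y - A) 0 with h | h
    · exact (div_nonpos_of_nonpos_of_nonneg h (by linarith)).trans (by positivity)
    · exact div_le_div₀ hx hyx ho hop
  have h2 : y / p - (y - A) / (p + C) = y * C / (p * (p + C)) + A / (p + C) := by
    have : p + C ≠ 0 := by positivity
    field_simp
    ring
  have h3 : Bs / b - (Bs - A) / (b + C) = Bs * C / (b * (b + C)) + A / (b + C) := by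
    have : b + C ≠ 0 := by positivity
    field_simp
    ring
  have h4 : y * C / (p * (p + C)) ≤ Bs * C / (b * (b + C)) := by
    have : 0 ≤ Bs := hy.trans hyB
    gcongr
  have h5 : A / (p + C) ≤ A / (b + C) := by gcongr
  linarith

variable {α : Type*} [MeasurableSpace α]

lemma integral_pair (D : Measure α) [IsProbabilityMeasure D] {n : ℕ} {i j : Fin n} (hij : i ≠ j)
    {h : α × α → ℝ} (hh : Measurable h) :
    ∫ x, h (x i, x j) ∂(Measure.pi fun _ : Fin n => D) = ∫ p, h p ∂(D.prod D) := by
  have hind : iIndepFun (fun (i : Fin n) (x : Fin n → α) => x i) (Measure.pi fun _ : Fin n => D) :=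
    iIndepFun_pi (X := fun _ z => z) (fun i => aemeasurable_id)
  have h1 := (indepFun_iff_map_prod_eq_prod_map_map
    (measurable_pi_apply i).aemeasurable (measurable_pi_apply j).aemeasurable).1
      (hind.indepFun hij)
  rw [(measurePreserving_eval (fun _ : Fin n => D) i).map_eq,
    (measurePreserving_eval (fun _ : Fin n => D) j).map_eq] at h1
  rw [← h1, integral_map (by fun_prop) hh.aestronglyMeasurable]

lemma integral_ust (D : Measure α) [IsProbabilityMeasure D] {n : ℕ} (hn : 2 ≤ n)
    {h : α × α → ℝ} (hh : Measurable h) {B : ℝ} (hB : ∀ p, h p ∈ Set.Icc 0 B) :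
    ∫ x, ust h x ∂(Measure.pi fun _ : Fin n => D) = ∫ p, h p ∂(D.prod D) := by
  have hn' : (2 : ℝ) ≤ n := by exact_mod_cast hn
  have hpos : (n : ℝ) * ((n : ℝ) - 1) ≠ 0 := by
    have : (0 : ℝ) < (n : ℝ) * ((n : ℝ) - 1) := by nlinarith
    exact this.ne'
  have hi : ∀ i j : Fin n, Integrable (fun x : Fin n → α => h (x i, x j))
      (Measure.pi fun _ : Fin n => D) := fun i j =>
    integrable_of_bdd (by fun_prop) (fun x => hB _)
  unfold ust
  rw [integral_div, integral_finsetSum _ (fun i _ => integrable_finsetSum _ (fun j _ => hi i j)),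
    div_eq_iff hpos]
  simp_rw [integral_finsetSum _ (fun j _ => hi _ j)]
  rw [Finset.sum_congr rfl fun i _ => Finset.sum_congr rfl fun j hj =>
    integral_pair D (Finset.ne_of_mem_erase hj).symm hh]
  simp [Finset.card_erase_of_mem, Nat.cast_sub (show 1 ≤ n by omega)]
  ring

lemma integral_mean (D : Measure α) [IsProbabilityMeasure D] {n : ℕ} (hn : 2 ≤ n)
    {ψ : α → ℝ} (hψ : Measurable ψ) {B : ℝ} (hB : ∀ p, ψ p ∈ Set.Icc 0 B) :
    ∫ x, (∑ i, ψ (x i)) / n ∂(Measure.pi fun _ : Fin n => D) = ∫ p, ψ p ∂D := by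
  have hn0 : (n : ℝ) ≠ 0 := by exact_mod_cast (by omega : n ≠ 0)
  rw [integral_div, integral_finsetSum _
    (fun i _ => integrable_of_bdd (by fun_prop) (fun x => hB _)), div_eq_iff hn0]
  rw [Finset.sum_congr rfl fun i _ =>
    integral_comp_eval (μ := fun _ : Fin n => D) (i := i) hψ.aestronglyMeasurable]
  simp
  ring

lemma clamp_close {b x y : ℝ} (hx : |x| ≤ b) : |x - max (-b) (min b y)| ≤ |x - y| := by
  have h := abs_le.1 hx
  rcases le_total b y with h1 | h1
  · rw [min_eq_left h1, max_eq_right (by linarith)]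
    rw [abs_of_nonpos (by linarith), abs_of_nonpos (by linarith)]; linarith
  · rw [min_eq_right h1]
    rcases le_total (-b) y with h2 | h2
    · rw [max_eq_right h2]
    · rw [max_eq_left h2, abs_of_nonneg (by linarith), abs_of_nonneg (by linarith)]; linarith

end MCRAux

/-- Theorem 6 (inner finite-sample bounds for model class reliance): if
Assumptions 1, 2, 3 hold for all `f ∈ ℱ`, then with probability at least
`1 − δ`, `MCR₊(ε) ≥ MCR̂₊(ε₃) − Q₃`, and with probability at least `1 − δ`,
`MCR₋(ε) ≤ MCR̂₋(ε₃) + Q₃`, where `ε₃ = ε − 2B_ref√(log(4𝒩(ℱ,r)/δ)/(2n)) − 2r`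
and `Q₃ = q(δ/2, r, n)`. -/
theorem stmt_6 {𝒴 𝒳1 𝒳2 : Type*}
    [MeasurableSpace 𝒴] [MeasurableSpace 𝒳1] [MeasurableSpace 𝒳2]
    (D : Measure (𝒴 × 𝒳1 × 𝒳2)) [IsProbabilityMeasure D]
    (F : Set ((𝒳1 × 𝒳2) → 𝒴))
    (L : ((𝒳1 × 𝒳2) → 𝒴) → (𝒴 × 𝒳1 × 𝒳2) → ℝ)
    (hL : ∀ f z, 0 ≤ L f z)
    (hLmeas : ∀ f ∈ F, Measurable (L f))
    (fref : (𝒳1 × 𝒳2) → 𝒴) (hfref : fref ∈ F)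
    (n : ℕ) (hn : 2 ≤ n)
    (Bind Bref borig Bswitch : ℝ) (hborig : 0 < borig)
    (ε r δ : ℝ) (hε : 0 ≤ ε) (hr : 0 < r) (hδ : δ ∈ Set.Ioo (0 : ℝ) 1)
    -- population quantities
    (eorig eswitch : ((𝒳1 × 𝒳2) → 𝒴) → ℝ)
    (heorig : ∀ f, eorig f = ∫ z, L f z ∂D)
    (heswitch : ∀ f, eswitch f = ∫ q, L f (q.2.1, q.1.2.1, q.2.2.2) ∂(D.prod D))
    (MR : ((𝒳1 × 𝒳2) → 𝒴) → ℝ) (hMR : ∀ f, MR f = eswitch f / eorig f)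
    (R : ℝ → Set ((𝒳1 × 𝒳2) → 𝒴))
    (hR : ∀ e, R e = insert fref {f ∈ F | eorig f ≤ eorig fref + e})
    -- empirical quantities, over the i.i.d. sample measure `P = Dⁿ`
    (P : Measure (Fin n → 𝒴 × 𝒳1 × 𝒳2)) (hP : P = Measure.pi fun _ => D)
    (ehatorig ehatswitch : ((𝒳1 × 𝒳2) → 𝒴) → (Fin n → 𝒴 × 𝒳1 × 𝒳2) → ℝ)
    (hehatorig : ∀ f ω, ehatorig f ω = (∑ i, L f (ω i)) / n)
    (hehatswitch : ∀ f ω, ehatswitch f ω =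
      (∑ i, ∑ j ∈ Finset.univ.erase i, L f ((ω j).1, (ω i).2.1, (ω j).2.2)) /
        ((n : ℝ) * ((n : ℝ) - 1)))
    (MRhat : ((𝒳1 × 𝒳2) → 𝒴) → (Fin n → 𝒴 × 𝒳1 × 𝒳2) → ℝ)
    (hMRhat : ∀ f ω, MRhat f ω = ehatswitch f ω / ehatorig f ω)
    -- empirical Rashomon sets, defined for any real `e` (possibly negative)
    (Rhat : ℝ → (Fin n → 𝒴 × 𝒳1 × 𝒳2) → Set ((𝒳1 × 𝒳2) → 𝒴))
    (hRhat : ∀ e ω, Rhat e ω =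
      insert fref {f ∈ F | ehatorig f ω ≤ ehatorig fref ω + e})
    -- `f₊,ε` and `f₋,ε` attain the highest and lowest model reliance on `R(ε)`
    (fplus fminus : (𝒳1 × 𝒳2) → 𝒴)
    (hfplus : fplus ∈ R ε ∧ ∀ f ∈ R ε, MR f ≤ MR fplus)
    (hfminus : fminus ∈ R ε ∧ ∀ f ∈ R ε, MR fminus ≤ MR f)
    -- the empirical MCR values `MCR̂₊(e)`, `MCR̂₋(e)`, assumed to be attained
    (MCRhatP MCRhatM : ℝ → (Fin n → 𝒴 × 𝒳1 × 𝒳2) → ℝ)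
    (hMCRhatP : ∀ e ω, IsGreatest ((fun f => MRhat f ω) '' Rhat e ω) (MCRhatP e ω))
    (hMCRhatM : ∀ e ω, IsLeast ((fun f => MRhat f ω) '' Rhat e ω) (MCRhatM e ω))
    -- Assumptions 1, 2, 3 for all `f ∈ ℱ`
    (hA1 : ∀ f ∈ F, ∀ z, L f z ≤ Bind)
    (hA2 : ∀ f ∈ F, ∀ z, |L f z - L fref z| ≤ Bref)
    (hA3 : ∀ f ∈ F, ∀ᵐ ω ∂P, borig ≤ ehatorig f ω ∧ ehatswitch f ω ≤ Bswitch)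
    -- `𝒩(ℱ, s)`: the size of the smallest `s`-margin-expectation-cover of `ℱ`
    (N : ℝ → ℕ)
    (hN : ∀ s : ℝ, 0 < s → IsLeast
      {m : ℕ | ∃ G : Finset ((𝒳1 × 𝒳2) → 𝒴), G.card = m ∧
        (∀ g ∈ G, Measurable (L g) ∧ ∀ z, 0 ≤ L g z ∧ L g z ≤ Bind) ∧
        ∀ f ∈ F, ∀ D' : Measure (𝒴 × 𝒳1 × 𝒳2), IsProbabilityMeasure D' →
          ∃ g ∈ G, (∫ z, |L f z - L g z| ∂D') ≤ s} (N s))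
    -- `ε₃` and `Q₃ = q(δ/2, r, n)`
    (ε₃ Q₃ : ℝ)
    (hε₃ : ε₃ = ε - 2 * Bref * Real.sqrt (Real.log (4 * (N r : ℝ) / δ) / (2 * n)) - 2 * r)
    (hQ₃ : Q₃ = Bswitch / borig -
      (Bswitch - (Bind * Real.sqrt (Real.log (4 * (N (r * Real.sqrt 2) : ℝ) / (δ / 2)) / n)
          + 2 * r * Real.sqrt 2)) /
        (borig + (Bind * Real.sqrt (Real.log (4 * (N r : ℝ) / (δ / 2)) / (2 * n)) + 2 * r))) :
    P {ω | MR fplus < MCRhatP ε₃ ω - Q₃} ≤ ENNReal.ofReal δ ∧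
    P {ω | MCRhatM ε₃ ω + Q₃ < MR fminus} ≤ ENNReal.ofReal δ := by
  classical
  subst hP
  obtain ⟨hδ0, hδ1⟩ := hδ
  have hn0 : (0 : ℝ) < n := by exact_mod_cast (by omega : 0 < n)
  have hFb : ∀ f ∈ F, ∀ z, L f z ∈ Set.Icc 0 Bind := fun f hf z => ⟨hL f z, hA1 f hf z⟩
  have hcov : ∀ s : ℝ, 0 < s → ∃ G : Finset ((𝒳1 × 𝒳2) → 𝒴),
      G.card = N s ∧ MCRAux.Cov L F Bind G s := by
    intro s hs
    obtain ⟨G, h1, h2, h3⟩ := (hN s hs).1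
    exact ⟨G, h1, h2, h3⟩
  have hne : Nonempty (𝒴 × 𝒳1 × 𝒳2) := D.nonempty_of_neZero
  have hN1 : ∀ s : ℝ, 0 < s → (1 : ℝ) ≤ N s := by
    intro s hs
    obtain ⟨G, h1, -, h3⟩ := hcov s hs
    obtain ⟨g, hg, -⟩ := h3 fref hfref D inferInstance
    have : 0 < G.card := Finset.card_pos.2 ⟨g, hg⟩
    rw [h1] at this
    exact_mod_cast this
  have hBind : 0 ≤ Bind := hne.elim fun z => (hL fref z).trans (hA1 fref hfref z)
  have hBref : 0 ≤ Bref := hne.elim fun z => (abs_nonneg _).trans (hA2 fref hfref z)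
  have hr2 : 0 < r * Real.sqrt 2 := by positivity
  obtain ⟨G1, hG1c, hG1⟩ := hcov r hr
  obtain ⟨G2, hG2c, hG2⟩ := hcov _ hr2
  have hNr := hN1 r hr
  have hNr2 := hN1 _ hr2
  let sw : (𝒴 × 𝒳1 × 𝒳2) × (𝒴 × 𝒳1 × 𝒳2) → 𝒴 × 𝒳1 × 𝒳2 := fun q => (q.2.1, q.1.2.1, q.2.2.2)
  have hsw : Measurable sw := by fun_prop
  have hsw_eq : ∀ f ω, ehatswitch f ω = MCRAux.ust (fun p => L f (sw p)) ω := fun f ω => by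
    rw [hehatswitch]; rfl
  have hes : ∀ f, eswitch f = ∫ p, L f (sw p) ∂(D.prod D) := fun f => heswitch f
  -- almost sure bounds, uniformly over the class
  have hcov' : ∀ s : ℝ, 0 < s → ∃ G : Finset ((𝒳1 × 𝒳2) → 𝒴), MCRAux.Cov L F Bind G s :=
    fun s hs => (hcov s hs).imp fun G h => h.2
  have hae1 : ∀ᵐ ω ∂(Measure.pi fun _ : Fin n => D), ∀ f ∈ F, -ehatorig f ω ≤ -borig := by
    refine MCRAux.ae_all hcov' hLmeas hFb (fun f ω => -ehatorig f ω) (-borig) ?_ ?_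
    · intro f f' τ hτ ω
      have : ehatorig f' ω ≤ ehatorig f ω + τ := by
        rw [hehatorig, hehatorig, div_add' _ _ _ hn0.ne']
        gcongr
        have h1 : ∑ i, L f' (ω i) ≤ ∑ i : Fin n, (L f (ω i) + τ) :=
          Finset.sum_le_sum fun i _ => by linarith [(abs_le.1 (hτ (ω i))).1]
        rw [Finset.sum_add_distrib] at h1
        simp at h1
        linarith
      linarith
    · intro f hf
      filter_upwards [hA3 f hf] with ω hω
      linarith [hω.1]
  have hae2 : ∀ᵐ ω ∂(Measure.pi fun _ : Fin n => D), ∀ f ∈ F, ehatswitch f ω ≤ Bswitch := by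
    refine MCRAux.ae_all hcov' hLmeas hFb ehatswitch Bswitch ?_ ?_
    · intro f f' τ hτ ω
      have hn' : (2 : ℝ) ≤ n := by exact_mod_cast hn
      have hpos : (0 : ℝ) < (n : ℝ) * ((n : ℝ) - 1) := by nlinarith
      rw [hehatswitch, hehatswitch, div_add' _ _ _ hpos.ne']
      gcongr
      have h1 : ∑ i, ∑ j ∈ Finset.univ.erase i, L f ((ω j).1, (ω i).2.1, (ω j).2.2) ≤
          ∑ i : Fin n, ∑ j ∈ Finset.univ.erase i, (L f' ((ω j).1, (ω i).2.1, (ω j).2.2) + τ) :=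
        Finset.sum_le_sum fun i _ => Finset.sum_le_sum fun j _ => by
          linarith [(abs_le.1 (hτ ((ω j).1, (ω i).2.1, (ω j).2.2))).2]
      have h2 : ∑ i : Fin n, ∑ j ∈ Finset.univ.erase i, τ = τ * ((n : ℝ) * ((n : ℝ) - 1)) := by
        simp [Finset.card_erase_of_mem, Nat.cast_sub (show 1 ≤ n by omega)]
        ring
      simp_rw [Finset.sum_add_distrib] at h1
      rw [h2] at h1
      exact h1
    · intro f hf
      filter_upwards [hA3 f hf] with ω hω using hω.2
  -- population bounds
  have hpo : ∀ f ∈ F, borig ≤ eorig f := by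
    intro f hf
    rw [heorig, ← MCRAux.integral_mean D hn (hLmeas f hf) (hFb f hf)]
    have h1 : ∫ _x, borig ∂(Measure.pi fun _ : Fin n => D) = borig := by simp
    rw [← h1]
    refine integral_mono_ae (integrable_const _) ?_ ?_
    · have hm := hLmeas f hf
      refine Integrable.div_const (integrable_finsetSum _ fun i _ => ?_) _
      exact MCRAux.integrable_of_bdd (by fun_prop) (fun x => hFb f hf _)
    · filter_upwards [hA3 f hf] with ω hω
      rw [← hehatorig]; exact hω.1
  have hps : ∀ f ∈ F, eswitch f ≤ Bswitch := by
    intro f hf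
    have hm : Measurable fun p => L f (sw p) := (hLmeas f hf).comp hsw
    rw [hes, ← MCRAux.integral_ust D hn hm (fun p => hFb f hf _)]
    have h1 : ∫ _x, Bswitch ∂(Measure.pi fun _ : Fin n => D) = Bswitch := by simp
    rw [← h1]
    refine integral_mono_ae ?_ (integrable_const _) ?_
    · exact MCRAux.integrable_of_bdd (MCRAux.ust_measurable hm)
        (fun x => MCRAux.ust_mem hn (fun p => hFb f hf _) x)
    · filter_upwards [hA3 f hf] with ω hω
      rw [← hsw_eq]; exact hω.2
  have hs0 : ∀ f, 0 ≤ eswitch f := fun f => by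
    rw [hes]; exact integral_nonneg fun p => hL _ _
  have hsh0 : ∀ f ∈ F, ∀ ω, 0 ≤ ehatswitch f ω := fun f hf ω => by
    rw [hsw_eq]
    exact (MCRAux.ust_mem hn (fun p => hFb f hf (sw p)) ω).1
  -- the three deviation events
  set A := Bind * Real.sqrt (Real.log (4 * (N (r * Real.sqrt 2) : ℝ) / (δ / 2)) / n)
          + 2 * r * Real.sqrt 2 with hA
  set C := Bind * Real.sqrt (Real.log (4 * (N r : ℝ) / (δ / 2)) / (2 * n)) + 2 * r with hC
  have hA0 : 0 ≤ A := by positivity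
  have hC0 : 0 ≤ C := by positivity
  have hM1 : 1 ≤ 4 * (N r : ℝ) / δ := by rw [le_div_iff₀ hδ0]; linarith
  have hM2 : 1 ≤ 4 * (N r : ℝ) / (δ / 2) := by rw [le_div_iff₀ (by positivity)]; linarith
  have hM3 : 1 ≤ 4 * (N (r * Real.sqrt 2) : ℝ) / (δ / 2) := by
    rw [le_div_iff₀ (by positivity)]; linarith
  have hE1 : (Measure.pi fun _ : Fin n => D) {ω | ∃ f ∈ F, ε - ε₃ <
      (eorig f - eorig fref) - (ehatorig f ω - ehatorig fref ω)} ≤ ENNReal.ofReal (δ / 4) := by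
    have h := (MCRAux.unif_mean hG1 hLmeas hFb D (a := -Bref) (b := Bref)
      (fun f z => L f z - L fref z) (fun g z => max (-Bref) (min Bref (L g z - L fref z)))
      (fun f hf => (MCRAux.integrable_of_bdd (hLmeas f hf) (hFb f hf)).sub
        (MCRAux.integrable_of_bdd (hLmeas fref hfref) (hFb fref hfref)))
      (fun g hg => measurable_const.max (measurable_const.min
        ((hG1.1 g hg).1.sub (hLmeas fref hfref))))
      (fun g hg z => ⟨le_max_left _ _, max_le (by linarith) (min_le_left _ _)⟩)
      (fun f hf g hg z => by
        have := MCRAux.clamp_close (y := L g z - L fref z) (hA2 f hf z)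
        simpa using this) n hn hM1).2
    refine (le_trans (measure_mono ?_) h).trans (le_of_eq ?_)
    · rintro ω ⟨f, hf, hlt⟩
      refine ⟨f, hf, ?_⟩
      rw [integral_sub (MCRAux.integrable_of_bdd (hLmeas f hf) (hFb f hf))
        (MCRAux.integrable_of_bdd (hLmeas fref hfref) (hFb fref hfref)), ← heorig, ← heorig,
        Finset.sum_sub_distrib, sub_div, ← hehatorig, ← hehatorig]
      rw [hε₃] at hlt
      linarith
    · rw [hG1c]
      congr 1
      field_simp
  have hE2 := MCRAux.unif_mean hG1 hLmeas hFb D (a := 0) (b := Bind) L L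
      (fun f hf => MCRAux.integrable_of_bdd (hLmeas f hf) (hFb f hf))
      (fun g hg => (hG1.1 g hg).1) (fun g hg z => (hG1.1 g hg).2 z)
      (fun f hf g hg z => le_rfl) n hn hM2
  have hE3 := MCRAux.unif_ust hG2 hLmeas hFb D sw hsw n hn hM3
  have hx2 : (G1.card : ℝ) * (1 / (4 * (N r : ℝ) / (δ / 2))) = δ / 8 := by
    rw [hG1c]; field_simp; norm_num
  have hx3 : (G2.card : ℝ) * (1 / (4 * (N (r * Real.sqrt 2) : ℝ) / (δ / 2))) = δ / 8 := by
    rw [hG2c]; field_simp; norm_num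
  rw [hx2] at hE2
  rw [hx3] at hE3
  simp only [← heorig, ← hehatorig, sub_zero, ← hC] at hE2
  have hA' : Bind * Real.sqrt (Real.log (4 * (N (r * Real.sqrt 2) : ℝ) / (δ / 2)) / n)
      + 2 * (r * Real.sqrt 2) = A := by rw [hA]; ring
  simp only [← hes, ← hsw_eq, hA'] at hE3
  obtain ⟨hE2a, hE2b⟩ := hE2
  obtain ⟨hE3a, hE3b⟩ := hE3
  -- union bound
  have hfinal : ∀ E U V W : Set (Fin n → 𝒴 × 𝒳1 × 𝒳2),
      (Measure.pi fun _ : Fin n => D) U ≤ ENNReal.ofReal (δ / 4) →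
      (Measure.pi fun _ : Fin n => D) V ≤ ENNReal.ofReal (δ / 8) →
      (Measure.pi fun _ : Fin n => D) W ≤ ENNReal.ofReal (δ / 8) →
      (∀ᵐ ω ∂(Measure.pi fun _ : Fin n => D), ω ∈ E → ω ∈ U ∪ V ∪ W) →
      (Measure.pi fun _ : Fin n => D) E ≤ ENNReal.ofReal δ := by
    intro E U V W hU hV hW hE
    calc (Measure.pi fun _ : Fin n => D) E
        ≤ (Measure.pi fun _ : Fin n => D) (U ∪ V ∪ W) := measure_mono_ae hE
      _ ≤ (Measure.pi fun _ : Fin n => D) U + (Measure.pi fun _ : Fin n => D) V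
          + (Measure.pi fun _ : Fin n => D) W :=
        (measure_union_le _ _).trans (add_le_add (measure_union_le _ _) le_rfl)
      _ ≤ ENNReal.ofReal (δ / 4) + ENNReal.ofReal (δ / 8) + ENNReal.ofReal (δ / 8) :=
        add_le_add (add_le_add hU hV) hW
      _ ≤ ENNReal.ofReal δ := by
        rw [← ENNReal.ofReal_add (by positivity) (by positivity),
          ← ENNReal.ofReal_add (by positivity) (by positivity)]
        exact ENNReal.ofReal_le_ofReal (by linarith)
  have hRh : ∀ ω, ∀ f ∈ Rhat ε₃ ω, f ∈ F ∧
      ((∃ f ∈ F, ε - ε₃ < (eorig f - eorig fref) - (ehatorig f ω - ehatorig fref ω)) ∨ f ∈ R ε) := by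
    intro ω f hf
    rw [hRhat] at hf
    rw [hR]
    rcases hf with rfl | ⟨hfF, hfe⟩
    · exact ⟨hfref, Or.inr (Set.mem_insert _ _)⟩
    · refine ⟨hfF, ?_⟩
      by_cases h : eorig f ≤ eorig fref + ε
      · exact Or.inr (Set.mem_insert_of_mem _ ⟨hfF, h⟩)
      · refine Or.inl ⟨f, hfF, ?_⟩
        push Not at h
        linarith
  constructor
  · refine hfinal _ _ _ _ hE1 hE2b hE3a ?_
    filter_upwards [hae1, hae2] with ω h1 h2 hω
    by_contra hcon
    simp only [Set.mem_union, not_or] at hcon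
    obtain ⟨⟨hU, hV⟩, hW⟩ := hcon
    obtain ⟨⟨f, hf, hfe⟩, -⟩ := hMCRhatP ε₃ ω
    obtain ⟨hfF, hfR⟩ := hRh ω f hf
    have hfR' := hfR.resolve_left hU
    have hV' : ¬ (C < eorig f - ehatorig f ω) := fun h => hV ⟨f, hfF, h⟩
    have hW' : ¬ (A < ehatswitch f ω - eswitch f) := fun h => hW ⟨f, hfF, h⟩
    have hb := h1 f hfF
    have hle := MCRAux.ratio_bound (x := eswitch f) (y := ehatswitch f ω) (o := eorig f)
      (p := ehatorig f ω) hborig (by linarith) (h2 f hfF) (hsh0 f hfF ω) (hs0 f)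
      (by linarith [hpo f hfF]) (by linarith) (by linarith) hA0 hC0
    rw [← hQ₃, ← hMR, ← hMRhat] at hle
    have hmax := hfplus.2 f hfR'
    have hω' : MR fplus < MCRhatP ε₃ ω - Q₃ := hω
    simp only at hfe
    linarith
  · refine hfinal _ _ _ _ hE1 hE2a hE3b ?_
    filter_upwards [hae1, hae2] with ω h1 h2 hω
    by_contra hcon
    simp only [Set.mem_union, not_or] at hcon
    obtain ⟨⟨hU, hV⟩, hW⟩ := hcon
    obtain ⟨⟨f, hf, hfe⟩, -⟩ := hMCRhatM ε₃ ω
    obtain ⟨hfF, hfR⟩ := hRh ω f hf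
    have hfR' := hfR.resolve_left hU
    have hV' : ¬ (C < ehatorig f ω - eorig f) := fun h => hV ⟨f, hfF, h⟩
    have hW' : ¬ (A < eswitch f - ehatswitch f ω) := fun h => hW ⟨f, hfF, h⟩
    have hb := h1 f hfF
    have hle := MCRAux.ratio_bound (x := ehatswitch f ω) (y := eswitch f) (o := ehatorig f ω)
      (p := eorig f) hborig (hpo f hfF) (hps f hfF) (hs0 f) (hsh0 f hfF ω)
      (by linarith) (by linarith) (by linarith) hA0 hC0
    rw [← hQ₃, ← hMR, ← hMRhat] at hle
    have hmin := hfminus.2 f hfR'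
    have hω' : MCRhatM ε₃ ω + Q₃ < MR fminus := hω
    simp only at hfe
    linarith
end
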